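/- Let N ≥ 2, s ∈ (0,1), and let B ⊂ ℝ^N be an open ball centered at the origin. Then the following dichotomy holds for the eigenspace E := {u ∈ H^s_{B,0} : u is an eigenfunction associated to μ₁^{(s)}(B)} ∪ {0}: either every u ∈ E is radially symmetric (a.e. equal to a function of |x|), or there exist k ∈ ℕ, radially symmetric functions w₁,…,w_k ∈ E, and continuous functions v₁,…,v_N ∈ E such that for each i = 1,…,N one has v_i(σ_{e_i}(x)) = −v_i(x) for all x (antisymmetry with respect to the coordinate hyperplane {x_i = 0}, where e_i is the i-th standard unit vector and σ_{e_i}(x) = x − 2(x·e_i)e_i), the open set {x ∈ B : v_i(x) ≠ 0} has exactly two connected components, and every u ∈ E is a linear combination of w₁,…,w_k, v₁,…,v_N. -/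

import Mathlib

open MeasureTheory Filter Topology Bornology Set
open scoped ENNReal NNReal

noncomputable section

namespace FracNeumann

abbrev Euc (N : ℕ) : Type := EuclideanSpace ℝ (Fin N)

/-- The kernel weight `|x - y| ^ (N + 2s)`. -/
def kern (N : ℕ) (s : ℝ) (x y : Euc N) : ℝ := ‖x - y‖ ^ ((N : ℝ) + 2 * s)

/-- The region `ℝ^{2N} \ (Ω^c × Ω^c)`, where `Ω^c := ℝ^N \ closure Ω`. -/
def reg (N : ℕ) (Ω : Set (Euc N)) : Set (Euc N × Euc N) :=
  {q | q.1 ∈ closure Ω ∨ q.2 ∈ closure Ω}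

/-- The squared seminorm `[u]_{H^s_{Ω,0}}²`, as an extended real number. -/
def semiSq (N : ℕ) (s : ℝ) (Ω : Set (Euc N)) (u : Euc N → ℝ) : ℝ≥0∞ :=
  ∫⁻ q in reg N Ω, ENNReal.ofReal ((u q.1 - u q.2) ^ 2 / kern N s q.1 q.2)

/-- `∫_Ω u²`, as an extended real number. -/
def l2sq (N : ℕ) (Ω : Set (Euc N)) (u : Euc N → ℝ) : ℝ≥0∞ :=
  ∫⁻ x in Ω, ENNReal.ofReal ((u x) ^ 2)

/-- Membership in `H^s_{Ω,0}`. -/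
def memHs (N : ℕ) (s : ℝ) (Ω : Set (Euc N)) (u : Euc N → ℝ) : Prop :=
  Measurable u ∧ l2sq N Ω u < ⊤ ∧ semiSq N s Ω u < ⊤

/-- The squared Gagliardo seminorm `[u]_{H^s(Ω)}²`. -/
def semiSqOn (N : ℕ) (s : ℝ) (Ω : Set (Euc N)) (u : Euc N → ℝ) : ℝ≥0∞ :=
  ∫⁻ q in Ω ×ˢ Ω, ENNReal.ofReal ((u q.1 - u q.2) ^ 2 / kern N s q.1 q.2)

/-- Membership in `H^s(Ω)` (for functions defined on all of `ℝ^N`). -/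
def memHsOn (N : ℕ) (s : ℝ) (Ω : Set (Euc N)) (u : Euc N → ℝ) : Prop :=
  Measurable u ∧ l2sq N Ω u < ⊤ ∧ semiSqOn N s Ω u < ⊤

/-- The normalizing constant `c_{N,s}` of the fractional Laplacian. -/
def cNs (N : ℕ) (s : ℝ) : ℝ :=
  (4 : ℝ) ^ s * s * Real.Gamma ((N : ℝ) / 2 + s) /
    (Real.pi ^ ((N : ℝ) / 2) * Real.Gamma (1 - s))

/-- The nonlocal Neumann derivative `𝒩_s u`. -/
def Nneu (N : ℕ) (s : ℝ) (Ω : Set (Euc N)) (u : Euc N → ℝ) (x : Euc N) : ℝ :=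
  cNs N s * ∫ y in Ω, (u x - u y) / kern N s x y

/-- Membership in `H̃^s_{Ω,0}`: members of `H^s_{Ω,0}` with `𝒩_s u = 0` a.e. in `Ω^c`. -/
def memHsTilde (N : ℕ) (s : ℝ) (Ω : Set (Euc N)) (u : Euc N → ℝ) : Prop :=
  memHs N s Ω u ∧ ∀ᵐ x ∂(volume.restrict (closure Ω)ᶜ), Nneu N s Ω u x = 0

/-- The first nontrivial Neumann eigenvalue `μ₁^{(s)}(Ω)`. -/
def mu1 (N : ℕ) (s : ℝ) (Ω : Set (Euc N)) : ℝ :=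
  sInf {t : ℝ | ∃ u : Euc N → ℝ, memHs N s Ω u ∧ (∫ x in Ω, (u x) ^ 2) = 1 ∧
    (∫ x in Ω, u x) = 0 ∧ t = cNs N s / 2 * (semiSq N s Ω u).toReal}

/-- The bilinear form (without the constant). -/
def bform (N : ℕ) (s : ℝ) (Ω : Set (Euc N)) (u v : Euc N → ℝ) : ℝ :=
  ∫ q in reg N Ω, (u q.1 - u q.2) * (v q.1 - v q.2) / kern N s q.1 q.2

/-- First nontrivial eigenfunction: weak solution associated to `μ₁^{(s)}(Ω)`. -/
def IsFirstEigen (N : ℕ) (s : ℝ) (Ω : Set (Euc N)) (u : Euc N → ℝ) : Prop :=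
  memHs N s Ω u ∧ ¬ (u =ᵐ[volume.restrict Ω] 0) ∧ (∫ x in Ω, u x) = 0 ∧
    ∀ v : Euc N → ℝ, memHs N s Ω v →
      cNs N s / 2 * bform N s Ω u v = mu1 N s Ω * ∫ x in Ω, u x * v x

/-- Reflection `σ_e(x) = x - 2(x·e)e` across the hyperplane `{x·e = 0}`. -/
def reflect (N : ℕ) (e x : Euc N) : Euc N := x - (2 * (inner ℝ x e : ℝ)) • e

/-- The polarization `P_e u` with respect to the hyperplane `{x·e = 0}`. -/
def polarize (N : ℕ) (e : Euc N) (u : Euc N → ℝ) (x : Euc N) : ℝ :=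
  if 0 ≤ (inner ℝ x e : ℝ) then min (u x) (u (reflect N e x))
  else max (u x) (u (reflect N e x))

/-- Foliated Schwarz symmetry with respect to `p`. -/
def FoliatedSchwarz (N : ℕ) (p : Euc N) (u : Euc N → ℝ) : Prop :=
  ∃ uh : ℝ → ℝ → ℝ, (∀ r : ℝ, AntitoneOn (uh r) (Icc 0 Real.pi)) ∧
    ∀ x : Euc N, x ≠ 0 → u x = uh ‖x‖ (Real.arccos ((inner ℝ x p : ℝ) / ‖x‖))

/-- Radial symmetry (pointwise). -/
def Radial (N : ℕ) (u : Euc N → ℝ) : Prop := ∃ f : ℝ → ℝ, ∀ x, u x = f ‖x‖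

/-- Radial symmetry (a.e.). -/
def RadialAE (N : ℕ) (u : Euc N → ℝ) : Prop :=
  ∃ f : ℝ → ℝ, ∀ᵐ x : Euc N ∂volume, u x = f ‖x‖

/-- The set `{x ∈ Ω : u x ≠ 0}` has exactly two connected components. -/
def TwoNodal (N : ℕ) (Ω : Set (Euc N)) (u : Euc N → ℝ) : Prop :=
  Nat.card (ConnectedComponents {x : Euc N // x ∈ Ω ∧ u x ≠ 0}) = 2

/-- Bounded Lipschitz domain: open, bounded, connected, and near every boundary point the set
is the region above the graph of a Lipschitz function in some direction `e`. -/
def IsLipschitzDomain (N : ℕ) (Ω : Set (Euc N)) : Prop :=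
  IsOpen Ω ∧ IsBounded Ω ∧ IsConnected Ω ∧
    ∀ x ∈ frontier Ω, ∃ e : Euc N, ‖e‖ = 1 ∧ ∃ r : ℝ, 0 < r ∧
      ∃ (L : NNReal) (f : Euc N → ℝ), LipschitzWith L f ∧
        ∀ y ∈ Metric.ball x r,
          (y ∈ Ω ↔ f (y - ((inner ℝ y e : ℝ)) • e) < (inner ℝ y e : ℝ))

/-- `g` is a weak gradient of `u` in `Ω`, square-integrable on `Ω`. -/
def IsWeakGradient (N : ℕ) (Ω : Set (Euc N)) (u : Euc N → ℝ) (g : Euc N → Euc N) : Prop :=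
  Measurable g ∧ (∫⁻ x in Ω, ENNReal.ofReal (‖g x‖ ^ 2)) < ⊤ ∧
    ∀ φ : Euc N → ℝ, ContDiff ℝ (⊤ : ℕ∞) φ → HasCompactSupport φ → tsupport φ ⊆ Ω →
      ∀ i : Fin N, (∫ x in Ω, u x * fderiv ℝ φ x (EuclideanSpace.single i 1)) =
        - ∫ x in Ω, g x i * φ x

/-- Membership in `H¹(Ω)`. -/
def memH1 (N : ℕ) (Ω : Set (Euc N)) (u : Euc N → ℝ) : Prop :=
  Measurable u ∧ l2sq N Ω u < ⊤ ∧ ∃ g, IsWeakGradient N Ω u g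

/-- `∫_Ω |∇u|²`, as an extended real number. -/
def gradSq (N : ℕ) (Ω : Set (Euc N)) (u : Euc N → ℝ) : ℝ≥0∞ :=
  ⨅ (g : Euc N → Euc N) (_ : IsWeakGradient N Ω u g), ∫⁻ x in Ω, ENNReal.ofReal (‖g x‖ ^ 2)

/-- Rayleigh quotient for the fractional Neumann problem. -/
def rayleighS (N : ℕ) (s : ℝ) (Ω : Set (Euc N)) (u : Euc N → ℝ) : ℝ≥0∞ :=
  ENNReal.ofReal (cNs N s / 2) * semiSq N s Ω u / l2sq N Ω u

/-- Rayleigh quotient for the local Neumann problem. -/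
def rayleigh1 (N : ℕ) (Ω : Set (Euc N)) (u : Euc N → ℝ) : ℝ≥0∞ :=
  gradSq N Ω u / l2sq N Ω u

/-- The min-max value `μ_n^{(s)}(Ω)` over `n`-dimensional subspaces of `H^s_{Ω,0} ∩ L²₀(Ω)`. -/
def muNs (N : ℕ) (s : ℝ) (Ω : Set (Euc N)) (n : ℕ) : ℝ≥0∞ :=
  ⨅ (A : Submodule ℝ (Euc N → ℝ)) (_ : Module.finrank ℝ A = n ∧
      (∀ u ∈ A, memHs N s Ω u ∧ (∫ x in Ω, u x) = 0) ∧
      (∀ u ∈ A, u =ᵐ[(volume : Measure (Euc N))] 0 → u = 0)),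
    ⨆ (u : Euc N → ℝ) (_ : u ∈ A ∧ u ≠ 0), rayleighS N s Ω u

/-- The min-max value over `n`-dimensional subspaces of `H̃^s_{Ω,0} ∩ L²₀(Ω)`. -/
def muNsTilde (N : ℕ) (s : ℝ) (Ω : Set (Euc N)) (n : ℕ) : ℝ≥0∞ :=
  ⨅ (A : Submodule ℝ (Euc N → ℝ)) (_ : Module.finrank ℝ A = n ∧
      (∀ u ∈ A, memHsTilde N s Ω u ∧ (∫ x in Ω, u x) = 0) ∧
      (∀ u ∈ A, u =ᵐ[(volume : Measure (Euc N))] 0 → u = 0)),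
    ⨆ (u : Euc N → ℝ) (_ : u ∈ A ∧ u ≠ 0), rayleighS N s Ω u

/-- The min-max value `μ_n^{(1)}(Ω)` over `n`-dimensional subspaces of `H¹(Ω) ∩ L²₀(Ω)`. -/
def muN1 (N : ℕ) (Ω : Set (Euc N)) (n : ℕ) : ℝ≥0∞ :=
  ⨅ (A : Submodule ℝ (Euc N → ℝ)) (_ : Module.finrank ℝ A = n ∧
      (∀ u ∈ A, memH1 N Ω u ∧ (∫ x in Ω, u x) = 0) ∧
      (∀ u ∈ A, u =ᵐ[volume.restrict Ω] 0 → u = 0)),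
    ⨆ (u : Euc N → ℝ) (_ : u ∈ A ∧ u ≠ 0), rayleigh1 N Ω u

/-- `μ_n^{(s)}(Ω)` including `μ₀^{(s)}(Ω) := 0`. -/
def muNsFull (N : ℕ) (s : ℝ) (Ω : Set (Euc N)) (n : ℕ) : ℝ≥0∞ :=
  if n = 0 then 0 else muNs N s Ω n

/-- `μ_n^{(1)}(Ω)` including `μ₀^{(1)}(Ω) := 0`. -/
def muN1Full (N : ℕ) (Ω : Set (Euc N)) (n : ℕ) : ℝ≥0∞ :=
  if n = 0 then 0 else muN1 N Ω n

/-- The squared `H^s_{Ω,0}`-seminorm of the `s`-minimal extension of `u`: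
the minimal value of `[v]²` over `v ∈ H^s_{Ω,0}` with `v = u` a.e. in `Ω`. -/
def minExtSemiSq (N : ℕ) (s : ℝ) (Ω : Set (Euc N)) (u : Euc N → ℝ) : ℝ≥0∞ :=
  ⨅ (v : Euc N → ℝ) (_ : memHs N s Ω v ∧ v =ᵐ[volume.restrict Ω] u), semiSq N s Ω v

/-- `ω_{N-1}`: volume of the unit ball of `ℝ^{N-1}`. -/
def omegaPrev (N : ℕ) : ℝ := (volume (Metric.ball (0 : Euc (N - 1)) 1)).toReal

/-- Membership in `L²₀(Ω)`. -/
def memL20 (N : ℕ) (Ω : Set (Euc N)) (u : Euc N → ℝ) : Prop :=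
  Measurable u ∧ l2sq N Ω u < ⊤ ∧ (∫ x in Ω, u x) = 0

/-- The functional `F_s` (value `+∞` outside `H^s(Ω)`). -/
def Fs (N : ℕ) (s : ℝ) (Ω : Set (Euc N)) (u : Euc N → ℝ) : ℝ≥0∞ :=
  ENNReal.ofReal (1 - s) * minExtSemiSq N s Ω u

/-- The functional `F₁` (value `+∞` outside `H¹(Ω)`). -/
def F1 (N : ℕ) (Ω : Set (Euc N)) (u : Euc N → ℝ) : ℝ≥0∞ :=
  ENNReal.ofReal (omegaPrev N / (2 * N)) * gradSq N Ω u

end FracNeumann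

namespace FracNeumann

/-! Weak solutions are bounded, by a level set iteration, and outside the ball they agree with a
weighted average of their values inside. Comparison with a barrier makes their oscillation decay,
so that each of them is continuous on the whole space up to a null set. At the boundary the
barrier is built from a corrected squared distance, whose second differences under reflections
preserving the ball are small.

If a first eigenfunction `v` is odd with respect to the hyperplane `eᗮ`, then so is the function
which equals `v⁺` on the half space `{⟪x, e⟫ > 0}`, and a rearrangement of the energy shows that
it would have too small a Rayleigh quotient unless `v` keeps its sign there. A strong maximum
principle for odd functions improves this: `v` vanishes at no point of the half ball, or
identically. Evaluation at one such point is therefore injective on the eigenfunctions odd with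
respect to `eᗮ`. These form at most a line, they are even with respect to each hyperplane
orthogonal to `eᗮ`, and they satisfy `v (-x) = -v x`.

For an eigenfunction `u` with `u (-x) = u x`, the difference of `u` and its reflection in any
hyperplane is odd with respect to that hyperplane, hence both odd and even under `x ↦ -x`, hence
zero; so `u` is radial. If some eigenfunction is not radial, its reflections and rotations yield
an odd eigenfunction `vᵢ ≠ 0` for each coordinate hyperplane, and for each `u` a linear
combination of the `vᵢ` makes `u - ∑ cᵢ vᵢ` even with respect to all of them, hence radial. -/

open Metric Module

variable {E : Type*} [NormedAddCommGroup E] [InnerProductSpace ℝ E] {s R lam : ℝ}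

/-- The kernel `|z| ^ (-(d + 2s))`, `d = dim E`, of the fractional Laplacian; it takes the value `0`
at `z = 0`. -/
def fracKernel (s : ℝ) (z : E) : ℝ := (‖z‖ ^ (finrank ℝ E + 2 * s))⁻¹

lemma fracKernel_nonneg (s : ℝ) (z : E) : 0 ≤ fracKernel s z := by
  unfold fracKernel; positivity

lemma fracKernel_neg (s : ℝ) (z : E) : fracKernel s (-z) = fracKernel s z := by
  simp [fracKernel]

lemma fracKernel_sub_comm (s : ℝ) (x y : E) : fracKernel s (x - y) = fracKernel s (y - x) := by
  rw [← fracKernel_neg, neg_sub]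

lemma fracKernel_congr_norm (s : ℝ) {z w : E} (h : ‖z‖ = ‖w‖) :
    fracKernel s z = fracKernel s w := by
  simp [fracKernel, h]

lemma fracKernel_pos {z : E} (hz : z ≠ 0) : 0 < fracKernel s z := by
  have := norm_pos_iff.mpr hz
  unfold fracKernel; positivity

lemma fracKernel_le_of_norm_le (hs : 0 < s) {z w : E} (hz : z ≠ 0) (h : ‖z‖ ≤ ‖w‖) :
    fracKernel s w ≤ fracKernel s z := by
  have := norm_pos_iff.mpr hz
  unfold fracKernel
  gcongr

lemma fracKernel_lt_of_norm_lt (hs : 0 < s) {z w : E} (hz : z ≠ 0) (h : ‖z‖ < ‖w‖) :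
    fracKernel s w < fracKernel s z := by
  have := norm_pos_iff.mpr hz
  unfold fracKernel
  gcongr

lemma fracKernel_le_of_le_norm (hs : 0 < s) {z : E} {r : ℝ} (hr : 0 < r) (h : r ≤ ‖z‖) :
    fracKernel s z ≤ (r ^ (finrank ℝ E + 2 * s))⁻¹ := by
  unfold fracKernel
  gcongr

lemma le_fracKernel_of_norm_le (hs : 0 < s) {z : E} {r : ℝ} (hz : z ≠ 0) (h : ‖z‖ ≤ r) :
    (r ^ (finrank ℝ E + 2 * s))⁻¹ ≤ fracKernel s z := by
  have := norm_pos_iff.mpr hz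
  unfold fracKernel
  gcongr

lemma fracKernel_smul {t : ℝ} (ht : 0 < t) (z : E) :
    fracKernel s (t • z) = (t ^ (finrank ℝ E + 2 * s))⁻¹ * fracKernel s z := by
  unfold fracKernel
  rw [norm_smul, Real.norm_of_nonneg ht.le, Real.mul_rpow ht.le (norm_nonneg _), mul_inv]

lemma min_one_sq_mul_fracKernel_inv_smul {t : ℝ} (ht : 0 < t) (z : E) :
    min 1 (‖t⁻¹ • z‖ ^ 2) * fracKernel s (t⁻¹ • z) =
      t ^ (finrank ℝ E + 2 * s) * (min 1 (‖z‖ ^ 2 / t ^ 2) * fracKernel s z) := by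
  rw [fracKernel_smul (inv_pos.mpr ht), norm_smul, Real.norm_of_nonneg (inv_nonneg.mpr ht.le),
    Real.inv_rpow ht.le, inv_inv, mul_pow, inv_pow, inv_mul_eq_div]
  ring

variable [MeasurableSpace E] [BorelSpace E]

lemma measurable_fracKernel (s : ℝ) : Measurable (fracKernel s : E → ℝ) := by
  unfold fracKernel; fun_prop

variable [FiniteDimensional ℝ E]

lemma measurable_fracKernel_sub (s : ℝ) :
    Measurable (fun q : E × E => fracKernel s (q.1 - q.2)) :=
  (measurable_fracKernel s).comp (measurable_fst.sub measurable_snd)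

lemma integrable_min_one_sq_mul_fracKernel (hs0 : 0 < s) (hs1 : s < 1) :
    Integrable (fun z : E => min 1 (‖z‖ ^ 2) * fracKernel s z) := by
  cases subsingleton_or_nontrivial E
  · simp [Subsingleton.elim _ (0 : E)]
  unfold fracKernel
  rw [integrable_fun_norm_addHaar
    (f := fun r : ℝ => min 1 (r ^ 2) * (r ^ (finrank ℝ E + 2 * s))⁻¹) (volume : Measure E)]
  have radial_weight : ∀ r : ℝ, 0 < r →
      r ^ (finrank ℝ E - 1) * (r ^ (finrank ℝ E + 2 * s))⁻¹ = r ^ (-1 - 2 * s) := by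
    intro r hr
    rw [← Real.rpow_natCast, ← Real.rpow_neg hr.le, ← Real.rpow_add hr,
      Nat.cast_sub (Nat.one_le_iff_ne_zero.2 finrank_pos.ne')]
    congr 1
    push_cast
    ring
  rw [← Ioc_union_Ioi_eq_Ioi zero_le_one, integrableOn_union]
  constructor
  · have near : IntegrableOn (fun r : ℝ => r ^ (1 - 2 * s)) (Ioc 0 1) := by
      rw [← intervalIntegrable_iff_integrableOn_Ioc_of_le zero_le_one]
      exact intervalIntegral.intervalIntegrable_rpow' (by linarith)
    refine near.congr_fun (fun r hr => ?_) measurableSet_Ioc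
    simp only [smul_eq_mul, min_eq_right (pow_le_one₀ hr.1.le hr.2 : r ^ 2 ≤ 1)]
    rw [mul_left_comm, radial_weight r hr.1, ← Real.rpow_natCast, ← Real.rpow_add hr.1]
    congr 1
    push_cast
    ring
  · have far : IntegrableOn (fun r : ℝ => r ^ (-1 - 2 * s)) (Ioi 1) :=
      integrableOn_Ioi_rpow_of_lt (by linarith) one_pos
    refine far.congr_fun (fun r (hr : 1 < r) => ?_) measurableSet_Ioi
    simp only [smul_eq_mul, min_eq_left (one_le_pow₀ hr.le : 1 ≤ r ^ 2), one_mul]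
    rw [radial_weight r (by linarith)]

variable (E s) in
/-- The mass `∫ min(1, |z|²) |z| ^ (-(d + 2s)) dz` of the kernel, truncated at scale one so as to be
finite. -/
def levyMass : ℝ := ∫ z : E, min 1 (‖z‖ ^ 2) * fracKernel s z

lemma levyMass_nonneg : 0 ≤ levyMass E s :=
  integral_nonneg fun z => mul_nonneg (by positivity) (fracKernel_nonneg s z)

lemma integrable_min_one_sq_div_mul_fracKernel (hs0 : 0 < s) (hs1 : s < 1) {t : ℝ} (ht : 0 < t) :
    Integrable (fun z : E => min 1 (‖z‖ ^ 2 / t ^ 2) * fracKernel s z) := by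
  have h := (integrable_min_one_sq_mul_fracKernel (E := E) hs0 hs1).comp_smul (inv_ne_zero ht.ne')
  simp_rw [min_one_sq_mul_fracKernel_inv_smul ht] at h
  exact (integrable_const_mul_iff (Real.rpow_pos_of_pos ht _).ne'.isUnit _).1 h

lemma integral_min_one_sq_div_mul_fracKernel {t : ℝ} (ht : 0 < t) :
    ∫ z : E, min 1 (‖z‖ ^ 2 / t ^ 2) * fracKernel s z = t ^ (-(2 * s)) * levyMass E s := by
  have h := Measure.integral_comp_smul (volume : Measure E)
    (fun z => min 1 (‖z‖ ^ 2) * fracKernel s z) t⁻¹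
  simp_rw [min_one_sq_mul_fracKernel_inv_smul ht] at h
  rw [integral_const_mul, inv_pow, inv_inv, abs_of_pos (by positivity), smul_eq_mul] at h
  have hpow : t ^ (-(2 * s)) = (t ^ (finrank ℝ E + 2 * s))⁻¹ * t ^ finrank ℝ E := by
    rw [← Real.rpow_neg ht.le, ← Real.rpow_natCast, ← Real.rpow_add ht]
    congr 1
    ring
  rw [hpow, mul_assoc, levyMass, ← h, inv_mul_cancel_left₀ (Real.rpow_pos_of_pos ht _).ne']

lemma integrableOn_fracKernel (hs0 : 0 < s) (hs1 : s < 1) {t : ℝ} (ht : 0 < t) :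
    IntegrableOn (fracKernel s) {z : E | t < ‖z‖} := by
  refine (integrable_min_one_sq_div_mul_fracKernel hs0 hs1 ht).integrableOn.congr_fun
    (fun z (hz : t < ‖z‖) => ?_) (measurableSet_lt measurable_const measurable_norm)
  have : 1 ≤ ‖z‖ ^ 2 / t ^ 2 := by
    rw [one_le_div (by positivity)]
    gcongr
  simp [min_eq_left this]

/-! ### The energy form -/

/-- The complement of `Bᶜ × Bᶜ` in `E × E`, for the closed ball `B` of radius `R` around `0`. -/
def pairRegion (E : Type*) [NormedAddCommGroup E] (R : ℝ) : Set (E × E) :=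
  {q | ‖q.1‖ ≤ R ∨ ‖q.2‖ ≤ R}

lemma measurableSet_pairRegion {F : Type*} [NormedAddCommGroup F] [MeasurableSpace F]
    [BorelSpace F] (R : ℝ) : MeasurableSet (pairRegion F R) :=
  (measurableSet_le measurable_fst.norm measurable_const).union
    (measurableSet_le measurable_snd.norm measurable_const)

lemma preimage_pairRegion {F : Type*} [NormedAddCommGroup F] [NormedSpace ℝ F]
    (g : F ≃ₗᵢ[ℝ] F) : (fun q : F × F => (g q.1, g q.2)) ⁻¹' pairRegion F R = pairRegion F R := by
  ext q; simp [pairRegion]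

lemma preimage_closedBall_zero {F : Type*} [NormedAddCommGroup F] [NormedSpace ℝ F]
    (g : F ≃ₗᵢ[ℝ] F) : g ⁻¹' closedBall 0 R = closedBall 0 R := by
  ext q; simp

lemma measurable_sub_pair {α : Type*} [MeasurableSpace α] {u : α → ℝ} (h : Measurable u) :
    Measurable (fun q : α × α => u q.1 - u q.2) :=
  (h.comp measurable_fst).sub (h.comp measurable_snd)

lemma ae_prod_of_ae {α : Type*} [MeasurableSpace α] {μ : Measure α} [SFinite μ] {P : α → Prop}
    (h : ∀ᵐ x ∂μ, P x) : ∀ᵐ q ∂μ.prod μ, P q.1 ∧ P q.2 :=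
  (Measure.quasiMeasurePreserving_fst.ae h).and (Measure.quasiMeasurePreserving_snd.ae h)

/-- The measurable functions in the form domain `H^s_{B,0}`, for the closed ball `B` of radius `R`
around `0`. -/
structure FiniteEnergy (s R : ℝ) (u : E → ℝ) : Prop where
  measurable : Measurable u
  integrableOn_sq : IntegrableOn (fun x => u x ^ 2) (closedBall 0 R)
  integrableOn_energy_self :
    IntegrableOn (fun q : E × E => (u q.1 - u q.2) ^ 2 * fracKernel s (q.1 - q.2)) (pairRegion E R)

/-- The bilinear form of the nonlocal Neumann problem on the ball of radius `R`, without the factor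
`c_{N,s} / 2`. -/
def energyForm (s R : ℝ) (u v : E → ℝ) : ℝ :=
  ∫ q in pairRegion E R, (u q.1 - u q.2) * (v q.1 - v q.2) * fracKernel s (q.1 - q.2)

lemma FiniteEnergy.of_abs_le {u v w : E → ℝ} (hu : FiniteEnergy s R u) (hv : FiniteEnergy s R v)
    (hw : Measurable w) (C : ℝ) (h1 : ∀ x, |w x| ≤ C * (|u x| + |v x|))
    (h2 : ∀ x y, |w x - w y| ≤ C * (|u x - u y| + |v x - v y|)) : FiniteEnergy s R w := by
  have sq_bound : ∀ a b c : ℝ, |a| ≤ C * (|b| + |c|) → a ^ 2 ≤ 2 * C ^ 2 * (b ^ 2 + c ^ 2) := by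
    intro a b c h
    have : |a| ^ 2 ≤ (C * (|b| + |c|)) ^ 2 := by gcongr
    rw [sq_abs] at this
    refine this.trans ?_
    have h3 : (|b| + |c|) ^ 2 ≤ 2 * (b ^ 2 + c ^ 2) := by
      nlinarith [sq_nonneg (|b| - |c|), sq_abs b, sq_abs c]
    nlinarith [sq_nonneg C]
  refine ⟨hw, ?_, ?_⟩
  · refine Integrable.mono' ((hu.integrableOn_sq.add hv.integrableOn_sq).const_mul (2 * C ^ 2))
      (hw.pow_const 2).aestronglyMeasurable (Eventually.of_forall fun x => ?_)
    rw [Real.norm_of_nonneg (sq_nonneg _)]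
    exact sq_bound _ _ _ (h1 x)
  · refine Integrable.mono'
      ((hu.integrableOn_energy_self.add hv.integrableOn_energy_self).const_mul (2 * C ^ 2))
      (((measurable_sub_pair hw).pow_const 2).mul
        (measurable_fracKernel_sub s)).aestronglyMeasurable (Eventually.of_forall fun q => ?_)
    have hk := fracKernel_nonneg s (q.1 - q.2)
    rw [Real.norm_of_nonneg (mul_nonneg (sq_nonneg _) hk)]
    have := mul_le_mul_of_nonneg_right (sq_bound _ _ _ (h2 q.1 q.2)) hk
    refine this.trans (le_of_eq ?_)
    simp only [Pi.add_apply]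
    ring

lemma FiniteEnergy.const (c : ℝ) : FiniteEnergy s R (fun _ : E => c) := by
  refine ⟨measurable_const, ?_, ?_⟩
  · exact integrableOn_const (isCompact_closedBall (0 : E) R).measure_lt_top.ne
  · simp

lemma FiniteEnergy.zero : FiniteEnergy s R (0 : E → ℝ) := FiniteEnergy.const 0

lemma FiniteEnergy.add {u v : E → ℝ} (hu : FiniteEnergy s R u) (hv : FiniteEnergy s R v) :
    FiniteEnergy s R (u + v) := by
  refine hu.of_abs_le hv (hu.measurable.add hv.measurable) 1 ?_ ?_
  · intro x; rw [one_mul]; exact abs_add_le _ _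
  · intro x y; rw [one_mul]
    simp only [Pi.add_apply]
    rw [add_sub_add_comm]; exact abs_add_le _ _

lemma FiniteEnergy.smul {u : E → ℝ} (c : ℝ) (hu : FiniteEnergy s R u) :
    FiniteEnergy s R (c • u) := by
  refine hu.of_abs_le hu (hu.measurable.const_smul c) |c| ?_ ?_
  · intro x; simp only [Pi.smul_apply, smul_eq_mul, abs_mul]
    gcongr; linarith [abs_nonneg (u x)]
  · intro x y; simp only [Pi.smul_apply, smul_eq_mul, ← mul_sub, abs_mul]
    gcongr; linarith [abs_nonneg (u x - u y)]

lemma FiniteEnergy.neg {u : E → ℝ} (hu : FiniteEnergy s R u) : FiniteEnergy s R (-u) := by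
  simpa using hu.smul (-1)

lemma FiniteEnergy.sub {u v : E → ℝ} (hu : FiniteEnergy s R u) (hv : FiniteEnergy s R v) :
    FiniteEnergy s R (u - v) := by
  rw [sub_eq_add_neg]; exact hu.add hv.neg

lemma FiniteEnergy.max_zero {u : E → ℝ} (hu : FiniteEnergy s R u) :
    FiniteEnergy s R (fun x => max (u x) 0) := by
  refine hu.of_abs_le hu (hu.measurable.max measurable_const) 1 ?_ ?_
  · intro x; rw [one_mul, abs_of_nonneg (le_max_right _ _)]
    refine max_le ?_ (by positivity)
    linarith [le_abs_self (u x), abs_nonneg (u x)]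
  · intro x y; rw [one_mul]
    refine (abs_max_sub_max_le_abs _ _ _).trans ?_
    linarith [abs_nonneg (u x - u y)]

lemma FiniteEnergy.integrableOn_energy {u v : E → ℝ} (hu : FiniteEnergy s R u)
    (hv : FiniteEnergy s R v) :
    IntegrableOn (fun q : E × E =>
      (u q.1 - u q.2) * (v q.1 - v q.2) * fracKernel s (q.1 - q.2)) (pairRegion E R) := by
  refine Integrable.mono' (hu.integrableOn_energy_self.add hv.integrableOn_energy_self)
      (((measurable_sub_pair hu.measurable).mul (measurable_sub_pair hv.measurable)).mul
        (measurable_fracKernel_sub s)).aestronglyMeasurable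
      (Eventually.of_forall fun q => ?_)
  have hk := fracKernel_nonneg s (q.1 - q.2)
  rw [norm_mul, Real.norm_of_nonneg hk, Real.norm_eq_abs]
  simp only [Pi.add_apply]
  rw [← add_mul]
  gcongr
  rw [abs_le]
  constructor <;> nlinarith [sq_nonneg ((u q.1 - u q.2) + (v q.1 - v q.2)),
    sq_nonneg ((u q.1 - u q.2) - (v q.1 - v q.2)), sq_nonneg (u q.1 - u q.2),
    sq_nonneg (v q.1 - v q.2)]

lemma FiniteEnergy.integrableOn_mul {u v : E → ℝ} (hu : FiniteEnergy s R u)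
    (hv : FiniteEnergy s R v) :
    IntegrableOn (fun x => u x * v x) (closedBall (0 : E) R) := by
  refine Integrable.mono' (hu.integrableOn_sq.add hv.integrableOn_sq)
    (hu.measurable.mul hv.measurable).aestronglyMeasurable
      (Eventually.of_forall fun x => ?_)
  rw [Real.norm_eq_abs]
  simp only [Pi.add_apply]
  rw [abs_le]
  constructor <;> nlinarith [sq_nonneg (u x + v x), sq_nonneg (u x - v x), sq_nonneg (u x),
    sq_nonneg (v x)]

lemma FiniteEnergy.integrableOn {u : E → ℝ} (hu : FiniteEnergy s R u) :
    IntegrableOn u (closedBall (0 : E) R) := by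
  simpa using hu.integrableOn_mul (FiniteEnergy.const 1)

lemma energyForm_comm (u v : E → ℝ) : energyForm s R u v = energyForm s R v u := by
  unfold energyForm; congr 1; ext q; ring

lemma energyForm_add_left {u u' v : E → ℝ} (hu : FiniteEnergy s R u) (hu' : FiniteEnergy s R u')
    (hv : FiniteEnergy s R v) :
    energyForm s R (u + u') v = energyForm s R u v + energyForm s R u' v := by
  unfold energyForm
  rw [← integral_add (hu.integrableOn_energy hv) (hu'.integrableOn_energy hv)]
  congr 1; ext q; simp only [Pi.add_apply]; ring

lemma energyForm_smul_left (c : ℝ) (u v : E → ℝ) :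
    energyForm s R (c • u) v = c * energyForm s R u v := by
  unfold energyForm
  rw [← integral_const_mul]
  congr 1; ext q; simp only [Pi.smul_apply, smul_eq_mul]; ring

lemma energyForm_neg_left (u v : E → ℝ) : energyForm s R (-u) v = - energyForm s R u v := by
  have := energyForm_smul_left (s := s) (R := R) (-1) u v
  simpa using this

lemma energyForm_sub_left {u u' v : E → ℝ} (hu : FiniteEnergy s R u) (hu' : FiniteEnergy s R u')
    (hv : FiniteEnergy s R v) :
    energyForm s R (u - u') v = energyForm s R u v - energyForm s R u' v := by
  rw [sub_eq_add_neg, energyForm_add_left hu hu'.neg hv, energyForm_neg_left, sub_eq_add_neg]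

lemma energyForm_const_left (c : ℝ) (v : E → ℝ) : energyForm s R (fun _ => c) v = 0 := by
  simp [energyForm]

lemma FiniteEnergy.congr {u v : E → ℝ} (hu : FiniteEnergy s R u) (hv : Measurable v)
    (h : u =ᵐ[volume] v) :
    FiniteEnergy s R v := by
  refine ⟨hv, ?_, ?_⟩
  · refine hu.integrableOn_sq.congr ?_
    filter_upwards [ae_restrict_of_ae h] with x hx
    rw [hx]
  · refine hu.integrableOn_energy_self.congr ?_
    filter_upwards [ae_restrict_of_ae (ae_prod_of_ae h)] with q hq
    rw [hq.1, hq.2]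

lemma energyForm_congr_ae {u u' v : E → ℝ} (h : u =ᵐ[volume] u') :
    energyForm s R u v = energyForm s R u' v := by
  unfold energyForm
  apply integral_congr_ae
  filter_upwards [ae_restrict_of_ae (ae_prod_of_ae h)] with q hq
  rw [hq.1, hq.2]

section Isometry

lemma measurableEmbedding_prodMap {X : Type*} [TopologicalSpace X] [MeasurableSpace X]
    [BorelSpace X] (g : X ≃ₜ X) : MeasurableEmbedding (fun q : X × X => (g q.1, g q.2)) :=
  (g.toMeasurableEquiv.prodCongr g.toMeasurableEquiv).measurableEmbedding

variable (g : E ≃ₗᵢ[ℝ] E)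

lemma measurePreserving_prodMap : MeasurePreserving (fun q : E × E => (g q.1, g q.2)) :=
  g.measurePreserving.prod g.measurePreserving

lemma setIntegral_closedBall_comp (f : E → ℝ) : ∫ x in closedBall (0 : E) R, f (g x) =
    ∫ x in closedBall (0 : E) R, f x := by
  have := g.measurePreserving.setIntegral_preimage_emb
    g.toHomeomorph.toMeasurableEquiv.measurableEmbedding f (closedBall (0 : E) R)
  rwa [preimage_closedBall_zero] at this

lemma FiniteEnergy.comp {u : E → ℝ} (hu : FiniteEnergy s R u) :
    FiniteEnergy s R (fun x => u (g x)) := by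
  refine ⟨hu.measurable.comp g.continuous.measurable, ?_, ?_⟩
  · have := (g.measurePreserving.integrableOn_comp_preimage
      g.toHomeomorph.toMeasurableEquiv.measurableEmbedding).2 hu.integrableOn_sq
    rwa [preimage_closedBall_zero] at this
  · have := ((measurePreserving_prodMap g).integrableOn_comp_preimage
    (measurableEmbedding_prodMap g.toHomeomorph)).2 hu.integrableOn_energy_self
    rw [preimage_pairRegion] at this
    refine this.congr_fun ?_ (measurableSet_pairRegion R)
    intro q _
    simp only [Function.comp]
    rw [← map_sub, fracKernel_congr_norm s (g.norm_map (q.1 - q.2))]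

lemma energyForm_comp (u v : E → ℝ) : energyForm s R (fun x => u (g x)) (fun x => v (g x)) =
    energyForm s R u v := by
  unfold energyForm
  have := (measurePreserving_prodMap g).setIntegral_preimage_emb
    (measurableEmbedding_prodMap g.toHomeomorph) (fun q : E × E =>
      (u q.1 - u q.2) * (v q.1 - v q.2) * fracKernel s (q.1 - q.2)) (pairRegion E R)
  rw [preimage_pairRegion] at this
  rw [← this]
  congr 1; ext q
  rw [← map_sub, fracKernel_congr_norm s (g.norm_map (q.1 - q.2))]

end Isometry

lemma integrable_fst_mul_sub {φ f : E → ℝ} (hφ : Integrable φ) (hf : Integrable f) :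
    Integrable (fun q : E × E => φ q.1 * f (q.1 - q.2)) := by
  have h := (hφ.convolution_integrand (ContinuousLinearMap.mul ℝ ℝ) (hf.comp_neg)).swap
  refine h.congr (Eventually.of_forall fun q => ?_)
  simp

lemma integrable_snd_mul_sub {φ f : E → ℝ} (hφ : Integrable φ) (hf : Integrable f) :
    Integrable (fun q : E × E => φ q.2 * f (q.1 - q.2)) := by
  have h := (hφ.convolution_integrand (ContinuousLinearMap.mul ℝ ℝ) hf)
  refine h.congr (Eventually.of_forall fun q => ?_)
  simp

lemma integrableOn_pairRegion_sub {f : E → ℝ} (hf : Integrable f) :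
    IntegrableOn (fun q : E × E => f (q.1 - q.2)) (pairRegion E R) := by
  have hB : Integrable ((closedBall (0 : E) R).indicator (fun _ => (1 : ℝ))) :=
    (integrable_indicator_iff measurableSet_closedBall).2
      (integrableOn_const (isCompact_closedBall _ _).measure_lt_top.ne)
  rw [show pairRegion E R = {q | ‖q.1‖ ≤ R} ∪ {q | ‖q.2‖ ≤ R} from rfl, integrableOn_union]
  constructor
  · rw [← integrable_indicator_iff (measurableSet_le measurable_fst.norm measurable_const)]
    refine (integrable_fst_mul_sub hB hf).congr (Eventually.of_forall fun q => ?_)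
    by_cases h : ‖q.1‖ ≤ R <;> simp [indicator, h]
  · rw [← integrable_indicator_iff (measurableSet_le measurable_snd.norm measurable_const)]
    refine (integrable_snd_mul_sub hB hf).congr (Eventually.of_forall fun q => ?_)
    by_cases h : ‖q.2‖ ≤ R <;> simp [indicator, h]

lemma FiniteEnergy.of_bounded_of_sq_le (hs0 : 0 < s) (hs1 : s < 1) {β : E → ℝ} (hβ : Measurable β)
    {C t : ℝ} (ht : 0 < t) (h1 : ∀ x, |β x| ≤ 1)
    (h2 : ∀ x y, (β x - β y) ^ 2 ≤ C * min 1 (‖x - y‖ ^ 2 / t ^ 2)) : FiniteEnergy s R β := by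
  refine ⟨hβ, ?_, ?_⟩
  · refine Integrable.mono' (integrableOn_const (C := (1 : ℝ))
      (isCompact_closedBall _ _).measure_lt_top.ne)
      (hβ.pow_const 2).aestronglyMeasurable (Eventually.of_forall fun x => ?_)
    rw [Real.norm_of_nonneg (sq_nonneg _), ← sq_abs]
    exact pow_le_one₀ (abs_nonneg _) (h1 x)
  · have hK := integrableOn_pairRegion_sub (R := R)
      (integrable_min_one_sq_div_mul_fracKernel (E := E) hs0 hs1 ht)
    refine Integrable.mono' (hK.const_mul C) (((measurable_sub_pair hβ).pow_const 2).mul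
      (measurable_fracKernel_sub s)).aestronglyMeasurable (Eventually.of_forall fun q => ?_)
    have hk := fracKernel_nonneg s (q.1 - q.2)
    rw [Real.norm_of_nonneg (mul_nonneg (sq_nonneg _) hk), ← mul_assoc]
    exact mul_le_mul_of_nonneg_right (h2 q.1 q.2) hk

/-! ### Weak solutions -/

variable (E) in
/-- The Poincaré inequality with constant `lam` on the functions with mean zero on the ball of
radius `R`. -/
def PoincareIneq (s R lam : ℝ) : Prop :=
  ∀ φ : E → ℝ, FiniteEnergy s R φ → ∫ x in closedBall (0 : E) R, φ x = 0 →
    lam * ∫ x in closedBall (0 : E) R, φ x ^ 2 ≤ energyForm s R φ φ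

lemma energyForm_self_nonneg (u : E → ℝ) : 0 ≤ energyForm s R u u :=
  integral_nonneg fun _ => mul_nonneg (mul_self_nonneg _) (fracKernel_nonneg _ _)

/-- Weak solutions with mean zero of the Neumann eigenvalue problem on the ball of radius `R`;
`lam` is the eigenvalue divided by `c_{N,s} / 2`. -/
structure IsWeakSolution (s R lam : ℝ) (u : E → ℝ) : Prop where
  finiteEnergy : FiniteEnergy s R u
  integral_eq_zero : ∫ x in closedBall (0 : E) R, u x = 0
  energyForm_eq : ∀ v : E → ℝ, FiniteEnergy s R v →
    energyForm s R u v = lam * ∫ x in closedBall (0 : E) R, u x * v x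

lemma IsWeakSolution.add {u v : E → ℝ} (hu : IsWeakSolution s R lam u)
    (hv : IsWeakSolution s R lam v) :
    IsWeakSolution s R lam (u + v) := by
  refine ⟨hu.finiteEnergy.add hv.finiteEnergy, ?_, fun w hw => ?_⟩
  · simp only [Pi.add_apply]
    rw [integral_add hu.finiteEnergy.integrableOn hv.finiteEnergy.integrableOn,
      hu.integral_eq_zero, hv.integral_eq_zero, add_zero]
  · rw [energyForm_add_left hu.finiteEnergy hv.finiteEnergy hw, hu.energyForm_eq w hw,
      hv.energyForm_eq w hw, ← mul_add,
      ← integral_add (hu.finiteEnergy.integrableOn_mul hw) (hv.finiteEnergy.integrableOn_mul hw)]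
    simp only [Pi.add_apply, add_mul]

lemma IsWeakSolution.smul {u : E → ℝ} (c : ℝ) (hu : IsWeakSolution s R lam u) :
    IsWeakSolution s R lam (c • u) := by
  refine ⟨hu.finiteEnergy.smul c, ?_, fun w hw => ?_⟩
  · simp only [Pi.smul_apply, smul_eq_mul]
    rw [integral_const_mul, hu.integral_eq_zero, mul_zero]
  · rw [energyForm_smul_left, hu.energyForm_eq w hw]
    simp only [Pi.smul_apply, smul_eq_mul, mul_assoc]
    rw [integral_const_mul]; ring

lemma IsWeakSolution.zero : IsWeakSolution s R lam (0 : E → ℝ) :=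
  ⟨FiniteEnergy.zero, by simp, fun w _ => by simp [energyForm]⟩

lemma IsWeakSolution.neg {u : E → ℝ} (hu : IsWeakSolution s R lam u) :
    IsWeakSolution s R lam (-u) := by
  simpa using hu.smul (-1)

lemma IsWeakSolution.sub {u v : E → ℝ} (hu : IsWeakSolution s R lam u)
    (hv : IsWeakSolution s R lam v) :
    IsWeakSolution s R lam (u - v) := by
  rw [sub_eq_add_neg]; exact hu.add hv.neg

lemma IsWeakSolution.comp {u : E → ℝ} (hu : IsWeakSolution s R lam u) (g : E ≃ₗᵢ[ℝ] E) :
    IsWeakSolution s R lam (fun x => u (g x)) := by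
  refine ⟨hu.finiteEnergy.comp g, ?_, fun w hw => ?_⟩
  · rw [setIntegral_closedBall_comp g u, hu.integral_eq_zero]
  · have h := hu.energyForm_eq _ (hw.comp g.symm)
    have h2 := energyForm_comp (s := s) (R := R) g u (fun x => w (g.symm x))
    have h3 := setIntegral_closedBall_comp (R := R) g (fun x => u x * w (g.symm x))
    simp only [LinearIsometryEquiv.symm_apply_apply] at h2 h3
    rw [h2, h, h3]

lemma IsWeakSolution.congr {u v : E → ℝ} (hu : IsWeakSolution s R lam u) (hv : Measurable v)
    (h : u =ᵐ[volume] v) :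
    IsWeakSolution s R lam v := by
  refine ⟨hu.finiteEnergy.congr hv h, ?_, fun w hw => ?_⟩
  · rw [← hu.integral_eq_zero]
    exact integral_congr_ae (ae_restrict_of_ae h.symm)
  · rw [← energyForm_congr_ae h, hu.energyForm_eq w hw]
    congr 1
    apply integral_congr_ae
    filter_upwards [ae_restrict_of_ae h] with x hx
    rw [hx]

/-! ### Local boundedness -/

variable (E) in
/-- The volume of the unit ball of `E`. -/
def unitBallVolume : ℝ := (volume : Measure E).real (ball 0 1)

lemma unitBallVolume_pos : 0 < unitBallVolume E :=
  ENNReal.toReal_pos (measure_ball_pos _ _ one_pos).ne' measure_ball_lt_top.ne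

lemma volume_ball_eq_ofReal (x : E) {r : ℝ} (hr : 0 < r) :
    volume (ball x r) = ENNReal.ofReal (r ^ finrank ℝ E * unitBallVolume E) := by
  rw [Measure.addHaar_ball_of_pos _ _ hr, ENNReal.ofReal_mul (by positivity), unitBallVolume,
    Measure.real, ENNReal.ofReal_toReal measure_ball_lt_top.ne]

lemma ball_smul_subset_closedBall_inter_ball {F : Type*} [NormedAddCommGroup F] [NormedSpace ℝ F]
    {x : F} (hR : 0 < R) (hx : ‖x‖ ≤ R) {ρ : ℝ} (hρ : 0 < ρ) (hρR : ρ ≤ R) :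
    ball ((1 - ρ / (2 * R)) • x) (ρ / 2) ⊆ closedBall 0 R ∩ ball x ρ := by
  have hq : ρ / (2 * R) ≤ 1 := by rw [div_le_one (by positivity)]; linarith
  have hqR : ρ / (2 * R) * R = ρ / 2 := by field_simp
  intro y hy
  rw [mem_ball, dist_eq_norm] at hy
  rw [mem_inter_iff, mem_closedBall_zero_iff, mem_ball, dist_eq_norm]
  constructor
  · have hcenter : ‖(1 - ρ / (2 * R)) • x‖ ≤ (1 - ρ / (2 * R)) * R := by
      rw [norm_smul, Real.norm_of_nonneg (by linarith)]
      gcongr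
    linarith [norm_le_norm_sub_add y ((1 - ρ / (2 * R)) • x)]
  · have hshift : ‖(ρ / (2 * R)) • x‖ ≤ ρ / (2 * R) * R := by
      rw [norm_smul, Real.norm_of_nonneg (by positivity)]
      gcongr
    have hyx : y - x = (y - (1 - ρ / (2 * R)) • x) - (ρ / (2 * R)) • x := by
      rw [sub_smul, one_smul]; abel
    rw [hyx]
    linarith [norm_sub_le (y - (1 - ρ / (2 * R)) • x) ((ρ / (2 * R)) • x)]

lemma ofReal_le_volume_closedBall_inter_ball (hR : 0 < R) {x : E} (hx : ‖x‖ ≤ R) {ρ : ℝ}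
    (hρ : 0 < ρ) (hρR : ρ ≤ R) :
    ENNReal.ofReal ((ρ / 2) ^ finrank ℝ E * unitBallVolume E) ≤
      volume (closedBall (0 : E) R ∩ ball x ρ) := by
  rw [← volume_ball_eq_ofReal ((1 - ρ / (2 * R)) • x) (half_pos hρ)]
  exact measure_mono (ball_smul_subset_closedBall_inter_ball hR hx hρ hρR)

lemma mul_lintegral_fst_le_lintegral_prod {α : Type*} [MeasurableSpace α] {μ : Measure α}
    [SFinite μ] {f : α → ℝ≥0∞} (hf : AEMeasurable f μ) {S : Set (α × α)} (hS : MeasurableSet S)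
    {c : ℝ≥0∞} (hc : ∀ x, f x ≠ 0 → c ≤ μ {y | (x, y) ∈ S}) :
    c * ∫⁻ x, f x ∂μ ≤ ∫⁻ q in S, f q.1 ∂μ.prod μ :=
  calc c * ∫⁻ x, f x ∂μ
      = ∫⁻ x, c * f x ∂μ := (lintegral_const_mul'' _ hf).symm
    _ ≤ ∫⁻ x, ∫⁻ y, S.indicator (fun q => f q.1) (x, y) ∂μ ∂μ := by
        refine lintegral_mono fun x => ?_
        have hslice : ∀ y, S.indicator (fun q : α × α => f q.1) (x, y) =
            {y | (x, y) ∈ S}.indicator (fun _ => f x) y := fun y => by simp [indicator]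
        simp_rw [hslice]
        have hms : MeasurableSet {y | (x, y) ∈ S} := measurable_prodMk_left hS
        rw [lintegral_indicator_const hms, mul_comm]
        by_cases hx : f x = 0
        · simp [hx]
        · gcongr
          exact hc x hx
    _ = ∫⁻ q in S, f q.1 ∂μ.prod μ := by
        rw [← lintegral_indicator hS, lintegral_prod]
        exact (hf.comp_quasiMeasurePreserving Measure.quasiMeasurePreserving_fst).indicator hS

lemma mul_integral_fst_le_setIntegral_prod {α : Type*} [MeasurableSpace α] {μ : Measure α}
    [SFinite μ] {D S : Set (α × α)} (hD : MeasurableSet D) (hS : MeasurableSet S) (hSD : S ⊆ D)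
    {F : α × α → ℝ} (hF : IntegrableOn F D (μ.prod μ)) (hF0 : ∀ q ∈ D, 0 ≤ F q)
    {f : α → ℝ} (hf : Integrable f μ) (hf0 : ∀ x, 0 ≤ f x) (hfF : ∀ q ∈ S, f q.1 ≤ F q)
    {m : ℝ} (hm0 : 0 ≤ m) (hm : ∀ x, f x ≠ 0 → ENNReal.ofReal m ≤ μ {y | (x, y) ∈ S}) :
    m * ∫ x, f x ∂μ ≤ ∫ q in D, F q ∂μ.prod μ := by
  refine (ENNReal.ofReal_le_ofReal_iff (setIntegral_nonneg hD hF0)).1 ?_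
  rw [ENNReal.ofReal_mul hm0, ofReal_integral_eq_lintegral_ofReal hf (Eventually.of_forall hf0),
    ofReal_integral_eq_lintegral_ofReal hF
      (by filter_upwards [ae_restrict_mem hD] with q hq using hF0 q hq)]
  calc ENNReal.ofReal m * ∫⁻ x, ENNReal.ofReal (f x) ∂μ
      ≤ ∫⁻ q in S, ENNReal.ofReal (f q.1) ∂μ.prod μ :=
        mul_lintegral_fst_le_lintegral_prod hf.1.aemeasurable.ennreal_ofReal hS
          fun x hx => hm x fun h => hx (by simp [h])
    _ ≤ ∫⁻ q in S, ENNReal.ofReal (F q) ∂μ.prod μ :=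
        setLIntegral_mono' hS fun q hq => ENNReal.ofReal_le_ofReal (hfF q hq)
    _ ≤ ∫⁻ q in D, ENNReal.ofReal (F q) ∂μ.prod μ := lintegral_mono_set hSD

lemma measure_integral_abs_div_add_one_lt_le {α : Type*} [MeasurableSpace α] {μ : Measure α}
    {f : α → ℝ} (hf : Integrable f μ) {m : ℝ} (hm : 0 < m) :
    μ {x | (∫ y, |f y| ∂μ) / m + 1 < f x} ≤ ENNReal.ofReal m := by
  set I := ∫ y, |f y| ∂μ
  have : 0 ≤ I := integral_nonneg fun y => abs_nonneg _
  have hsub : {x | I / m + 1 < f x} ⊆ {x | I / m + 1 ≤ |f x|} :=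
    fun x hx => (le_of_lt hx).trans (le_abs_self (f x))
  refine (measure_mono hsub).trans ?_
  have hfin : μ {x | I / m + 1 ≤ |f x|} ≠ ⊤ := (hf.measure_norm_ge_lt_top (by positivity)).ne
  rw [← ENNReal.ofReal_toReal hfin]
  refine ENNReal.ofReal_le_ofReal (le_of_mul_le_mul_left ?_ (by positivity : 0 < I / m + 1))
  calc (I / m + 1) * μ.real {x | I / m + 1 ≤ |f x|}
      ≤ I := mul_meas_ge_le_integral_of_nonneg (Eventually.of_forall fun x => abs_nonneg (f x))
        hf.abs _
    _ = I / m * m := by field_simp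
    _ ≤ (I / m + 1) * m := by gcongr; linarith

lemma exists_radius_lt_mul_rpow (hs0 : 0 < s) (hR : 0 < R) {w : ℝ} (hw : 0 < w) (d : ℕ)
    (lam : ℝ) : ∃ ρ : ℝ, 0 < ρ ∧ ρ ≤ R ∧
      lam < 1 / 2 * ((ρ / 2) ^ d * w) * (1 / 2 * (ρ ^ (d + 2 * s))⁻¹) := by
  have hlim : Tendsto (fun ρ : ℝ => w / 4 / 2 ^ d * ρ ^ (-(2 * s))) (𝓝[>] 0) atTop :=
    (tendsto_rpow_neg_nhdsGT_zero (by linarith)).const_mul_atTop (by positivity)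
  obtain ⟨ρ, hlam, hρ : 0 < ρ, hρR⟩ := ((hlim.eventually_gt_atTop lam).and
    ((eventually_mem_nhdsWithin (s := Ioi (0 : ℝ)) (a := 0)).and
      (mem_nhdsWithin_of_mem_nhds (Iic_mem_nhds hR)))).exists
  refine ⟨ρ, hρ, hρR, hlam.trans_eq ?_⟩
  have hpow : ρ ^ (-(2 * s)) = ρ ^ d * (ρ ^ (d + 2 * s))⁻¹ := by
    rw [← Real.rpow_neg hρ.le, ← Real.rpow_natCast, ← Real.rpow_add hρ]; congr 1; ring
  rw [hpow, div_pow]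
  ring

lemma half_mul_excess_le {a b k : ℝ} (hk : 0 ≤ k) (hb : b ≤ k / 2) :
    1 / 2 * a * max (a - k) 0 ≤ (a - b) * (max (a - k) 0 - max (b - k) 0) := by
  rw [max_eq_right (by linarith : b - k ≤ 0), sub_zero]
  rcases le_total a k with h | h
  · simp [h]
  · gcongr
    linarith

lemma sub_mul_excess_sub_nonneg (a b k : ℝ) :
    0 ≤ (a - b) * (max (a - k) 0 - max (b - k) 0) := by
  rcases le_total a b with h | h
  · have : max (a - k) 0 ≤ max (b - k) 0 := max_le_max (by linarith) le_rfl
    nlinarith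
  · have : max (b - k) 0 ≤ max (a - k) 0 := max_le_max (by linarith) le_rfl
    nlinarith

lemma excess_mul_nonneg {k : ℝ} (hk : 0 ≤ k) (a : ℝ) : 0 ≤ max (a - k) 0 * a := by
  rcases le_total a k with h | h
  · simp [h]
  · exact mul_nonneg (le_max_right _ _) (by linarith)

lemma ofReal_le_volume_slice_of_superlevel_le (hR : 0 < R) {u : E → ℝ} {ρ k m : ℝ} (hρ : 0 < ρ)
    (hρR : ρ ≤ R) (hm0 : 0 ≤ m) (hm : (ρ / 2) ^ finrank ℝ E * unitBallVolume E = m + m)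
    (hsuper : volume (closedBall (0 : E) R ∩ {x | k < u x}) ≤ ENNReal.ofReal m)
    {x : E} (hx : ‖x‖ ≤ R) :
    ENNReal.ofReal m ≤ volume {y | ‖y‖ ≤ R ∧ u y ≤ k ∧ ‖x - y‖ < ρ} := by
  have hcover : closedBall (0 : E) R ∩ ball x ρ ⊆
      {y | ‖y‖ ≤ R ∧ u y ≤ k ∧ ‖x - y‖ < ρ} ∪ (closedBall (0 : E) R ∩ {x | k < u x}) := by
    rintro y ⟨hyR, hyx⟩
    rw [mem_ball, dist_comm, dist_eq_norm] at hyx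
    rcases le_or_gt (u y) k with h | h
    · exact Or.inl ⟨by simpa using hyR, h, hyx⟩
    · exact Or.inr ⟨hyR, h⟩
  have hsum := (ofReal_le_volume_closedBall_inter_ball hR hx hρ hρR).trans
    ((measure_mono hcover).trans (measure_union_le _ _))
  rw [hm, ENNReal.ofReal_add hm0 hm0] at hsum
  exact (ENNReal.add_le_add_iff_right ENNReal.ofReal_ne_top).1 (hsum.trans (by gcongr))

lemma FiniteEnergy.mul_integral_excess_le_energyForm (hs0 : 0 < s) (hR : 0 < R) {u : E → ℝ}
    (hu : FiniteEnergy s R u) {ρ k m : ℝ} (hρ : 0 < ρ) (hρR : ρ ≤ R) (hk : 0 ≤ k) (hm0 : 0 ≤ m)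
    (hm : (ρ / 2) ^ finrank ℝ E * unitBallVolume E = m + m)
    (hsuper : volume (closedBall (0 : E) R ∩ {x | k / 2 < u x}) ≤ ENNReal.ofReal m) :
    m * (1 / 2 * (ρ ^ (finrank ℝ E + 2 * s))⁻¹ *
        ∫ x in closedBall (0 : E) R, max (u x - k) 0 * u x) ≤
      energyForm s R u (fun x => max (u x - k) 0) := by
  have hφ : FiniteEnergy s R (fun x => max (u x - k) 0) := (hu.sub (FiniteEnergy.const k)).max_zero
  set κ := 1 / 2 * (ρ ^ (finrank ℝ E + 2 * s))⁻¹ with hκ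
  rw [← integral_const_mul, ← integral_indicator measurableSet_closedBall]
  refine mul_integral_fst_le_setIntegral_prod (measurableSet_pairRegion R)
    (S := {q | ‖q.1‖ ≤ R ∧ ‖q.2‖ ≤ R ∧ u q.2 ≤ k / 2 ∧ ‖q.1 - q.2‖ < ρ}) ?_
    (fun q hq => Or.inl hq.1) (hu.integrableOn_energy hφ)
    (fun q _ => mul_nonneg (sub_mul_excess_sub_nonneg _ _ k) (fracKernel_nonneg _ _))
    ((integrable_indicator_iff measurableSet_closedBall).2 ((hφ.integrableOn_mul hu).const_mul κ))
    (indicator_nonneg fun x _ => mul_nonneg (by positivity) (excess_mul_nonneg hk _)) ?_ hm0 ?_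
  · exact (measurableSet_le measurable_fst.norm measurable_const).inter
      ((measurableSet_le measurable_snd.norm measurable_const).inter
      ((measurableSet_le (hu.measurable.comp measurable_snd) measurable_const).inter
      (measurableSet_lt (measurable_fst.sub measurable_snd).norm measurable_const)))
  · rintro ⟨x, y⟩ ⟨hx, -, huy, hxy⟩
    rw [indicator_of_mem (by simpa using hx)]
    rcases eq_or_ne x y with rfl | hne
    · have : u x ≤ k := by simp only at huy; linarith
      simp [this]
    · calc κ * (max (u x - k) 0 * u x)
          = 1 / 2 * u x * max (u x - k) 0 * (ρ ^ (finrank ℝ E + 2 * s))⁻¹ := by rw [hκ]; ring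
        _ ≤ (u x - u y) * (max (u x - k) 0 - max (u y - k) 0) * fracKernel s (x - y) :=
          mul_le_mul (half_mul_excess_le hk huy)
            (le_fracKernel_of_norm_le hs0 (sub_ne_zero.2 hne) hxy.le) (by positivity)
            (sub_mul_excess_sub_nonneg _ _ k)
  · intro x hx
    have hxR : ‖x‖ ≤ R := by simpa using mem_of_indicator_ne_zero hx
    refine (ofReal_le_volume_slice_of_superlevel_le hR hρ hρR hm0 hm hsuper hxR).trans_eq ?_
    simp [hxR]

lemma IsWeakSolution.ae_le_of_superlevel_le (hs0 : 0 < s) (hR : 0 < R) {u : E → ℝ}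
    (hu : IsWeakSolution s R lam u) {ρ k m : ℝ} (hρ : 0 < ρ) (hρR : ρ ≤ R) (hk : 0 ≤ k)
    (hm0 : 0 ≤ m) (hm : (ρ / 2) ^ finrank ℝ E * unitBallVolume E = m + m)
    (hlam : lam < m * (1 / 2 * (ρ ^ (finrank ℝ E + 2 * s))⁻¹))
    (hsuper : volume (closedBall (0 : E) R ∩ {x | k / 2 < u x}) ≤ ENNReal.ofReal m) :
    ∀ᵐ x ∂volume.restrict (closedBall (0 : E) R), u x ≤ k := by
  have hφ : FiniteEnergy s R (fun x => max (u x - k) 0) :=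
    (hu.finiteEnergy.sub (FiniteEnergy.const k)).max_zero
  have hlow := hu.finiteEnergy.mul_integral_excess_le_energyForm hs0 hR hρ hρR hk hm0 hm hsuper
  simp_rw [hu.energyForm_eq _ hφ, mul_comm (u _)] at hlow
  have hI : 0 ≤ ∫ x in closedBall (0 : E) R, max (u x - k) 0 * u x :=
    integral_nonneg fun x => excess_mul_nonneg hk _
  have hzero : ∫ x in closedBall (0 : E) R, max (u x - k) 0 * u x = 0 := by nlinarith
  rw [integral_eq_zero_iff_of_nonneg (fun x => excess_mul_nonneg hk _)
    (hφ.integrableOn_mul hu.finiteEnergy)] at hzero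
  filter_upwards [hzero] with x hx
  by_contra! hlt
  exact (mul_pos (lt_max_of_lt_left (sub_pos.2 hlt)) (hk.trans_lt hlt)).ne' hx

lemma exists_ae_le_integral_abs_of_isWeakSolution (hs0 : 0 < s) (hR : 0 < R) (lam : ℝ) :
    ∃ m : ℝ, 0 < m ∧ ∀ u : E → ℝ, IsWeakSolution s R lam u →
      ∀ᵐ x ∂volume.restrict (closedBall (0 : E) R),
        u x ≤ 2 * ((∫ x in closedBall (0 : E) R, |u x|) / m + 1) := by
  have hw := unitBallVolume_pos (E := E)
  obtain ⟨ρ, hρ, hρR, hlam⟩ := exists_radius_lt_mul_rpow hs0 hR hw (finrank ℝ E) lam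
  have hm : 0 < 1 / 2 * ((ρ / 2) ^ finrank ℝ E * unitBallVolume E) := by positivity
  refine ⟨_, hm, fun u hu => ?_⟩
  have : 0 ≤ ∫ x in closedBall (0 : E) R, |u x| := integral_nonneg fun x => abs_nonneg _
  refine hu.ae_le_of_superlevel_le hs0 hR hρ hρR (by positivity) hm.le (by ring) hlam ?_
  rw [mul_div_cancel_left₀ _ (two_ne_zero' ℝ)]
  refine le_trans (le_of_eq ?_)
    (measure_integral_abs_div_add_one_lt_le hu.finiteEnergy.integrableOn hm)
  rw [Measure.restrict_apply (measurableSet_lt measurable_const hu.finiteEnergy.measurable),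
    inter_comm]

lemma IsWeakSolution.exists_ae_abs_le (hs0 : 0 < s) (hR : 0 < R) {u : E → ℝ}
    (hu : IsWeakSolution s R lam u) :
    ∃ M, 0 < M ∧ ∀ᵐ x ∂volume.restrict (closedBall (0 : E) R), |u x| ≤ M := by
  obtain ⟨m, -, hbound⟩ := exists_ae_le_integral_abs_of_isWeakSolution (E := E) hs0 hR lam
  refine ⟨max (2 * ((∫ x in closedBall (0 : E) R, |u x|) / m + 1)) 1, by positivity, ?_⟩
  filter_upwards [hbound u hu, hbound (-u) hu.neg] with x hx hnx
  simp only [Pi.neg_apply, abs_neg] at hnx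
  exact (abs_le'.2 ⟨hx, hnx⟩).trans (le_max_left _ _)

/-! ### The exterior of the ball -/

lemma indicator_pairRegion_energy_indicator {F : Type*} [NormedAddCommGroup F]
    [InnerProductSpace ℝ F] {T : Set F} (hT : ∀ x ∈ T, R < ‖x‖) (u : F → ℝ) (q : F × F) :
    (pairRegion F R).indicator (fun q => (u q.1 - u q.2) *
        (T.indicator (fun _ => 1) q.1 - T.indicator (fun _ => 1) q.2) *
          fracKernel s (q.1 - q.2)) q =
      (T ×ˢ closedBall 0 R).indicator (fun q => (u q.1 - u q.2) * fracKernel s (q.1 - q.2)) q +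
      (T ×ˢ closedBall 0 R).indicator (fun q => (u q.1 - u q.2) * fracKernel s (q.1 - q.2))
        q.swap := by
  obtain ⟨x, y⟩ := q
  have hcomm := fracKernel_sub_comm s y x
  have hx : x ∈ T → ¬ ‖x‖ ≤ R := fun h => (hT x h).not_ge
  have hy : y ∈ T → ¬ ‖y‖ ≤ R := fun h => (hT y h).not_ge
  simp only [indicator, pairRegion, mem_ofPred_eq, Prod.swap_prod_mk, prodMk_mem_set_prod_eq]
  split_ifs <;> grind [mem_closedBall_zero_iff]

lemma integrableOn_fracKernel_sub_of_lt_norm (hs0 : 0 < s) {T : Set E} (hT : MeasurableSet T)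
    {δ : ℝ} (hδ : 0 < δ) (hTR : ∀ x ∈ T, R + δ < ‖x‖) (hfin : volume T ≠ ⊤) :
    IntegrableOn (fun q : E × E => fracKernel s (q.1 - q.2)) (T ×ˢ closedBall 0 R) := by
  refine IntegrableOn.of_bound ?_ (measurable_fracKernel_sub s).aestronglyMeasurable
    (δ ^ (finrank ℝ E + 2 * s))⁻¹ ?_
  · rw [Measure.volume_eq_prod, Measure.prod_prod]
    exact ENNReal.mul_lt_top hfin.lt_top (isCompact_closedBall _ _).measure_lt_top
  · filter_upwards [ae_restrict_mem (hT.prod measurableSet_closedBall)] with q hq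
    rw [Real.norm_of_nonneg (fracKernel_nonneg _ _)]
    have hq2 : ‖q.2‖ ≤ R := mem_closedBall_zero_iff.1 hq.2
    exact fracKernel_le_of_le_norm hs0 hδ (by linarith [hTR _ hq.1, norm_sub_norm_le q.1 q.2])

lemma FiniteEnergy.indicator_of_lt_norm (hs0 : 0 < s) {T : Set E} (hT : MeasurableSet T) {δ : ℝ}
    (hδ : 0 < δ) (hTR : ∀ x ∈ T, R + δ < ‖x‖) (hfin : volume T ≠ ⊤) :
    FiniteEnergy s R (T.indicator fun _ => (1 : ℝ)) := by
  have hTR' : ∀ x ∈ T, R < ‖x‖ := fun x hx => by linarith [hTR x hx]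
  have hnot : ∀ x ∈ closedBall (0 : E) R, x ∉ T :=
    fun x hx hxT => (hTR' x hxT).not_ge (mem_closedBall_zero_iff.1 hx)
  refine ⟨measurable_const.indicator hT, ?_, ?_⟩
  · exact integrableOn_zero.congr_fun (fun x hx => by simp [hnot x hx]) measurableSet_closedBall
  · have hprod := hT.prod (measurableSet_closedBall (x := (0 : E)) (ε := R))
    have hinteg : Integrable ((T ×ˢ closedBall 0 R).indicator (fun q : E × E =>
        (T.indicator (fun _ => (1 : ℝ)) q.1 - T.indicator (fun _ => 1) q.2) *
          fracKernel s (q.1 - q.2))) := by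
      refine (integrable_indicator_iff hprod).2
        ((integrableOn_fracKernel_sub_of_lt_norm hs0 hT hδ hTR hfin).congr_fun ?_ hprod)
      intro q hq
      simp [hq.1, hnot q.2 hq.2]
    refine (integrable_indicator_iff (measurableSet_pairRegion R)).1
      ((hinteg.add hinteg.swap).congr (Eventually.of_forall fun q => ?_))
    simp only [pow_two]
    exact (indicator_pairRegion_energy_indicator hTR' _ q).symm

lemma energyForm_indicator_of_lt_norm {u : E → ℝ} (hu : FiniteEnergy s R u) {T : Set E}
    (hT : MeasurableSet T) (hTR : ∀ x ∈ T, R < ‖x‖)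
    (hχ : FiniteEnergy s R (T.indicator fun _ => (1 : ℝ))) :
    IntegrableOn (fun q : E × E => (u q.1 - u q.2) * fracKernel s (q.1 - q.2))
      (T ×ˢ closedBall 0 R) ∧
    energyForm s R u (T.indicator fun _ => 1) =
      2 * ∫ q in T ×ˢ closedBall 0 R, (u q.1 - u q.2) * fracKernel s (q.1 - q.2) := by
  have hprod := hT.prod (measurableSet_closedBall (x := (0 : E)) (ε := R))
  have hinteg : IntegrableOn (fun q : E × E => (u q.1 - u q.2) * fracKernel s (q.1 - q.2))
      (T ×ˢ closedBall 0 R) := by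
    refine ((hu.integrableOn_energy hχ).mono_set
      fun q hq => Or.inr (mem_closedBall_zero_iff.1 hq.2)).congr_fun (fun q hq => ?_) hprod
    have hq2 : q.2 ∉ T := fun h => (hTR _ h).not_ge (mem_closedBall_zero_iff.1 hq.2)
    simp [hq.1, hq2]
  have hg := (integrable_indicator_iff hprod).2 hinteg
  have hgs : Integrable (fun q : E × E => (T ×ˢ closedBall 0 R).indicator
      (fun q => (u q.1 - u q.2) * fracKernel s (q.1 - q.2)) q.swap) := hg.swap
  refine ⟨hinteg, ?_⟩
  rw [energyForm, ← integral_indicator (measurableSet_pairRegion R),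
    integral_congr_ae (Eventually.of_forall (indicator_pairRegion_energy_indicator hTR u)),
    integral_add hg hgs, ← integral_indicator hprod, two_mul, Measure.volume_eq_prod]
  congr 1
  exact integral_prod_swap _

lemma IsWeakSolution.setIntegral_prod_eq_zero (hs0 : 0 < s) {u : E → ℝ}
    (hu : IsWeakSolution s R lam u) {T : Set E} (hT : MeasurableSet T) {δ : ℝ} (hδ : 0 < δ)
    (hTR : ∀ x ∈ T, R + δ < ‖x‖) (hfin : volume T ≠ ⊤) :
    IntegrableOn (fun q : E × E => (u q.1 - u q.2) * fracKernel s (q.1 - q.2))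
      (T ×ˢ closedBall 0 R) ∧
    ∫ q in T ×ˢ closedBall 0 R, (u q.1 - u q.2) * fracKernel s (q.1 - q.2) = 0 := by
  have hTR' : ∀ x ∈ T, R < ‖x‖ := fun x hx => by linarith [hTR x hx]
  have hχ := FiniteEnergy.indicator_of_lt_norm hs0 hT hδ hTR hfin
  obtain ⟨hinteg, hform⟩ := energyForm_indicator_of_lt_norm hu.finiteEnergy hT hTR' hχ
  refine ⟨hinteg, ?_⟩
  have hmul : ∫ x in closedBall (0 : E) R, u x * T.indicator (fun _ => (1 : ℝ)) x = 0 :=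
    setIntegral_eq_zero_of_forall_eq_zero fun x hx => by
      rw [indicator_of_notMem (fun h => (hTR' x h).not_ge (mem_closedBall_zero_iff.1 hx)), mul_zero]
  rw [hu.energyForm_eq _ hχ, hmul] at hform
  linarith

lemma IsWeakSolution.ae_setIntegral_sub_mul_fracKernel_eq_zero (hs0 : 0 < s) {u : E → ℝ}
    (hu : IsWeakSolution s R lam u) :
    ∀ᵐ x : E, R < ‖x‖ →
      ∫ y in closedBall (0 : E) R, (u x - u y) * fracKernel s (x - y) = 0 := by
  set A : ℕ → Set E := fun n => {x | R + 1 / ((n : ℝ) + 1) < ‖x‖ ∧ ‖x‖ < n}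
  have hAm : ∀ n, MeasurableSet (A n) := fun n =>
    (measurableSet_lt measurable_const measurable_norm).inter
      (measurableSet_lt measurable_norm measurable_const)
  have hAfin : ∀ n, volume (A n) ≠ ⊤ := fun n => ((measure_mono fun x hx =>
    mem_ball_zero_iff.2 hx.2).trans_lt (measure_ball_lt_top (x := (0 : E)) (r := n))).ne
  have hzero : ∀ n, ∀ᵐ x : E, x ∈ A n →
      ∫ y in closedBall (0 : E) R, (u x - u y) * fracKernel s (x - y) = 0 := by
    intro n
    have hδ : (0 : ℝ) < 1 / ((n : ℝ) + 1) := by positivity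
    rw [← ae_restrict_iff' (hAm n)]
    have hinteg := (hu.setIntegral_prod_eq_zero hs0 (hAm n) hδ (fun x hx => hx.1) (hAfin n)).1
    rw [IntegrableOn, Measure.volume_eq_prod, ← Measure.prod_restrict] at hinteg
    refine Integrable.ae_eq_zero_of_forall_setIntegral_eq_zero hinteg.integral_prod_left ?_
    intro T hT _
    obtain ⟨hintT, hT0⟩ := hu.setIntegral_prod_eq_zero hs0 (hT.inter (hAm n)) hδ
      (fun x hx => hx.2.1) ((measure_mono inter_subset_right).trans_lt (hAfin n).lt_top).ne
    rw [Measure.restrict_restrict hT, ← hT0, Measure.volume_eq_prod, setIntegral_prod _ hintT]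
  filter_upwards [ae_all_iff.2 hzero] with x hx hxR
  obtain ⟨n₁, h₁⟩ := exists_nat_one_div_lt (sub_pos.2 hxR)
  obtain ⟨n₂, h₂⟩ := exists_nat_gt ‖x‖
  refine hx (max n₁ n₂) ⟨?_, h₂.trans_le (by exact_mod_cast le_max_right _ _)⟩
  have hle : 1 / (((max n₁ n₂ : ℕ) : ℝ) + 1) ≤ 1 / ((n₁ : ℝ) + 1) := by
    gcongr
    exact le_max_left _ _
  linarith

lemma fracKernel_sub_le_of_lt_norm {F : Type*} [NormedAddCommGroup F] [InnerProductSpace ℝ F]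
    (hs0 : 0 < s) {x y : F} (hx : R < ‖x‖) (hy : y ∈ closedBall (0 : F) R) :
    fracKernel s (x - y) ≤ ((‖x‖ - R) ^ (finrank ℝ F + 2 * s))⁻¹ :=
  fracKernel_le_of_le_norm hs0 (sub_pos.2 hx)
    (by linarith [norm_sub_norm_le x y, mem_closedBall_zero_iff.1 hy])

lemma FiniteEnergy.integrableOn_mul_fracKernel (hs0 : 0 < s) {u : E → ℝ}
    (hu : FiniteEnergy s R u) {x : E} (hx : R < ‖x‖) :
    IntegrableOn (fun y => u y * fracKernel s (x - y)) (closedBall 0 R) := by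
  refine Integrable.mono' (g := fun y => |u y| * ((‖x‖ - R) ^ (finrank ℝ E + 2 * s))⁻¹)
    (hu.integrableOn.abs.mul_const _) (hu.measurable.mul ((measurable_fracKernel s).comp
      (measurable_const.sub measurable_id))).aestronglyMeasurable ?_
  filter_upwards [ae_restrict_mem measurableSet_closedBall] with y hy
  rw [norm_mul, Real.norm_of_nonneg (fracKernel_nonneg _ _), Real.norm_eq_abs]
  exact mul_le_mul_of_nonneg_left (fracKernel_sub_le_of_lt_norm hs0 hx hy) (abs_nonneg _)

lemma integrableOn_fracKernel_sub (hs0 : 0 < s) {x : E} (hx : R < ‖x‖) :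
    IntegrableOn (fun y => fracKernel s (x - y)) (closedBall 0 R) := by
  simpa only [one_mul] using (FiniteEnergy.const (1 : ℝ)).integrableOn_mul_fracKernel hs0 hx

/-- The integral of the kernel `fracKernel s (x - ·)` over the ball of radius `R`. -/
def kernelMass (s R : ℝ) (x : E) : ℝ := ∫ y in closedBall (0 : E) R, fracKernel s (x - y)

/-- The average of `u` over the ball of radius `R` weighted by the kernel seen from `x`; outside
the ball, weak solutions agree with it (the nonlocal Neumann condition). -/
def kernelAverage (s R : ℝ) (u : E → ℝ) (x : E) : ℝ :=
  (∫ y in closedBall (0 : E) R, u y * fracKernel s (x - y)) / kernelMass s R x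

lemma kernelMass_pos (hs0 : 0 < s) (hR : 0 < R) {x : E} (hx : R < ‖x‖) : 0 < kernelMass s R x := by
  rw [kernelMass, setIntegral_pos_iff_support_of_nonneg_ae
    (Eventually.of_forall fun y => fracKernel_nonneg _ _) (integrableOn_fracKernel_sub hs0 hx)]
  refine (measure_ball_pos volume (0 : E) hR).trans_le (measure_mono fun y hy => ?_)
  refine ⟨(fracKernel_pos (sub_ne_zero.2 ?_)).ne', ball_subset_closedBall hy⟩
  rintro rfl
  exact hx.not_gt (mem_ball_zero_iff.1 hy)

lemma IsWeakSolution.ae_eq_kernelAverage (hs0 : 0 < s) (hR : 0 < R) {u : E → ℝ}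
    (hu : IsWeakSolution s R lam u) : ∀ᵐ x : E, R < ‖x‖ → u x = kernelAverage s R u x := by
  filter_upwards [hu.ae_setIntegral_sub_mul_fracKernel_eq_zero hs0] with x hx hxR
  have h := hx hxR
  simp only [sub_mul] at h
  rw [integral_sub ((integrableOn_fracKernel_sub hs0 hxR).const_mul _)
    (hu.finiteEnergy.integrableOn_mul_fracKernel hs0 hxR), integral_const_mul] at h
  rw [kernelAverage, eq_div_iff (kernelMass_pos hs0 hR hxR).ne']
  exact sub_eq_zero.1 h

lemma FiniteEnergy.abs_kernelAverage_le (hs0 : 0 < s) (hR : 0 < R) {u : E → ℝ}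
    (hu : FiniteEnergy s R u) {M : ℝ}
    (hM : ∀ᵐ x ∂volume.restrict (closedBall (0 : E) R), |u x| ≤ M) {x : E} (hx : R < ‖x‖) :
    |kernelAverage s R u x| ≤ M := by
  have hmass := kernelMass_pos hs0 hR hx
  rw [kernelAverage, abs_div, abs_of_pos hmass, div_le_iff₀ hmass]
  refine abs_integral_le_integral_abs.trans ?_
  rw [kernelMass, ← integral_const_mul]
  refine integral_mono_ae (hu.integrableOn_mul_fracKernel hs0 hx).abs
    ((integrableOn_fracKernel_sub hs0 hx).const_mul M) ?_
  filter_upwards [hM] with y hy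
  rw [abs_mul, abs_of_nonneg (fracKernel_nonneg _ _)]
  exact mul_le_mul_of_nonneg_right hy (fracKernel_nonneg _ _)

lemma IsWeakSolution.ae_abs_le_of_restrict (hs0 : 0 < s) (hR : 0 < R) {u : E → ℝ}
    (hu : IsWeakSolution s R lam u) {M : ℝ}
    (hM : ∀ᵐ x ∂volume.restrict (closedBall (0 : E) R), |u x| ≤ M) : ∀ᵐ x : E, |u x| ≤ M := by
  filter_upwards [(ae_restrict_iff' measurableSet_closedBall).1 hM, hu.ae_eq_kernelAverage hs0 hR]
    with x hin hout
  rcases le_or_gt ‖x‖ R with hx | hx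
  · exact hin (mem_closedBall_zero_iff.2 hx)
  · rw [hout hx]
    exact hu.finiteEnergy.abs_kernelAverage_le hs0 hR hM hx

lemma IsWeakSolution.exists_ae_abs_le_univ (hs0 : 0 < s) (hR : 0 < R) {u : E → ℝ}
    (hu : IsWeakSolution s R lam u) : ∃ M, 0 < M ∧ ∀ᵐ x : E, |u x| ≤ M :=
  let ⟨M, hM, h⟩ := hu.exists_ae_abs_le hs0 hR
  ⟨M, hM, hu.ae_abs_le_of_restrict hs0 hR h⟩

lemma IsWeakSolution.ae_eq_zero (hs0 : 0 < s) (hR : 0 < R) {u : E → ℝ}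
    (hu : IsWeakSolution s R lam u) (h : u =ᵐ[volume.restrict (closedBall (0 : E) R)] 0) :
    u =ᵐ[volume] 0 := by
  filter_upwards [hu.ae_abs_le_of_restrict hs0 hR (M := 0)
    (by filter_upwards [h] with x hx using by simp [hx])] with x hx
  exact abs_nonpos_iff.1 hx

lemma FiniteEnergy.continuousAt_setIntegral_mul_fracKernel (hs0 : 0 < s) {u : E → ℝ}
    (hu : FiniteEnergy s R u) {x : E} (hx : R < ‖x‖) :
    ContinuousAt (fun x => ∫ y in closedBall (0 : E) R, u y * fracKernel s (x - y)) x := by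
  obtain ⟨r, hRr, hrx⟩ := exists_between hx
  refine continuousAt_of_dominated
    (bound := fun y => |u y| * ((r - R) ^ (finrank ℝ E + 2 * s))⁻¹) ?_ ?_
    (hu.integrableOn.abs.mul_const _) ?_
  · exact Eventually.of_forall fun x => (hu.measurable.mul ((measurable_fracKernel s).comp
      (measurable_const.sub measurable_id))).aestronglyMeasurable
  · filter_upwards [continuous_norm.continuousAt.eventually (lt_mem_nhds hrx)] with z hz
    filter_upwards [ae_restrict_mem measurableSet_closedBall] with y hy
    rw [norm_mul, Real.norm_of_nonneg (fracKernel_nonneg _ _), Real.norm_eq_abs]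
    refine mul_le_mul_of_nonneg_left ?_ (abs_nonneg _)
    exact fracKernel_le_of_le_norm hs0 (sub_pos.2 hRr)
      (by linarith [norm_sub_norm_le z y, mem_closedBall_zero_iff.1 hy])
  · filter_upwards [ae_restrict_mem measurableSet_closedBall] with y hy
    have hpos : 0 < ‖x - y‖ := by
      linarith [norm_sub_norm_le x y, mem_closedBall_zero_iff.1 hy]
    exact continuousAt_const.mul (ContinuousAt.inv₀
      (ContinuousAt.rpow_const (by fun_prop) (Or.inl hpos.ne')) (Real.rpow_pos_of_pos hpos _).ne')

lemma FiniteEnergy.continuousAt_kernelAverage (hs0 : 0 < s) (hR : 0 < R) {u : E → ℝ}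
    (hu : FiniteEnergy s R u) {x : E} (hx : R < ‖x‖) : ContinuousAt (kernelAverage s R u) x := by
  have hmass : ContinuousAt (kernelMass s R : E → ℝ) x := by
    have h := (FiniteEnergy.const (1 : ℝ)).continuousAt_setIntegral_mul_fracKernel hs0 hx
    simp only [one_mul] at h
    exact h
  exact (hu.continuousAt_setIntegral_mul_fracKernel hs0 hx).div hmass
    (kernelMass_pos hs0 hR hx).ne'

/-! ### The energy form and second differences -/

lemma two_mul_setIntegral_eq_setIntegral_add_comp {α : Type*} [MeasurableSpace α] {μ : Measure α}
    {T : α → α} (hT : MeasurePreserving T μ μ) (hTe : MeasurableEmbedding T) {S : Set α}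
    (hTS : T ⁻¹' S = S) {f : α → ℝ} (hf : IntegrableOn f S μ) :
    2 * ∫ y in S, f y ∂μ = ∫ y in S, (f y + f (T y)) ∂μ := by
  have hfT : IntegrableOn (fun y => f (T y)) S μ := by
    have h := (hT.integrableOn_comp_preimage hTe (f := f) (s := S)).2 hf
    rwa [hTS] at h
  have heq : ∫ y in S, f (T y) ∂μ = ∫ y in S, f y ∂μ := by
    simpa only [hTS] using hT.setIntegral_preimage_emb hTe f S
  rw [integral_add hf hfT, heq, two_mul]

lemma integrable_indicator_lt_norm_fracKernel (hs0 : 0 < s) (hs1 : s < 1) {ε : ℝ} (hε : 0 < ε) :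
    Integrable ({z : E | ε < ‖z‖}.indicator (fracKernel s)) :=
  (integrable_indicator_iff (measurableSet_lt measurable_const measurable_norm)).2
    (integrableOn_fracKernel hs0 hs1 hε)

lemma abs_sub_le_two {a b : ℝ} (ha : |a| ≤ 1) (hb : |b| ≤ 1) : |a - b| ≤ 2 :=
  (abs_sub a b).trans (by linarith)

lemma integrableOn_fst_mul_sub_mul_fracKernel (hs0 : 0 < s) (hs1 : s < 1) {β φ : E → ℝ}
    (hβ : Measurable β) (hβ1 : ∀ x, |β x| ≤ 1) (hφ : Integrable φ) {ε : ℝ} (hε : 0 < ε)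
    {S : Set (E × E)} (hS : MeasurableSet S) (hSε : ∀ q ∈ S, ε < ‖q.1 - q.2‖) :
    IntegrableOn (fun q : E × E => φ q.1 * ((β q.1 - β q.2) * fracKernel s (q.1 - q.2))) S := by
  have hdom := (integrable_fst_mul_sub hφ.abs
    (integrable_indicator_lt_norm_fracKernel hs0 hs1 hε)).const_mul 2
  refine Integrable.mono' hdom.integrableOn ((hφ.1.comp_quasiMeasurePreserving
    Measure.quasiMeasurePreserving_fst).mul ((measurable_sub_pair hβ).mul
      (measurable_fracKernel_sub s)).aestronglyMeasurable).restrict ?_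
  filter_upwards [ae_restrict_mem hS] with q hq
  rw [indicator_of_mem (show q.1 - q.2 ∈ {z : E | ε < ‖z‖} from hSε q hq), norm_mul, norm_mul,
    Real.norm_of_nonneg (fracKernel_nonneg _ _), Real.norm_eq_abs, Real.norm_eq_abs,
    mul_left_comm]
  have := fracKernel_nonneg s (q.1 - q.2)
  gcongr
  exact abs_sub_le_two (hβ1 _) (hβ1 _)

lemma setIntegral_energy_eq_two_mul {β φ : E → ℝ} {S : Set (E × E)} (hS : Prod.swap ⁻¹' S = S)
    (h : IntegrableOn
      (fun q : E × E => φ q.1 * ((β q.1 - β q.2) * fracKernel s (q.1 - q.2))) S) :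
    ∫ q in S, (β q.1 - β q.2) * (φ q.1 - φ q.2) * fracKernel s (q.1 - q.2) =
      2 * ∫ q in S, φ q.1 * ((β q.1 - β q.2) * fracKernel s (q.1 - q.2)) := by
  rw [Measure.volume_eq_prod,
    two_mul_setIntegral_eq_setIntegral_add_comp Measure.measurePreserving_swap
      MeasurableEquiv.prodComm.measurableEmbedding hS h]
  refine integral_congr_ae (Eventually.of_forall fun q => ?_)
  simp only [Prod.fst_swap, Prod.snd_swap]
  rw [fracKernel_sub_comm s q.2]
  ring

lemma abs_setIntegral_fst_mul_le {α : Type*} [MeasurableSpace α] {μ : Measure α} [SFinite μ]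
    {φ : α → ℝ} (hφ : Integrable φ μ) (hφ0 : ∀ x, 0 ≤ φ x) {k : α × α → ℝ} {S : Set (α × α)}
    (hS : MeasurableSet S) (h : IntegrableOn (fun q => φ q.1 * k q) S (μ.prod μ)) {L : ℝ}
    (hk : ∀ x, φ x ≠ 0 → |∫ y in {y | (x, y) ∈ S}, k (x, y) ∂μ| ≤ L) :
    |∫ q in S, φ q.1 * k q ∂μ.prod μ| ≤ L * ∫ x, φ x ∂μ := by
  rw [← integral_indicator hS, integral_prod _ ((integrable_indicator_iff hS).2 h),
    ← integral_const_mul]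
  refine abs_integral_le_integral_abs.trans (integral_mono_of_nonneg
    (Eventually.of_forall fun x => abs_nonneg _) (hφ.const_mul L)
    (Eventually.of_forall fun x => ?_))
  have hslice : ∫ y, S.indicator (fun q => φ q.1 * k q) (x, y) ∂μ =
      φ x * ∫ y in {y | (x, y) ∈ S}, k (x, y) ∂μ := by
    have hm : MeasurableSet {y | (x, y) ∈ S} := measurable_prodMk_left hS
    rw [← integral_const_mul, ← integral_indicator hm]
    rfl
  simp only [hslice, abs_mul, abs_of_nonneg (hφ0 x)]
  rw [mul_comm]
  rcases eq_or_ne (φ x) 0 with hx | hx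
  · simp [hx]
  · exact mul_le_mul_of_nonneg_right (hk x hx) (hφ0 x)

variable (E) in
/-- The pairs of `pairRegion E R` at distance more than `ε`: cutting off the diagonal makes the
singular integrals over the pair region absolutely convergent. -/
def truncPairRegion (R ε : ℝ) : Set (E × E) := {q | q ∈ pairRegion E R ∧ ε < ‖q.1 - q.2‖}

lemma measurableSet_truncPairRegion (R ε : ℝ) : MeasurableSet (truncPairRegion E R ε) :=
  (measurableSet_pairRegion R).inter
    (measurableSet_lt measurable_const (measurable_fst.sub measurable_snd).norm)

lemma preimage_swap_truncPairRegion {F : Type*} [NormedAddCommGroup F] [InnerProductSpace ℝ F]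
    (R ε : ℝ) : Prod.swap ⁻¹' truncPairRegion F R ε = truncPairRegion F R ε := by
  ext q
  simp only [truncPairRegion, pairRegion, mem_preimage, mem_ofPred_eq, Prod.fst_swap,
    Prod.snd_swap, norm_sub_rev q.2, or_comm]

lemma tendsto_setIntegral_truncPairRegion {β φ : E → ℝ} (hβ : FiniteEnergy s R β)
    (hφ : FiniteEnergy s R φ) :
    Tendsto (fun n : ℕ => ∫ q in truncPairRegion E R (1 / ((n : ℝ) + 1)),
      (β q.1 - β q.2) * (φ q.1 - φ q.2) * fracKernel s (q.1 - q.2)) atTop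
      (𝓝 (energyForm s R β φ)) := by
  have hsub : (⋃ n : ℕ, truncPairRegion E R (1 / ((n : ℝ) + 1))) ⊆ pairRegion E R :=
    iUnion_subset fun n q hq => hq.1
  have hmono : Monotone fun n : ℕ => truncPairRegion E R (1 / ((n : ℝ) + 1)) :=
    fun a b hab q hq => ⟨hq.1, lt_of_le_of_lt (by gcongr) hq.2⟩
  have hlim := tendsto_setIntegral_of_monotone (fun n => measurableSet_truncPairRegion R _) hmono
    ((hβ.integrableOn_energy hφ).mono_set hsub)
  convert hlim using 2
  refine setIntegral_eq_of_subset_of_forall_sdiff_eq_zero (measurableSet_pairRegion R) hsub ?_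
  rintro q ⟨hq, hqU⟩
  have hdiag : q.1 = q.2 := by
    by_contra hne
    obtain ⟨n, hn⟩ := exists_nat_one_div_lt (norm_pos_iff.2 (sub_ne_zero.2 hne))
    exact hqU (mem_iUnion.2 ⟨n, hq, hn⟩)
  simp [hdiag]

lemma abs_energyForm_le_of_truncated (hs0 : 0 < s) (hs1 : s < 1) {β φ : E → ℝ}
    (hβ : FiniteEnergy s R β) (hβ1 : ∀ x, |β x| ≤ 1) (hφ : FiniteEnergy s R φ)
    (hφi : Integrable φ) (hφ0 : ∀ x, 0 ≤ φ x) {L : ℝ}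
    (h : ∀ ε > 0, ∀ x, φ x ≠ 0 → |∫ y in {y | (x, y) ∈ truncPairRegion E R ε},
      (β x - β y) * fracKernel s (x - y)| ≤ L) :
    |energyForm s R β φ| ≤ 2 * L * ∫ x, φ x := by
  refine le_of_tendsto (tendsto_setIntegral_truncPairRegion hβ hφ).abs
    (Eventually.of_forall fun n => ?_)
  have hε : (0 : ℝ) < 1 / ((n : ℝ) + 1) := by positivity
  have hinteg := integrableOn_fst_mul_sub_mul_fracKernel hs0 hs1 hβ.measurable hβ1 hφi hε
    (measurableSet_truncPairRegion R _) fun q hq => hq.2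
  rw [setIntegral_energy_eq_two_mul (preimage_swap_truncPairRegion R _) hinteg, abs_mul, abs_two,
    mul_assoc]
  exact mul_le_mul_of_nonneg_left (abs_setIntegral_fst_mul_le hφi hφ0
    (measurableSet_truncPairRegion R _) hinteg (h _ hε)) zero_le_two

lemma integrableOn_sub_mul_fracKernel_of_lt_norm (hs0 : 0 < s) (hs1 : s < 1) {β : E → ℝ}
    (hβ : Measurable β) (hβ1 : ∀ x, |β x| ≤ 1) {x : E} {S : Set E} (hS : MeasurableSet S) {ε : ℝ}
    (hε : 0 < ε) (hSε : ∀ y ∈ S, ε < ‖x - y‖) :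
    IntegrableOn (fun y => (β x - β y) * fracKernel s (x - y)) S := by
  have hdom := ((integrable_indicator_lt_norm_fracKernel hs0 hs1 hε).comp_sub_left x).const_mul 2
  refine Integrable.mono' hdom.integrableOn ((measurable_const.sub hβ).mul
    ((measurable_fracKernel s).comp (measurable_const.sub measurable_id))).aestronglyMeasurable ?_
  filter_upwards [ae_restrict_mem hS] with y hy
  rw [indicator_of_mem (show x - y ∈ {z : E | ε < ‖z‖} from hSε y hy), norm_mul,
    Real.norm_of_nonneg (fracKernel_nonneg _ _), Real.norm_eq_abs]
  exact mul_le_mul_of_nonneg_right (abs_sub_le_two (hβ1 x) (hβ1 y)) (fracKernel_nonneg _ _)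

lemma abs_setIntegral_sub_mul_fracKernel_le (hs0 : 0 < s) (hs1 : s < 1) {β : E → ℝ}
    (hβ : Measurable β) (hβ1 : ∀ x, |β x| ≤ 1) {x : E} {S : Set E} (hS : MeasurableSet S) {ε : ℝ}
    (hε : 0 < ε) (hSε : ∀ y ∈ S, ε < ‖x - y‖) {T : E → E} (hT : MeasurePreserving T)
    (hTe : MeasurableEmbedding T) (hTS : T ⁻¹' S = S) (hTx : ∀ y, ‖x - T y‖ = ‖x - y‖) {c t : ℝ}
    (hc : 0 ≤ c) (ht : 0 < t)
    (h : ∀ y ∈ S, |2 * β x - β y - β (T y)| ≤ c * min 1 (‖x - y‖ ^ 2 / t ^ 2)) :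
    |∫ y in S, (β x - β y) * fracKernel s (x - y)| ≤
      c / 2 * (t ^ (-(2 * s)) * levyMass E s) := by
  have hsym : 2 * ∫ y in S, (β x - β y) * fracKernel s (x - y) =
      ∫ y in S, (2 * β x - β y - β (T y)) * fracKernel s (x - y) := by
    rw [two_mul_setIntegral_eq_setIntegral_add_comp hT hTe hTS
      (integrableOn_sub_mul_fracKernel_of_lt_norm hs0 hs1 hβ hβ1 hS hε hSε)]
    refine integral_congr_ae (Eventually.of_forall fun y => ?_)
    simp only [fracKernel_congr_norm s (hTx y)]
    ring
  have hdom := ((integrable_min_one_sq_div_mul_fracKernel hs0 hs1 ht).comp_sub_left x).const_mul c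
  have hbound : |∫ y in S, (2 * β x - β y - β (T y)) * fracKernel s (x - y)| ≤
      ∫ y, c * (min 1 (‖x - y‖ ^ 2 / t ^ 2) * fracKernel s (x - y)) := by
    refine abs_integral_le_integral_abs.trans ((integral_mono_of_nonneg
      (Eventually.of_forall fun y => abs_nonneg _) hdom.integrableOn ?_).trans
        (setIntegral_le_integral hdom (Eventually.of_forall fun y => ?_)))
    · filter_upwards [ae_restrict_mem hS] with y hy
      rw [abs_mul, abs_of_nonneg (fracKernel_nonneg _ _), ← mul_assoc]
      exact mul_le_mul_of_nonneg_right (h y hy) (fracKernel_nonneg _ _)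
    · exact mul_nonneg hc (mul_nonneg (by positivity) (fracKernel_nonneg _ _))
  rw [integral_const_mul,
    integral_sub_left_eq_self (fun z => min 1 (‖z‖ ^ 2 / t ^ 2) * fracKernel s z),
    integral_min_one_sq_div_mul_fracKernel ht, ← hsym, abs_mul, abs_two] at hbound
  linarith

/-- The reflection through the line spanned by `x`. It fixes `x` and preserves the ball, which makes
it the substitute for the point reflection at `x` when `x` lies outside the ball. -/
def lineReflection {F : Type*} [NormedAddCommGroup F] [InnerProductSpace ℝ F] (x : F) :
    F ≃ₗᵢ[ℝ] F := (Submodule.span ℝ {x}).reflection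

lemma norm_sub_lineReflection {F : Type*} [NormedAddCommGroup F] [InnerProductSpace ℝ F]
    (x y : F) : ‖x - lineReflection x y‖ = ‖x - y‖ := by
  have hx : lineReflection x x = x :=
    Submodule.reflection_mem_subspace_eq_self (Submodule.mem_span_singleton_self x)
  nth_rewrite 1 [← hx]
  rw [← map_sub, LinearIsometryEquiv.norm_map]

lemma abs_energyForm_le_of_second_difference (hs0 : 0 < s) (hs1 : s < 1) {β φ : E → ℝ}
    (hβ : FiniteEnergy s R β) (hβ1 : ∀ x, |β x| ≤ 1) (hφ : FiniteEnergy s R φ)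
    (hφi : Integrable φ) (hφ0 : ∀ x, 0 ≤ φ x) {c t : ℝ} (hc : 0 ≤ c) (ht : 0 < t)
    (h1 : ∀ x, φ x ≠ 0 → ‖x‖ ≤ R → ∀ y,
      |2 * β x - β y - β ((2 : ℝ) • x - y)| ≤ c * min 1 (‖x - y‖ ^ 2 / t ^ 2))
    (h2 : ∀ x, φ x ≠ 0 → R < ‖x‖ → ∀ y, ‖y‖ ≤ R →
      |2 * β x - β y - β (lineReflection x y)| ≤ c * min 1 (‖x - y‖ ^ 2 / t ^ 2)) :
    |energyForm s R β φ| ≤ c * t ^ (-(2 * s)) * levyMass E s * ∫ x, φ x := by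
  refine (abs_energyForm_le_of_truncated hs0 hs1 hβ hβ1 hφ hφi hφ0
    (L := c / 2 * (t ^ (-(2 * s)) * levyMass E s))
      fun ε hε x hx => ?_).trans_eq (by ring)
  have hm : MeasurableSet {y | (x, y) ∈ truncPairRegion E R ε} :=
    measurable_prodMk_left (measurableSet_truncPairRegion R ε)
  rcases le_or_gt ‖x‖ R with hxR | hxR
  · have hT : ∀ y, ‖x - ((2 : ℝ) • x - y)‖ = ‖x - y‖ := fun y => by
      rw [two_smul, show x - (x + x - y) = -(x - y) by abel, norm_neg]
    refine abs_setIntegral_sub_mul_fracKernel_le hs0 hs1 hβ.measurable hβ1 hm hε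
      (fun y hy => hy.2) (Measure.measurePreserving_sub_left volume _)
      (MeasurableEquiv.subLeft ((2 : ℝ) • x)).measurableEmbedding ?_ hT hc ht
      fun y _ => h1 x hx hxR y
    ext y
    simp only [mem_preimage, mem_ofPred_eq, truncPairRegion, pairRegion, hxR, true_or, true_and, hT]
  · refine abs_setIntegral_sub_mul_fracKernel_le hs0 hs1 hβ.measurable hβ1 hm hε
      (fun y hy => hy.2) (lineReflection x).measurePreserving
      (lineReflection x).toHomeomorph.toMeasurableEquiv.measurableEmbedding ?_
      (norm_sub_lineReflection x) hc ht
      fun y hy => h2 x hx hxR y (hy.1.resolve_left hxR.not_ge)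
    ext y
    simp only [mem_preimage, mem_ofPred_eq, truncPairRegion, pairRegion, norm_sub_lineReflection,
      LinearIsometryEquiv.norm_map]

/-! ### Bump functions and quasi-distances -/

/-- A `C^{1,1}` cutoff profile: `1` at `0` and `0` beyond `1`. -/
def bumpProfile (τ : ℝ) : ℝ := (max 0 (1 - τ)) ^ 2

lemma max_zero_one_sub_mem_Icc {τ : ℝ} (h : 0 ≤ τ) : max 0 (1 - τ) ∈ Icc (0 : ℝ) 1 :=
  ⟨le_max_left _ _, max_le zero_le_one (by linarith)⟩

lemma bumpProfile_nonneg (τ : ℝ) : 0 ≤ bumpProfile τ := sq_nonneg _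

lemma bumpProfile_le_one {τ : ℝ} (h : 0 ≤ τ) : bumpProfile τ ≤ 1 :=
  pow_le_one₀ (max_zero_one_sub_mem_Icc h).1 (max_zero_one_sub_mem_Icc h).2

lemma continuous_bumpProfile : Continuous bumpProfile := by
  unfold bumpProfile
  fun_prop

lemma bumpProfile_eq_zero {τ : ℝ} (h : 1 ≤ τ) : bumpProfile τ = 0 := by
  rw [bumpProfile, max_eq_left (by linarith), zero_pow two_ne_zero]

lemma abs_bumpProfile_sub_sub_le (a b : ℝ) :
    |bumpProfile b - bumpProfile a + 2 * max 0 (1 - a) * (b - a)| ≤ (b - a) ^ 2 := by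
  unfold bumpProfile
  rcases le_total 0 (1 - a) with ha | ha <;> rcases le_total 0 (1 - b) with hb | hb <;>
    simp only [max_eq_left, max_eq_right, ha, hb] <;> rw [abs_le] <;> constructor <;> nlinarith

lemma abs_bumpProfile_sub_le {a b : ℝ} (ha : 0 ≤ a) (hb : 0 ≤ b) :
    |bumpProfile a - bumpProfile b| ≤ 2 * |a - b| := by
  have hlip : |max 0 (1 - a) - max 0 (1 - b)| ≤ |a - b| := by
    simpa only [max_comm (0 : ℝ), sub_sub_sub_cancel_left, abs_sub_comm b a] using
      abs_max_sub_max_le_abs (1 - a) (1 - b) 0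
  obtain ⟨ha0, ha1⟩ := max_zero_one_sub_mem_Icc ha
  obtain ⟨hb0, hb1⟩ := max_zero_one_sub_mem_Icc hb
  rw [bumpProfile, bumpProfile, sq_sub_sq, abs_mul, abs_of_nonneg (add_nonneg ha0 hb0)]
  exact mul_le_mul (by linarith) hlip (abs_nonneg _) zero_le_two

lemma abs_bumpProfile_second_difference_le {a b₁ b₂ d e : ℝ} (ha : 0 ≤ a) (h₁ : |b₁ - a| ≤ d)
    (h₂ : |b₂ - a| ≤ d) (h : |2 * a - b₁ - b₂| ≤ e) :
    |2 * bumpProfile a - bumpProfile b₁ - bumpProfile b₂| ≤ 2 * e + 2 * d ^ 2 := by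
  have taylor₁ := abs_bumpProfile_sub_sub_le a b₁
  have taylor₂ := abs_bumpProfile_sub_sub_le a b₂
  have hd₁ : (b₁ - a) ^ 2 ≤ d ^ 2 := sq_le_sq' (abs_le.1 h₁).1 (abs_le.1 h₁).2
  have hd₂ : (b₂ - a) ^ 2 ≤ d ^ 2 := sq_le_sq' (abs_le.1 h₂).1 (abs_le.1 h₂).2
  obtain ⟨hp0, hp1⟩ := max_zero_one_sub_mem_Icc ha
  have hlinear : |2 * max 0 (1 - a) * (2 * a - b₁ - b₂)| ≤ 2 * e := by
    rw [abs_mul, abs_of_nonneg (by positivity)]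
    exact mul_le_mul (by linarith) h (abs_nonneg _) zero_le_two
  rw [abs_le] at *
  constructor <;> linarith

lemma min_one_sq_div_of_le {r t : ℝ} (hr : 0 ≤ r) (ht : 0 < t) (h : r ≤ t) :
    min 1 (r ^ 2 / t ^ 2) = r ^ 2 / t ^ 2 :=
  min_eq_right ((div_le_one (by positivity)).2 (by gcongr))

lemma min_one_sq_div_of_ge {r t : ℝ} (ht : 0 < t) (h : t ≤ r) : min 1 (r ^ 2 / t ^ 2) = 1 :=
  min_eq_left ((one_le_div (by positivity)).2 (by gcongr))

/-- A `C^{1,1}`-type substitute `q` for the squared distance to `x₀`, on the scales below `t₀`. Its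
second differences are controlled at `x` by point reflections and, for `x` outside the ball of
radius `R`, by reflections through the line `ℝ x`, which preserve that ball. -/
structure IsQuasiDist {F : Type*} [NormedAddCommGroup F] [InnerProductSpace ℝ F] (R : ℝ)
    (q : F → ℝ) (x₀ : F) (t₀ : ℝ) : Prop where
  pos : 0 < t₀
  continuous : Continuous q
  apply_center : q x₀ = 0
  half_sq_le : ∀ x, 1 / 2 * ‖x - x₀‖ ^ 2 ≤ q x
  abs_sub_le : ∀ x y, q x ≤ t₀ ^ 2 → ‖x - y‖ ≤ t₀ →
    |q x - q y| ≤ 200 * ‖x - y‖ * (√(q x) + ‖x - y‖)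
  abs_second_difference_le : ∀ x z, q x ≤ t₀ ^ 2 → ‖z‖ ≤ t₀ →
    |2 * q x - q (x + z) - q (x - z)| ≤ 200 * ‖z‖ ^ 2
  abs_second_difference_lineReflection_le : ∀ x y, q x ≤ t₀ ^ 2 → ‖x - y‖ ≤ t₀ → R < ‖x‖ →
    ‖y‖ ≤ R → |2 * q x - q y - q (lineReflection x y)| ≤ 200 * ‖x - y‖ ^ 2

/-- The bump of width `t` built from a quasi-distance `q`: it is supported in `{q ≤ t ^ 2}` and
equals `1` where `q` vanishes. -/
def quasiBump {F : Type*} (q : F → ℝ) (t : ℝ) (y : F) : ℝ := bumpProfile (q y / t ^ 2)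

section QuasiBump

variable {F : Type*} [NormedAddCommGroup F] [InnerProductSpace ℝ F] {q : F → ℝ} {x₀ : F} {t t₀ : ℝ}

lemma quasiBump_nonneg {α : Type*} (q : α → ℝ) (t : ℝ) (x : α) : 0 ≤ quasiBump q t x :=
  bumpProfile_nonneg _

lemma quasiBump_eq_zero {α : Type*} {q : α → ℝ} (ht : 0 < t) {x : α} (hx : t ^ 2 ≤ q x) :
    quasiBump q t x = 0 :=
  bumpProfile_eq_zero ((one_le_div (by positivity)).2 hx)

lemma IsQuasiDist.nonneg (h : IsQuasiDist R q x₀ t₀) (x : F) : 0 ≤ q x :=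
  le_trans (by positivity) (h.half_sq_le x)

lemma IsQuasiDist.quasiBump_le_one (h : IsQuasiDist R q x₀ t₀) (t : ℝ) (x : F) :
    quasiBump q t x ≤ 1 :=
  bumpProfile_le_one (div_nonneg (h.nonneg x) (sq_nonneg t))

lemma IsQuasiDist.abs_quasiBump_le_one (h : IsQuasiDist R q x₀ t₀) (t : ℝ) (x : F) :
    |quasiBump q t x| ≤ 1 :=
  abs_le.2 ⟨by linarith [quasiBump_nonneg q t x], h.quasiBump_le_one t x⟩

lemma IsQuasiDist.continuous_quasiBump (h : IsQuasiDist R q x₀ t₀) (t : ℝ) :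
    Continuous (quasiBump q t) :=
  continuous_bumpProfile.comp (h.continuous.div_const _)

lemma IsQuasiDist.abs_div_sub_div_le (h : IsQuasiDist R q x₀ t₀) (ht : 0 < t) (htt₀ : t ≤ t₀)
    {x y : F} (hx : q x ≤ t ^ 2) (hxy : ‖x - y‖ ≤ t) :
    |q y / t ^ 2 - q x / t ^ 2| ≤ 400 * ‖x - y‖ / t := by
  have hsqrt : √(q x) ≤ t := Real.sqrt_le_iff.2 ⟨ht.le, hx⟩
  have hq : |q x - q y| ≤ 200 * ‖x - y‖ * (t + t) :=
    (h.abs_sub_le x y (hx.trans (by gcongr)) (hxy.trans htt₀)).trans (by gcongr)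
  rw [← sub_div, abs_div, abs_of_pos (pow_pos ht 2), abs_sub_comm, div_le_iff₀ (by positivity)]
  refine hq.trans_eq ?_
  field_simp
  ring

lemma IsQuasiDist.sq_quasiBump_sub_le_of_norm_le (h : IsQuasiDist R q x₀ t₀) (ht : 0 < t)
    (htt₀ : t ≤ t₀) {x y : F} (hx : q x ≤ t ^ 2) (hxy : ‖x - y‖ ≤ t) :
    (quasiBump q t x - quasiBump q t y) ^ 2 ≤ 800 ^ 2 * (‖x - y‖ ^ 2 / t ^ 2) := by
  have hlip : |quasiBump q t y - quasiBump q t x| ≤ 2 * (400 * ‖x - y‖ / t) :=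
    (abs_bumpProfile_sub_le (div_nonneg (h.nonneg y) (sq_nonneg t))
      (div_nonneg (h.nonneg x) (sq_nonneg t))).trans
        (mul_le_mul_of_nonneg_left (h.abs_div_sub_div_le ht htt₀ hx hxy) zero_le_two)
  rw [← sq_abs, abs_sub_comm]
  calc |quasiBump q t y - quasiBump q t x| ^ 2 ≤ (2 * (400 * ‖x - y‖ / t)) ^ 2 := by gcongr
    _ = 800 ^ 2 * (‖x - y‖ ^ 2 / t ^ 2) := by ring

lemma IsQuasiDist.sq_quasiBump_sub_le (h : IsQuasiDist R q x₀ t₀) (ht : 0 < t) (htt₀ : t ≤ t₀)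
    (x y : F) :
    (quasiBump q t x - quasiBump q t y) ^ 2 ≤ 800 ^ 2 * min 1 (‖x - y‖ ^ 2 / t ^ 2) := by
  rcases le_or_gt ‖x - y‖ t with hxy | hxy
  · rw [min_one_sq_div_of_le (norm_nonneg _) ht hxy]
    rcases le_or_gt (q x) (t ^ 2) with hx | hx
    · exact h.sq_quasiBump_sub_le_of_norm_le ht htt₀ hx hxy
    rcases le_or_gt (q y) (t ^ 2) with hy | hy
    · rw [sub_sq_comm, norm_sub_rev x y]
      exact h.sq_quasiBump_sub_le_of_norm_le ht htt₀ hy (by rwa [norm_sub_rev])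
    · rw [quasiBump_eq_zero ht hx.le, quasiBump_eq_zero ht hy.le, sub_zero, zero_pow two_ne_zero]
      positivity
  · rw [min_one_sq_div_of_ge ht hxy.le]
    nlinarith [h.quasiBump_le_one t x, h.quasiBump_le_one t y, quasiBump_nonneg q t x,
      quasiBump_nonneg q t y]

lemma IsQuasiDist.abs_quasiBump_second_difference_le (h : IsQuasiDist R q x₀ t₀) (ht : 0 < t)
    (htt₀ : t ≤ t₀) {x y y' : F} (hx : q x ≤ t ^ 2) (hyy' : ‖x - y'‖ = ‖x - y‖)
    (hq : ‖x - y‖ ≤ t₀ → |2 * q x - q y - q y'| ≤ 200 * ‖x - y‖ ^ 2) :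
    |2 * quasiBump q t x - quasiBump q t y - quasiBump q t y'| ≤
      400000 * min 1 (‖x - y‖ ^ 2 / t ^ 2) := by
  rcases le_or_gt ‖x - y‖ t with hxy | hxy
  · rw [min_one_sq_div_of_le (norm_nonneg _) ht hxy]
    have hy := h.abs_div_sub_div_le ht htt₀ hx hxy
    have hy' := h.abs_div_sub_div_le ht htt₀ hx (hyy'.le.trans hxy)
    rw [hyy'] at hy'
    have hsecond : |2 * (q x / t ^ 2) - q y / t ^ 2 - q y' / t ^ 2| ≤
        200 * ‖x - y‖ ^ 2 / t ^ 2 := by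
      rw [← mul_div_assoc, ← sub_div, ← sub_div, abs_div, abs_of_pos (pow_pos ht 2)]
      gcongr
      exact hq (hxy.trans htt₀)
    calc _ ≤ 2 * (200 * ‖x - y‖ ^ 2 / t ^ 2) + 2 * (400 * ‖x - y‖ / t) ^ 2 :=
          abs_bumpProfile_second_difference_le (div_nonneg (h.nonneg x) (sq_nonneg t)) hy hy'
            hsecond
      _ = 320400 * (‖x - y‖ ^ 2 / t ^ 2) := by ring
      _ ≤ 400000 * (‖x - y‖ ^ 2 / t ^ 2) := by gcongr; norm_num
  · rw [min_one_sq_div_of_ge ht hxy.le, abs_le]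
    constructor <;>
      linarith [h.quasiBump_le_one t x, h.quasiBump_le_one t y, h.quasiBump_le_one t y',
        quasiBump_nonneg q t x, quasiBump_nonneg q t y, quasiBump_nonneg q t y']

lemma isQuasiDist_norm_sub_sq {x₀ : F} (hx₀ : ‖x₀‖ < R) :
    IsQuasiDist R (fun y => ‖y - x₀‖ ^ 2) x₀ (R - ‖x₀‖) where
  pos := sub_pos.2 hx₀
  continuous := by fun_prop
  apply_center := by simp
  half_sq_le x := by linarith [sq_nonneg ‖x - x₀‖]
  abs_sub_le x y _ _ := by
    rw [Real.sqrt_sq (norm_nonneg _)]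
    have hsub : |‖x - x₀‖ - ‖y - x₀‖| ≤ ‖x - y‖ := by
      simpa only [sub_sub_sub_cancel_right] using abs_norm_sub_norm_le (x - x₀) (y - x₀)
    rw [sq_sub_sq, abs_mul, abs_of_nonneg (show 0 ≤ ‖x - x₀‖ + ‖y - x₀‖ by positivity)]
    calc (‖x - x₀‖ + ‖y - x₀‖) * |‖x - x₀‖ - ‖y - x₀‖|
        ≤ (2 * (‖x - x₀‖ + ‖x - y‖)) * ‖x - y‖ := by
          gcongr
          linarith [(abs_le.1 hsub).1, norm_nonneg (x - y)]
      _ ≤ 200 * ‖x - y‖ * (‖x - x₀‖ + ‖x - y‖) := by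
          nlinarith [mul_nonneg (norm_nonneg (x - y)) (norm_nonneg (x - x₀)),
            mul_self_nonneg ‖x - y‖]
  abs_second_difference_le x z _ _ := by
    rw [add_sub_right_comm, sub_right_comm x z, norm_add_sq_real (x - x₀) z,
      norm_sub_sq_real (x - x₀) z, abs_le]
    constructor <;> linarith [sq_nonneg ‖z‖]
  abs_second_difference_lineReflection_le x y hq _ hxR := by
    have : ‖x - x₀‖ ≤ R - ‖x₀‖ := (abs_le_of_sq_le_sq' hq (sub_nonneg.2 hx₀.le)).2
    linarith [norm_sub_norm_le x x₀]

end QuasiBump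

lemma IsQuasiDist.finiteEnergy_quasiBump {q : E → ℝ} {x₀ : E} {t₀ t : ℝ}
    (h : IsQuasiDist R q x₀ t₀) (hs0 : 0 < s) (hs1 : s < 1) (ht : 0 < t) (htt₀ : t ≤ t₀) :
    FiniteEnergy s R (quasiBump q t) :=
  FiniteEnergy.of_bounded_of_sq_le hs0 hs1 (h.continuous_quasiBump t).measurable ht
    (h.abs_quasiBump_le_one t) (h.sq_quasiBump_sub_le ht htt₀)

lemma IsQuasiDist.abs_energyForm_quasiBump_le {q : E → ℝ} {x₀ : E} {t₀ t : ℝ}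
    (h : IsQuasiDist R q x₀ t₀) (hs0 : 0 < s) (hs1 : s < 1) (ht : 0 < t) (htt₀ : t ≤ t₀)
    {φ : E → ℝ} (hφ : FiniteEnergy s R φ) (hφi : Integrable φ) (hφ0 : ∀ x, 0 ≤ φ x)
    (hsupp : ∀ x, φ x ≠ 0 → q x ≤ t ^ 2) :
    |energyForm s R (quasiBump q t) φ| ≤
      400000 * levyMass E s * t ^ (-(2 * s)) * ∫ x, φ x := by
  refine (abs_energyForm_le_of_second_difference hs0 hs1
    (h.finiteEnergy_quasiBump hs0 hs1 ht htt₀) (h.abs_quasiBump_le_one t) hφ hφi hφ0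
    (c := 400000) (by norm_num) ht ?_ ?_).trans_eq (by ring)
  · intro x hx _ y
    refine h.abs_quasiBump_second_difference_le ht htt₀ (hsupp x hx) ?_ fun hxy => ?_
    · rw [two_smul, show x - (x + x - y) = -(x - y) by abel, norm_neg]
    · have hq := h.abs_second_difference_le x (x - y) ((hsupp x hx).trans (by gcongr)) hxy
      rwa [show x + (x - y) = (2 : ℝ) • x - y by rw [two_smul]; abel, sub_sub_cancel,
        sub_right_comm] at hq
  · intro x hx hxR y hyR
    exact h.abs_quasiBump_second_difference_le ht htt₀ (hsupp x hx) (norm_sub_lineReflection x y)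
      fun hxy => h.abs_second_difference_lineReflection_le x y ((hsupp x hx).trans (by gcongr))
        hxy hxR hyR

/-! ### Quasi-distance at the boundary -/

section BoundaryQuasiDist

variable {F : Type*} [NormedAddCommGroup F] [InnerProductSpace ℝ F] {x₀ : F}

lemma abs_mul_le_mul {a b A B : ℝ} (ha : |a| ≤ A) (hb : |b| ≤ B) : |a * b| ≤ A * B := by
  rw [abs_mul]
  exact mul_le_mul ha hb (abs_nonneg _) ((abs_nonneg _).trans ha)

/-- The squared norm relative to the sphere of radius `R`, on which it vanishes. -/
def sphereDefect (R : ℝ) (y : F) : ℝ := (‖y‖ ^ 2 - R ^ 2) / R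

/-- The signed distance of `y` to the tangent hyperplane at `x₀` of the sphere of radius `R`. -/
def tangentDefect (R : ℝ) (x₀ y : F) : ℝ := (R ^ 2 - inner ℝ y x₀) / R

/-- The quasi-distance at a point `x₀` of the sphere of radius `R`. The correction added to the
squared distance makes the normal derivative vanish along the sphere, which is what the reflection
through the line `ℝ x` needs when `x` is just outside the ball. -/
def boundaryQuasiDist (R : ℝ) (x₀ y : F) : ℝ :=
  ‖y - x₀‖ ^ 2 + sphereDefect R y ^ 2 / 2 - sphereDefect R y * tangentDefect R x₀ y

lemma tangentDefect_sub (R : ℝ) (x₀ x y : F) :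
    tangentDefect R x₀ x - tangentDefect R x₀ y = inner ℝ (y - x) x₀ / R := by
  rw [tangentDefect, tangentDefect, ← sub_div, inner_sub_left, sub_sub_sub_cancel_left]

lemma abs_inner_div_le (hR : 0 < R) {c : ℝ} {x y : F} (hx : ‖x‖ ≤ c * R) :
    |inner ℝ y x / R| ≤ c * ‖y‖ := by
  rw [abs_div, abs_of_pos hR, div_le_iff₀ hR]
  calc |inner ℝ y x| ≤ ‖y‖ * ‖x‖ := abs_real_inner_le_norm _ _
    _ ≤ ‖y‖ * (c * R) := by gcongr
    _ = c * ‖y‖ * R := by ring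

lemma abs_tangentDefect_sub_le (hR : 0 < R) (hx₀ : ‖x₀‖ = R) (x y : F) :
    |tangentDefect R x₀ x - tangentDefect R x₀ y| ≤ ‖x - y‖ := by
  rw [tangentDefect_sub, norm_sub_rev, ← one_mul ‖y - x‖]
  exact abs_inner_div_le hR (by rw [hx₀, one_mul])

lemma abs_tangentDefect_le (hR : 0 < R) (hx₀ : ‖x₀‖ = R) (y : F) :
    |tangentDefect R x₀ y| ≤ ‖y - x₀‖ := by
  have hcenter : tangentDefect R x₀ x₀ = 0 := by
    rw [tangentDefect, real_inner_self_eq_norm_sq, hx₀, sub_self, zero_div]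
  simpa only [hcenter, sub_zero] using abs_tangentDefect_sub_le hR hx₀ y x₀

lemma half_sq_le_boundaryQuasiDist (hR : 0 < R) (hx₀ : ‖x₀‖ = R) (x : F) :
    1 / 2 * ‖x - x₀‖ ^ 2 ≤ boundaryQuasiDist R x₀ x := by
  have htangent : tangentDefect R x₀ x ^ 2 ≤ ‖x - x₀‖ ^ 2 :=
    sq_le_sq' (abs_le.1 (abs_tangentDefect_le hR hx₀ x)).1
      (abs_le.1 (abs_tangentDefect_le hR hx₀ x)).2
  rw [boundaryQuasiDist]
  linarith [sq_nonneg (sphereDefect R x - tangentDefect R x₀ x)]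

lemma norm_sub_le_of_boundaryQuasiDist_le (hR : 0 < R) (hx₀ : ‖x₀‖ = R) {x : F}
    (hx : boundaryQuasiDist R x₀ x ≤ R ^ 2) : ‖x - x₀‖ ≤ 2 * R := by
  have hlow := half_sq_le_boundaryQuasiDist hR hx₀ x
  exact (abs_le_of_sq_le_sq' (by linarith [sq_nonneg R]) (by linarith)).2

lemma norm_le_of_boundaryQuasiDist_le (hR : 0 < R) (hx₀ : ‖x₀‖ = R) {x : F}
    (hx : boundaryQuasiDist R x₀ x ≤ R ^ 2) : ‖x‖ ≤ 3 * R := by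
  linarith [norm_sub_le_of_boundaryQuasiDist_le hR hx₀ hx, norm_sub_norm_le x x₀]

lemma abs_sphereDefect_sub_le {G : Type*} [NormedAddCommGroup G] (hR : 0 < R) {c : ℝ} {x y : G}
    (hc : ‖x‖ + ‖y‖ ≤ c * R) :
    |sphereDefect R x - sphereDefect R y| ≤ c * ‖x - y‖ := by
  rw [sphereDefect, sphereDefect, ← sub_div, abs_div, abs_of_pos hR, div_le_iff₀ hR,
    sub_sub_sub_cancel_right, sq_sub_sq]
  calc |(‖x‖ + ‖y‖) * (‖x‖ - ‖y‖)| ≤ c * R * ‖x - y‖ :=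
        abs_mul_le_mul (by rwa [abs_of_nonneg (by positivity)]) (abs_norm_sub_norm_le x y)
    _ = c * ‖x - y‖ * R := by ring

lemma abs_sphereDefect_le (hR : 0 < R) (hx₀ : ‖x₀‖ = R) {x : F}
    (hx : boundaryQuasiDist R x₀ x ≤ R ^ 2) : |sphereDefect R x| ≤ 4 * ‖x - x₀‖ := by
  have hcenter : sphereDefect R x₀ = 0 := by rw [sphereDefect, hx₀, sub_self, zero_div]
  have hnorm := norm_le_of_boundaryQuasiDist_le hR hx₀ hx
  simpa only [hcenter, sub_zero] using
    abs_sphereDefect_sub_le (y := x₀) hR (show ‖x‖ + ‖x₀‖ ≤ 4 * R by linarith)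

lemma abs_defect_formula_sub_le {X X' α α' ε ε' r Q : ℝ} (hr : 0 ≤ r) (hX0 : 0 ≤ X)
    (hXQ : X ≤ 2 * Q) (hX : |X ^ 2 - X' ^ 2| ≤ r * (2 * X + r)) (hα : |α| ≤ 4 * X)
    (hαα' : |α - α'| ≤ 7 * r) (hε : |ε| ≤ X) (hεε' : |ε - ε'| ≤ r) :
    |(X ^ 2 + α ^ 2 / 2 - α * ε) - (X' ^ 2 + α' ^ 2 / 2 - α' * ε')| ≤ 200 * r * (Q + r) := by
  have hexpand : (X ^ 2 + α ^ 2 / 2 - α * ε) - (X' ^ 2 + α' ^ 2 / 2 - α' * ε') =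
      (X ^ 2 - X' ^ 2) + ((α - α') * α - (α - α') * (α - α') / 2) -
        (α * (ε - ε') + ((α - α') * ε - (α - α') * (ε - ε'))) := by ring
  have h₁ := abs_mul_le_mul hαα' hα
  have h₂ := abs_mul_le_mul hαα' hαα'
  have h₃ := abs_mul_le_mul hα hεε'
  have h₄ := abs_mul_le_mul hαα' hε
  have h₅ := abs_mul_le_mul hαα' hεε'
  have h₆ : r * X ≤ r * (2 * Q) := by gcongr
  have h₇ : 0 ≤ r * X := by positivity
  have h₈ : 0 ≤ r * r := by positivity
  rw [hexpand]
  rw [abs_le] at *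
  constructor <;> nlinarith

lemma abs_boundaryQuasiDist_sub_le (hR : 0 < R) (hx₀ : ‖x₀‖ = R) {x y : F}
    (hx : boundaryQuasiDist R x₀ x ≤ R ^ 2) (hxy : ‖x - y‖ ≤ R) :
    |boundaryQuasiDist R x₀ x - boundaryQuasiDist R x₀ y| ≤
      200 * ‖x - y‖ * (√(boundaryQuasiDist R x₀ x) + ‖x - y‖) := by
  have hnorm := norm_le_of_boundaryQuasiDist_le hR hx₀ hx
  have hy : ‖y‖ ≤ ‖x‖ + ‖x - y‖ := by linarith [norm_sub_norm_le y x, norm_sub_rev x y]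
  refine abs_defect_formula_sub_le (norm_nonneg _) (norm_nonneg _) ?_ ?_
    (abs_sphereDefect_le hR hx₀ hx) (abs_sphereDefect_sub_le hR (by linarith))
    (abs_tangentDefect_le hR hx₀ x) (abs_tangentDefect_sub_le hR hx₀ x y)
  · have hsqrt : ‖x - x₀‖ / 2 ≤ √(boundaryQuasiDist R x₀ x) := by
      refine Real.le_sqrt_of_sq_le ?_
      linarith [half_sq_le_boundaryQuasiDist hR hx₀ x, sq_nonneg ‖x - x₀‖,
        div_pow ‖x - x₀‖ 2 2]
    linarith
  · have hsub : |‖x - x₀‖ - ‖y - x₀‖| ≤ ‖x - y‖ := by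
      simpa only [sub_sub_sub_cancel_right] using abs_norm_sub_norm_le (x - x₀) (y - x₀)
    rw [sq_sub_sq, mul_comm]
    refine abs_mul_le_mul hsub ?_
    rw [abs_of_nonneg (by positivity)]
    linarith [(abs_le.1 hsub).1]

lemma abs_defect_formula_second_difference_le {X₁ X₂ X α ε p ρ w r : ℝ} (hR : 0 < R)
    (hX : 2 * X ^ 2 - X₁ ^ 2 - X₂ ^ 2 = -2 * r ^ 2) (hα : |α| ≤ 8 * R) (hε : |ε| ≤ 2 * R)
    (hp : |p| ≤ 6 * r) (hρ : ρ = r ^ 2 / R) (hr : 0 ≤ r) (hrR : r ≤ R) (hw : |w| ≤ r) :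
    |2 * (X ^ 2 + α ^ 2 / 2 - α * ε) -
      (X₁ ^ 2 + (α + p + ρ) ^ 2 / 2 - (α + p + ρ) * (ε - w)) -
      (X₂ ^ 2 + (α - p + ρ) ^ 2 / 2 - (α - p + ρ) * (ε + w))| ≤ 200 * r ^ 2 := by
  have hexpand : 2 * (X ^ 2 + α ^ 2 / 2 - α * ε) -
      (X₁ ^ 2 + (α + p + ρ) ^ 2 / 2 - (α + p + ρ) * (ε - w)) -
      (X₂ ^ 2 + (α - p + ρ) ^ 2 / 2 - (α - p + ρ) * (ε + w)) =
      (2 * X ^ 2 - X₁ ^ 2 - X₂ ^ 2) - (p * p + ρ * ρ + 2 * (α * ρ)) -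
        (2 * (p * w) - 2 * (ε * ρ)) := by ring
  have hρ0 : 0 ≤ ρ := by rw [hρ]; positivity
  have : R * ρ = r ^ 2 := by rw [hρ]; field_simp
  have hρ_abs : |ρ| ≤ ρ := (abs_of_nonneg hρ0).le
  have hρr : ρ ≤ r := by rw [hρ, div_le_iff₀ hR, sq]; gcongr
  have h₁ := abs_mul_le_mul hp hp
  have h₂ : ρ * ρ ≤ r * r := by gcongr
  have h₃ := abs_mul_le_mul hα hρ_abs
  have h₄ := abs_mul_le_mul hp hw
  have h₅ := abs_mul_le_mul hε hρ_abs
  have h₆ := mul_nonneg hρ0 hρ0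
  rw [hexpand, hX]
  rw [abs_le] at *
  constructor <;> nlinarith

lemma abs_boundaryQuasiDist_second_difference_le (hR : 0 < R) (hx₀ : ‖x₀‖ = R) {x z : F}
    (hx : boundaryQuasiDist R x₀ x ≤ R ^ 2) (hz : ‖z‖ ≤ R) :
    |2 * boundaryQuasiDist R x₀ x - boundaryQuasiDist R x₀ (x + z) -
      boundaryQuasiDist R x₀ (x - z)| ≤ 200 * ‖z‖ ^ 2 := by
  have hdist := norm_sub_le_of_boundaryQuasiDist_le hR hx₀ hx
  have hsphere_add : sphereDefect R (x + z) =
      sphereDefect R x + 2 * (inner ℝ z x / R) + ‖z‖ ^ 2 / R := by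
    rw [sphereDefect, sphereDefect, norm_add_sq_real, real_inner_comm]
    ring
  have hsphere_sub : sphereDefect R (x - z) =
      sphereDefect R x - 2 * (inner ℝ z x / R) + ‖z‖ ^ 2 / R := by
    rw [sphereDefect, sphereDefect, norm_sub_sq_real, real_inner_comm]
    ring
  have htangent_add : tangentDefect R x₀ (x + z) = tangentDefect R x₀ x - inner ℝ z x₀ / R := by
    rw [tangentDefect, tangentDefect, inner_add_left]
    ring
  have htangent_sub : tangentDefect R x₀ (x - z) = tangentDefect R x₀ x + inner ℝ z x₀ / R := by
    rw [tangentDefect, tangentDefect, inner_sub_left]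
    ring
  rw [boundaryQuasiDist, boundaryQuasiDist, boundaryQuasiDist, hsphere_add, hsphere_sub,
    htangent_add, htangent_sub]
  refine abs_defect_formula_second_difference_le hR ?_
    ((abs_sphereDefect_le hR hx₀ hx).trans (by linarith))
    ((abs_tangentDefect_le hR hx₀ x).trans hdist) ?_ rfl (norm_nonneg _) hz ?_
  · rw [add_sub_right_comm, sub_right_comm x z, norm_add_sq_real,
      norm_sub_sq_real (x - x₀) z]
    ring
  · rw [abs_mul, abs_two]
    linarith [abs_inner_div_le (y := z) hR (norm_le_of_boundaryQuasiDist_le hR hx₀ hx)]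
  · simpa only [one_mul] using
      abs_inner_div_le (c := 1) (y := z) hR (by rw [hx₀, one_mul])

/-- Here `n` measures the tangential displacement; by `hn` it is of first order in `α - β`, and the
first-order terms of the left-hand side then cancel. -/
lemma abs_defect_formula_reflected_difference_le {α β ε n r : ℝ} (hR : 0 < R) (hr : 0 ≤ r)
    (hα : 0 ≤ α) (hαR : α ≤ 3 * R) (hβ : β ≤ 0) (hβR : -R ≤ β) (hαβ : α - β ≤ 3 * r)
    (hε : |ε| ≤ 2 * R) (hεR : |ε - R| ≤ 3 * R) (hn : 2 * n * (R + α) = α - β + r ^ 2 / R) :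
    |2 * R * (α - β) + α ^ 2 - β ^ 2 - 2 * ε * (α - β) + 2 * n * (2 * R - β) * (ε - R)| ≤
      200 * r ^ 2 := by
  have hpos : 0 < R + α := by linarith
  have hcancel : (2 * R * (α - β) + α ^ 2 - β ^ 2 - 2 * ε * (α - β) +
      2 * n * (2 * R - β) * (ε - R)) * (R + α) =
      (α - β) * (3 * R * α + 2 * R * β + α * α + α * β - 2 * (α * ε) - β * ε) +
        (r ^ 2 / R) * ((2 * R - β) * (ε - R)) := by
    linear_combination (2 * R - β) * (ε - R) * hn
  set Δ := α - β with hΔ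
  have hΔ0 : 0 ≤ Δ := by linarith
  have hαΔ : |α| ≤ Δ := by rw [abs_of_nonneg hα]; linarith
  have hβΔ : |β| ≤ Δ := by rw [abs_of_nonpos hβ]; linarith
  have hα3 : |α| ≤ 3 * R := by rwa [abs_of_nonneg hα]
  have hfactor : |3 * R * α + 2 * R * β + α * α + α * β - 2 * (α * ε) - β * ε| ≤ 17 * R * Δ := by
    have h₁ := abs_mul_le_mul hα3 hαΔ
    have h₂ := abs_mul_le_mul hα3 hβΔ
    have h₃ := abs_mul_le_mul hαΔ hε
    have h₄ := abs_mul_le_mul hβΔ hε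
    have : 0 ≤ R * α := by positivity
    have : R * α ≤ R * Δ := by gcongr; linarith
    have : R * β ≤ 0 := mul_nonpos_of_nonneg_of_nonpos hR.le hβ
    have : R * Δ = R * α - R * β := by rw [hΔ]; ring
    rw [abs_le] at *
    constructor <;> linarith
  have hmain := abs_mul_le_mul (abs_of_nonneg hΔ0).le hfactor
  have hrest := abs_mul_le_mul (abs_of_nonneg (show 0 ≤ r ^ 2 / R by positivity)).le
    (abs_mul_le_mul (show |2 * R - β| ≤ 3 * R by rw [abs_of_nonneg] <;> linarith) hεR)
  have hrest_eq : r ^ 2 / R * (3 * R * (3 * R)) = 9 * (R * r ^ 2) := by field_simp; norm_num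
  have hmain_le : Δ * (17 * R * Δ) ≤ 153 * (R * r ^ 2) := by
    calc Δ * (17 * R * Δ) ≤ 3 * r * (17 * R * (3 * r)) := by gcongr
      _ = 153 * (R * r ^ 2) := by ring
  refine le_of_mul_le_mul_right ?_ hpos
  rw [← abs_of_pos hpos, ← abs_mul, abs_of_pos hpos, hcancel]
  have : 0 ≤ R * r ^ 2 := by positivity
  have : 0 ≤ α * r ^ 2 := by positivity
  linarith [abs_add_le (Δ * (3 * R * α + 2 * R * β + α * α + α * β - 2 * (α * ε) - β * ε))
    (r ^ 2 / R * ((2 * R - β) * (ε - R)))]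

lemma lineReflection_apply (x y : F) :
    lineReflection x y = (2 * (inner ℝ x y / ‖x‖ ^ 2)) • x - y := by
  rw [lineReflection, Submodule.reflection_apply, Submodule.starProjection_singleton]
  simp only [RCLike.ofReal_real_eq_id, id]
  rw [two_smul, two_mul, add_smul]

lemma boundaryQuasiDist_reflected_difference (hR : R ≠ 0) (hx₀ : ‖x₀‖ = R) {x : F} (hx : x ≠ 0)
    (y : F) :
    2 * boundaryQuasiDist R x₀ x - boundaryQuasiDist R x₀ y -
        boundaryQuasiDist R x₀ (lineReflection x y) =
      2 * R * (sphereDefect R x - sphereDefect R y) + sphereDefect R x ^ 2 -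
        sphereDefect R y ^ 2 -
        2 * tangentDefect R x₀ x * (sphereDefect R x - sphereDefect R y) +
        2 * (1 - inner ℝ x y / ‖x‖ ^ 2) * (2 * R - sphereDefect R y) *
          (tangentDefect R x₀ x - R) := by
  have hx' : ‖x‖ ≠ 0 := norm_ne_zero_iff.2 hx
  have hsq (z : F) : ‖z - x₀‖ ^ 2 = ‖z‖ ^ 2 - 2 * inner ℝ z x₀ + R ^ 2 := by
    rw [norm_sub_sq_real, hx₀]
  have hinner : inner ℝ (lineReflection x y) x₀ =
      2 * (inner ℝ x y / ‖x‖ ^ 2) * inner ℝ x x₀ - inner ℝ y x₀ := by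
    rw [lineReflection_apply, inner_sub_left, real_inner_smul_left]
  simp only [boundaryQuasiDist, sphereDefect, tangentDefect, hsq, hinner,
    LinearIsometryEquiv.norm_map]
  field_simp
  ring

lemma abs_boundaryQuasiDist_reflected_difference_le (hR : 0 < R) (hx₀ : ‖x₀‖ = R) {x y : F}
    (hx : boundaryQuasiDist R x₀ x ≤ R ^ 2) (hxy : ‖x - y‖ ≤ R) (hxR : R < ‖x‖) (hyR : ‖y‖ ≤ R) :
    |2 * boundaryQuasiDist R x₀ x - boundaryQuasiDist R x₀ y -
      boundaryQuasiDist R x₀ (lineReflection x y)| ≤ 200 * ‖x - y‖ ^ 2 := by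
  have hx0 : 0 < ‖x‖ := hR.trans hxR
  have hnorm := norm_sub_norm_le x y
  rw [boundaryQuasiDist_reflected_difference hR.ne' hx₀ (norm_pos_iff.1 hx0)]
  refine abs_defect_formula_reflected_difference_le hR (norm_nonneg _) ?_ ?_ ?_ ?_ ?_
    ((abs_tangentDefect_le hR hx₀ x).trans (norm_sub_le_of_boundaryQuasiDist_le hR hx₀ hx)) ?_ ?_
  · exact div_nonneg (by nlinarith) hR.le
  · rw [sphereDefect, div_le_iff₀ hR]
    nlinarith
  · exact div_nonpos_of_nonpos_of_nonneg (by nlinarith [norm_nonneg y]) hR.le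
  · rw [sphereDefect, le_div_iff₀ hR]
    linarith [sq_nonneg ‖y‖]
  · exact (le_abs_self _).trans (abs_sphereDefect_sub_le hR (by linarith))
  · have htangent : tangentDefect R x₀ x - R = -(inner ℝ x₀ x / R) := by
      rw [tangentDefect, real_inner_comm]
      field_simp
      ring
    rw [htangent, abs_neg]
    exact (abs_inner_div_le hR (norm_le_of_boundaryQuasiDist_le hR hx₀ hx)).trans_eq (by rw [hx₀])
  · have hinner : inner ℝ x y = (‖x‖ ^ 2 + ‖y‖ ^ 2 - ‖x - y‖ ^ 2) / 2 := by
      linarith [norm_sub_sq_real x y]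
    rw [hinner, sphereDefect, sphereDefect]
    field_simp
    ring

lemma isQuasiDist_boundaryQuasiDist (hR : 0 < R) (hx₀ : ‖x₀‖ = R) :
    IsQuasiDist R (boundaryQuasiDist R x₀) x₀ R where
  pos := hR
  continuous := by
    unfold boundaryQuasiDist sphereDefect tangentDefect
    fun_prop
  apply_center := by simp [boundaryQuasiDist, sphereDefect, hx₀]
  half_sq_le := half_sq_le_boundaryQuasiDist hR hx₀
  abs_sub_le _ _ := abs_boundaryQuasiDist_sub_le hR hx₀
  abs_second_difference_le _ _ := abs_boundaryQuasiDist_second_difference_le hR hx₀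
  abs_second_difference_lineReflection_le _ _ :=
    abs_boundaryQuasiDist_reflected_difference_le hR hx₀

lemma exists_isQuasiDist (hR : 0 < R) (hx₀ : ‖x₀‖ ≤ R) : ∃ q t₀, IsQuasiDist R q x₀ t₀ := by
  rcases hx₀.lt_or_eq with h | h
  · exact ⟨_, _, isQuasiDist_norm_sub_sq h⟩
  · exact ⟨_, _, isQuasiDist_boundaryQuasiDist hR h⟩

end BoundaryQuasiDist

/-! ### Oscillation decay -/

/-- The barrier for the oscillation decay around the centre of a quasi-distance `q`: the level `A`,
lowered by `θ` within distance `t` and raised by `D` beyond distance `T`. -/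
def barrier {α : Type*} (q : α → ℝ) (A θ D T t : ℝ) (x : α) : ℝ :=
  A - θ * quasiBump q t x + D * (1 - quasiBump q T x)

section Barrier

variable {F : Type*} [NormedAddCommGroup F] [InnerProductSpace ℝ F] {q u : F → ℝ} {x₀ : F}
  {t₀ A θ D T t M : ℝ}

lemma IsQuasiDist.sub_le_barrier (h : IsQuasiDist R q x₀ t₀) (hθ : 0 ≤ θ) (hD : 0 ≤ D) (x : F) :
    A - θ ≤ barrier q A θ D T t x := by
  have hdip : θ * quasiBump q t x ≤ θ := mul_le_of_le_one_right hθ (h.quasiBump_le_one t x)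
  have hrise : 0 ≤ D * (1 - quasiBump q T x) :=
    mul_nonneg hD (sub_nonneg.2 (h.quasiBump_le_one T x))
  unfold barrier
  linarith

lemma IsQuasiDist.barrier_center (h : IsQuasiDist R q x₀ t₀) :
    barrier q A θ D T t x₀ = A - θ := by
  simp [barrier, quasiBump, bumpProfile, h.apply_center]

lemma IsQuasiDist.continuous_barrier (h : IsQuasiDist R q x₀ t₀) :
    Continuous (barrier q A θ D T t) := by
  have := h.continuous_quasiBump t
  have := h.continuous_quasiBump T
  unfold barrier
  fun_prop

lemma IsQuasiDist.norm_sub_lt_two_mul (h : IsQuasiDist R q x₀ t₀) (ht : 0 < t) {x : F}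
    (hx : q x < t ^ 2) : ‖x - x₀‖ < 2 * t := by
  refine lt_of_pow_lt_pow_left₀ 2 (by positivity) ?_
  nlinarith [h.half_sq_le x, sq_nonneg ‖x - x₀‖]

lemma IsQuasiDist.le_barrier (h : IsQuasiDist R q x₀ t₀) (hT : 0 < T) (ht : 0 < t)
    (hM : ∀ x, |u x| ≤ M) (hA : ∀ x ∈ ball x₀ (2 * T), u x ≤ A) (hD : M + |A| ≤ D) {x : F}
    (hx : t ^ 2 ≤ q x) : u x ≤ barrier q A θ D T t x := by
  have hux := (abs_le.1 (hM x)).2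
  rw [barrier, quasiBump_eq_zero ht hx]
  rcases le_or_gt (T ^ 2) (q x) with hTx | hTx
  · rw [quasiBump_eq_zero hT hTx]
    linarith [neg_abs_le A]
  · have huA : u x ≤ A := hA x (by rw [mem_ball_iff_norm]; exact h.norm_sub_lt_two_mul hT hTx)
    have hD0 : 0 ≤ D := by linarith [(abs_nonneg _).trans (hM x), abs_nonneg A]
    linarith [mul_nonneg hD0 (sub_nonneg.2 (h.quasiBump_le_one T x))]

end Barrier

lemma barrier_eq {α : Type*} (q : α → ℝ) (A θ D T t : ℝ) : barrier q A θ D T t =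
    (fun _ => A + D) - (θ • quasiBump q t + D • quasiBump q T) := by
  ext x
  simp only [barrier, Pi.sub_apply, Pi.add_apply, Pi.smul_apply, smul_eq_mul]
  ring

section EnergyBarrier

variable {q : E → ℝ} {x₀ : E} {t₀ A θ D T t : ℝ}

lemma IsQuasiDist.finiteEnergy_barrier (h : IsQuasiDist R q x₀ t₀) (hs0 : 0 < s) (hs1 : s < 1)
    (hT : 0 < T) (hTt₀ : T ≤ t₀) (ht : 0 < t) (htt₀ : t ≤ t₀) :
    FiniteEnergy s R (barrier q A θ D T t) := by
  rw [barrier_eq]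
  exact (FiniteEnergy.const _).sub (((h.finiteEnergy_quasiBump hs0 hs1 ht htt₀).smul θ).add
    ((h.finiteEnergy_quasiBump hs0 hs1 hT hTt₀).smul D))

lemma IsQuasiDist.neg_energyForm_barrier_le (h : IsQuasiDist R q x₀ t₀) (hs0 : 0 < s)
    (hs1 : s < 1) (hTt₀ : T ≤ t₀) (ht : 0 < t) (htT : t ≤ T) (hθ : 0 ≤ θ) (hD : 0 ≤ D)
    {φ : E → ℝ} (hφ : FiniteEnergy s R φ) (hφi : Integrable φ) (hφ0 : ∀ x, 0 ≤ φ x)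
    (hsupp : ∀ x, φ x ≠ 0 → q x ≤ t ^ 2) :
    -energyForm s R (barrier q A θ D T t) φ ≤
      (θ * (400000 * levyMass E s * t ^ (-(2 * s))) +
        D * (400000 * levyMass E s * T ^ (-(2 * s)))) * ∫ x, φ x := by
  have hT : 0 < T := ht.trans_le htT
  have hbt := h.finiteEnergy_quasiBump hs0 hs1 ht (htT.trans hTt₀)
  have hbT := h.finiteEnergy_quasiBump hs0 hs1 hT hTt₀
  have hsmall := le_of_abs_le
    (h.abs_energyForm_quasiBump_le hs0 hs1 ht (htT.trans hTt₀) hφ hφi hφ0 hsupp)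
  have hlarge := le_of_abs_le (h.abs_energyForm_quasiBump_le hs0 hs1 hT hTt₀ hφ hφi hφ0
    fun x hx => (hsupp x hx).trans (by gcongr))
  rw [barrier_eq, energyForm_sub_left (FiniteEnergy.const _) ((hbt.smul θ).add (hbT.smul D)) hφ,
    energyForm_const_left, energyForm_add_left (hbt.smul θ) (hbT.smul D) hφ, energyForm_smul_left,
    energyForm_smul_left]
  linarith [mul_le_mul_of_nonneg_left hsmall hθ, mul_le_mul_of_nonneg_left hlarge hD]

end EnergyBarrier

lemma integrable_max_zero_of_le {w : E → ℝ} (hw : Measurable w) {K r : ℝ} {x₀ : E}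
    (hwK : ∀ x, w x ≤ K) (hsupp : ∀ x, 0 < w x → ‖x - x₀‖ ≤ r) :
    Integrable (fun x => max (w x) 0) := by
  have hball : IntegrableOn (fun x => max (w x) 0) (closedBall x₀ r) := by
    refine Integrable.mono' (g := fun _ => max K 0)
      (integrableOn_const (isCompact_closedBall _ _).measure_lt_top.ne)
      (hw.max measurable_const).aestronglyMeasurable (Eventually.of_forall fun x => ?_)
    rw [Real.norm_of_nonneg (le_max_right _ _)]
    exact max_le_max (hwK x) le_rfl
  rw [← integrableOn_univ]
  refine hball.of_forall_sdiff_eq_zero MeasurableSet.univ fun x hx => ?_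
  refine max_eq_right (not_lt.1 fun hpos => hx.2 ?_)
  rw [mem_closedBall_iff_norm]
  exact hsupp x hpos

lemma mul_integral_max_zero_le_energyForm (hs0 : 0 < s) {w : E → ℝ} (hw : FiniteEnergy s R w)
    (hwi : Integrable fun x => max (w x) 0) {x₀ : E} {t j g : ℝ} (ht : 0 < t) (hj : 0 < j)
    (hsupp : ∀ x, 0 < w x → ‖x - x₀‖ ≤ 2 * t) (hg : 0 ≤ g)
    (hvol : ENNReal.ofReal g ≤ volume {y ∈ closedBall (0 : E) R ∩ ball x₀ t | w y ≤ -j}) :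
    g * (j * ((3 * t) ^ (finrank ℝ E + 2 * s))⁻¹) * ∫ x, max (w x) 0 ≤
      energyForm s R w (fun x => max (w x) 0) := by
  set κ := j * ((3 * t) ^ (finrank ℝ E + 2 * s))⁻¹
  have hκ : 0 ≤ κ := by positivity
  have hmax : ∀ x, max (w x) 0 ≠ 0 → 0 < w x := fun x hx =>
    lt_of_not_ge fun hwx => hx (max_eq_right hwx)
  have hpoint : ∀ x y, 0 < w x → y ∈ ball x₀ t → w y ≤ -j →
      κ * max (w x) 0 ≤ (w x - w y) * (max (w x) 0 - max (w y) 0) * fracKernel s (x - y) := by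
    intro x y hx hy hwy
    have hne : x - y ≠ 0 := sub_ne_zero.2 fun hxy => by subst hxy; linarith
    have hdist : ‖x - y‖ ≤ 3 * t := by
      rw [mem_ball_iff_norm] at hy
      have := norm_sub_le_norm_sub_add_norm_sub x x₀ y
      rw [norm_sub_rev x₀ y] at this
      linarith [hsupp x hx]
    have hgap : j ≤ w x - w y := by linarith
    have hker := le_fracKernel_of_norm_le hs0 hne hdist
    rw [max_eq_left hx.le, max_eq_right (by linarith : w y ≤ 0), sub_zero]
    calc κ * w x = j * w x * ((3 * t) ^ (finrank ℝ E + 2 * s))⁻¹ := by ring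
      _ ≤ (w x - w y) * w x * fracKernel s (x - y) := by
        have : 0 ≤ (w x - w y) * w x := mul_nonneg (hj.le.trans hgap) hx.le
        gcongr
  rw [mul_assoc, ← integral_const_mul]
  refine mul_integral_fst_le_setIntegral_prod (measurableSet_pairRegion R)
    (S := {q | 0 < w q.1 ∧ q.2 ∈ closedBall (0 : E) R ∩ ball x₀ t ∧ w q.2 ≤ -j}) ?_ ?_
    (hw.integrableOn_energy hw.max_zero) (fun q _ => ?_) (hwi.const_mul κ)
    (fun x => mul_nonneg hκ (le_max_right _ _)) ?_ hg fun x hx => ?_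
  · exact (measurableSet_lt measurable_const (hw.measurable.comp measurable_fst)).inter
      ((measurable_snd (measurableSet_closedBall.inter measurableSet_ball)).inter
        (measurableSet_le (hw.measurable.comp measurable_snd) measurable_const))
  · exact fun q hq => Or.inr (by simpa using hq.2.1.1)
  · have := sub_mul_excess_sub_nonneg (w q.1) (w q.2) 0
    simp only [sub_zero] at this
    exact mul_nonneg this (fracKernel_nonneg _ _)
  · exact fun q hq => hpoint q.1 q.2 hq.1 hq.2.1.2 hq.2.2
  · exact hvol.trans (measure_mono fun y hy => ⟨hmax x (right_ne_zero_of_mul hx), hy⟩)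

lemma FiniteEnergy.abs_setIntegral_mul_le {u φ : E → ℝ} (hu : FiniteEnergy s R u)
    (hφ : FiniteEnergy s R φ) (hφi : Integrable φ) (hφ0 : ∀ x, 0 ≤ φ x) {M : ℝ}
    (hM : ∀ x, |u x| ≤ M) : |∫ x in closedBall 0 R, u x * φ x| ≤ M * ∫ x, φ x := by
  have hM0 : 0 ≤ M := (abs_nonneg _).trans (hM 0)
  calc |∫ x in closedBall 0 R, u x * φ x| ≤ ∫ x in closedBall 0 R, |u x * φ x| :=
        abs_integral_le_integral_abs
    _ ≤ ∫ x in closedBall 0 R, M * φ x := by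
        refine setIntegral_mono_on (hu.integrableOn_mul hφ).abs
          (hφi.const_mul M).integrableOn measurableSet_closedBall fun x _ => ?_
        rw [abs_mul, abs_of_nonneg (hφ0 x)]
        exact mul_le_mul_of_nonneg_right (hM x) (hφ0 x)
    _ ≤ ∫ x, M * φ x := setIntegral_le_integral (hφi.const_mul M)
        (Eventually.of_forall fun x => mul_nonneg hM0 (hφ0 x))
    _ = M * ∫ x, φ x := integral_const_mul _ _

section OscillationDecay

variable {q u : E → ℝ} {x₀ : E} {t₀ A θ D T t M J g : ℝ}

lemma IsWeakSolution.energyForm_sub_barrier_le (h : IsQuasiDist R q x₀ t₀) (hs0 : 0 < s)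
    (hs1 : s < 1) (hu : IsWeakSolution s R lam u) (hM : ∀ x, |u x| ≤ M) (hTt₀ : T ≤ t₀)
    (ht : 0 < t) (htT : t ≤ T) (hθ : 0 ≤ θ) (hD : 0 ≤ D) {φ : E → ℝ} (hφ : FiniteEnergy s R φ)
    (hφi : Integrable φ) (hφ0 : ∀ x, 0 ≤ φ x) (hsupp : ∀ x, φ x ≠ 0 → q x ≤ t ^ 2) :
    energyForm s R (u - barrier q A θ D T t) φ ≤
      (|lam| * M + θ * (400000 * levyMass E s * t ^ (-(2 * s))) +
        D * (400000 * levyMass E s * T ^ (-(2 * s)))) * ∫ x, φ x := by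
  have hsource : lam * ∫ x in closedBall 0 R, u x * φ x ≤ |lam| * (M * ∫ x, φ x) := by
    refine (le_abs_self _).trans ?_
    rw [abs_mul]
    gcongr
    exact hu.finiteEnergy.abs_setIntegral_mul_le hφ hφi hφ0 hM
  have hbarrier := h.neg_energyForm_barrier_le (A := A) hs0 hs1 hTt₀ ht htT hθ hD hφ hφi hφ0 hsupp
  rw [energyForm_sub_left hu.finiteEnergy (h.finiteEnergy_barrier hs0 hs1 (ht.trans_le htT) hTt₀ ht
    (htT.trans hTt₀)) hφ, hu.energyForm_eq φ hφ]
  linarith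

/-- The excess of `u` over the barrier lives within distance `2t` of the centre; it interacts there
with the set `{u ≤ A - J}`, of measure at least `g`, and must vanish if this interaction outweighs
the error terms. -/
lemma IsWeakSolution.ae_le_barrier (h : IsQuasiDist R q x₀ t₀) (hs0 : 0 < s) (hs1 : s < 1)
    (hu : IsWeakSolution s R lam u) (hM : ∀ x, |u x| ≤ M) (hA : ∀ x ∈ ball x₀ (2 * T), u x ≤ A)
    (hTt₀ : T ≤ t₀) (ht : 0 < t) (htT : t ≤ T) (hθ : 0 < θ) (hθJ : θ ≤ J / 2)
    (hD : M + |A| ≤ D) (hg : 0 ≤ g)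
    (hvol : ENNReal.ofReal g ≤ volume {y ∈ closedBall (0 : E) R ∩ ball x₀ t | u y ≤ A - J})
    (hlt : |lam| * M + θ * (400000 * levyMass E s * t ^ (-(2 * s))) +
        D * (400000 * levyMass E s * T ^ (-(2 * s))) <
      g * (J / 2 * ((3 * t) ^ (finrank ℝ E + 2 * s))⁻¹)) :
    ∀ᵐ x, u x ≤ barrier q A θ D T t x := by
  have hT : 0 < T := ht.trans_le htT
  have hD0 : 0 ≤ D := by linarith [(abs_nonneg _).trans (hM 0), abs_nonneg A]
  set w : E → ℝ := u - barrier q A θ D T t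
  have hwE : FiniteEnergy s R w :=
    hu.finiteEnergy.sub (h.finiteEnergy_barrier hs0 hs1 hT hTt₀ ht (htT.trans hTt₀))
  have hfloor : ∀ x, w x ≤ u x - (A - θ) := fun x =>
    sub_le_sub_left (h.sub_le_barrier hθ.le hD0 x) (u x)
  have hsupp : ∀ x, 0 < w x → q x < t ^ 2 := fun x hx =>
    lt_of_not_ge fun hqx => not_lt.2 (h.le_barrier hT ht hM hA hD hqx) (sub_pos.1 hx)
  have hsupp' : ∀ x, 0 < w x → ‖x - x₀‖ ≤ 2 * t := fun x hx =>
    (h.norm_sub_lt_two_mul ht (hsupp x hx)).le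
  have hwi : Integrable fun x => max (w x) 0 :=
    integrable_max_zero_of_le hwE.measurable (K := M - (A - θ))
      (fun x => (hfloor x).trans (by linarith [(abs_le.1 (hM x)).2])) hsupp'
  have hexcess : 0 ≤ fun x => max (w x) 0 := fun x => le_max_right _ _
  have hlower := mul_integral_max_zero_le_energyForm hs0 hwE hwi ht (half_pos (by linarith : 0 < J))
    hsupp' hg (hvol.trans (measure_mono fun y hy => ⟨hy.1, by linarith [hfloor y, hy.2]⟩))
  have hupper := hu.energyForm_sub_barrier_le h hs0 hs1 hM (A := A) hTt₀ ht htT hθ.le hD0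
    hwE.max_zero hwi (fun x => le_max_right _ _) fun x hx =>
      (hsupp x (lt_of_not_ge fun hwx => hx (max_eq_right hwx))).le
  have hzero : ∫ x, max (w x) 0 = 0 := by
    refine le_antisymm (not_lt.1 fun hpos => ?_) (integral_nonneg hexcess)
    exact absurd (hlower.trans hupper) (not_le.2 (mul_lt_mul_of_pos_right hlt hpos))
  filter_upwards [(integral_eq_zero_iff_of_nonneg hexcess hwi).1 hzero] with x hx
  exact sub_nonpos.1 (max_eq_right_iff.1 hx)

end OscillationDecay

/-! ### Continuity of weak solutions -/

section EssentialLimit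

variable {X : Type*} [TopologicalSpace X] [MeasurableSpace X] {μ : Measure X}

lemma eventually_nhds_inf_ae_iff {x : X} {P : X → Prop} :
    (∀ᶠ y in 𝓝 x ⊓ ae μ, P y) ↔ ∃ U ∈ 𝓝 x, ∀ᵐ y ∂μ, y ∈ U → P y := by
  refine mem_inf_iff_superset.trans ⟨?_, ?_⟩
  · rintro ⟨U, hU, V, hV, hUV⟩
    exact ⟨U, hU, mem_of_superset hV fun y hyV hyU => hUV ⟨hyU, hyV⟩⟩
  · rintro ⟨U, hU, hP⟩
    exact ⟨U, hU, _, hP, fun y hy => hy.2 hy.1⟩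

lemma neBot_nhds_inf_ae [μ.IsOpenPosMeasure] (x : X) : (𝓝 x ⊓ ae μ).NeBot :=
  inf_neBot_iff.2 fun {U} hU {V} hV => by
    by_contra hUV
    refine (Measure.measure_pos_of_mem_nhds μ hU).ne' (measure_mono_null (fun y hy => ?_) hV)
    exact fun hyV => hUV ⟨y, hy, hyV⟩

lemma ae_of_forall_eventually_nhds_inf_ae [SecondCountableTopology X] {P : X → Prop}
    (h : ∀ x, ∀ᶠ y in 𝓝 x ⊓ ae μ, P y) : ∀ᵐ y ∂μ, P y := by
  refine ae_iff.2 (measure_null_of_locally_null _ fun x _ => ?_)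
  obtain ⟨U, hU, hP⟩ := eventually_nhds_inf_ae_iff.1 (h x)
  refine ⟨_, inter_mem_nhdsWithin _ hU, measure_mono_null ?_ (ae_iff.1 hP)⟩
  exact fun y hy hUP => hy.1 (hUP hy.2)

variable {Y : Type*} {u c : X → Y}

lemma continuous_of_tendsto_nhds_inf_ae [TopologicalSpace Y] [RegularSpace Y]
    [μ.IsOpenPosMeasure] (h : ∀ x, Tendsto u (𝓝 x ⊓ ae μ) (𝓝 (c x))) : Continuous c := by
  refine continuous_iff_continuousAt.2 fun x => (closed_nhds_basis (c x)).tendsto_right_iff.2 ?_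
  rintro V ⟨hV, hVclosed⟩
  obtain ⟨U, hU, huV⟩ := eventually_nhds_inf_ae_iff.1 ((h x).eventually_mem hV)
  filter_upwards [eventually_mem_nhds_iff.2 hU] with y hy
  have := neBot_nhds_inf_ae (μ := μ) y
  exact hVclosed.mem_of_tendsto (h y) (eventually_nhds_inf_ae_iff.2 ⟨U, hy, huV⟩)

lemma ae_eq_of_tendsto_nhds_inf_ae [SecondCountableTopology X] [MetricSpace Y]
    [μ.IsOpenPosMeasure] (h : ∀ x, Tendsto u (𝓝 x ⊓ ae μ) (𝓝 (c x))) : u =ᵐ[μ] c := by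
  have hc : Continuous c := continuous_of_tendsto_nhds_inf_ae h
  have hn : ∀ n : ℕ, ∀ᵐ y ∂μ, dist (u y) (c y) < 1 / ((n : ℝ) + 1) := fun n => by
    refine ae_of_forall_eventually_nhds_inf_ae fun x => ?_
    have hdist := (h x).dist ((hc.tendsto x).mono_left inf_le_left)
    rw [dist_self] at hdist
    exact hdist.eventually_lt_const Nat.one_div_pos_of_nat
  filter_upwards [ae_all_iff.2 hn] with y hy
  exact dist_le_zero.1 (ge_of_tendsto' tendsto_one_div_add_atTop_nhds_zero_nat fun n => (hy n).le)

end EssentialLimit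

lemma IsWeakSolution.exists_ae_eq_forall {u : E → ℝ} (hu : IsWeakSolution s R lam u)
    {P : E → ℝ → Prop} (h : ∀ᵐ x, P x (u x)) {c : ℝ} (hc : ∀ x, P x c) :
    ∃ v, IsWeakSolution s R lam v ∧ u =ᵐ[volume] v ∧ ∀ x, P x (v x) := by
  classical
  obtain ⟨S, hS, hSm, hSP⟩ := h.exists_measurable_mem
  have huv : u =ᵐ[volume] S.piecewise u fun _ => c := by
    filter_upwards [hS] with x hx
    rw [piecewise_eq_of_mem _ _ _ hx]
  refine ⟨_, hu.congr (hu.finiteEnergy.measurable.piecewise hSm measurable_const) huv, huv,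
    fun x => ?_⟩
  by_cases hx : x ∈ S
  · rw [piecewise_eq_of_mem _ _ _ hx]
    exact hSP x hx
  · rw [piecewise_eq_of_notMem _ _ _ hx]
    exact hc x

variable (E s) in
/-- The coefficient of `J * t ^ (-2s)` in the interaction of the excess over a barrier with a
sublevel set filling half of the part of the ball within distance `t`. -/
def interactionConst : ℝ :=
  unitBallVolume E / (4 * 2 ^ finrank ℝ E * 3 ^ (finrank ℝ E + 2 * s))

lemma interactionConst_pos : 0 < interactionConst E s := by
  have := unitBallVolume_pos (E := E)
  unfold interactionConst
  positivity

variable (E s) in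
lemma half_volume_mul_kernel_eq {t : ℝ} (ht : 0 < t) (J : ℝ) :
    1 / 2 * ((t / 2) ^ finrank ℝ E * unitBallVolume E) *
      (J / 2 * ((3 * t) ^ (finrank ℝ E + 2 * s))⁻¹) =
        interactionConst E s * J * t ^ (-(2 * s)) := by
  have : t ^ (2 * s) ≠ 0 := (Real.rpow_pos_of_pos ht _).ne'
  rw [Real.mul_rpow (by norm_num) ht.le, Real.rpow_add ht, Real.rpow_natCast,
    Real.rpow_neg ht.le, interactionConst, div_pow]
  field_simp
  ring

lemma eventually_lt_interactionConst_mul_rpow (hs0 : 0 < s) {J : ℝ} (hJ : 0 < J) (K : ℝ) :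
    ∀ᶠ t in 𝓝[>] (0 : ℝ), K < interactionConst E s * J / 2 * t ^ (-(2 * s)) := by
  have := interactionConst_pos (E := E) (s := s)
  exact ((tendsto_rpow_neg_nhdsGT_zero (by linarith)).const_mul_atTop
    (by positivity)).eventually_gt_atTop K

lemma ofReal_le_volume_of_half_le (hR : 0 < R) {x₀ : E} (hx₀ : ‖x₀‖ ≤ R) {t : ℝ} (ht : 0 < t)
    (htR : t ≤ R) {S : Set E}
    (hS : volume (closedBall (0 : E) R ∩ ball x₀ t) ≤ 2 * volume S) :
    ENNReal.ofReal (1 / 2 * ((t / 2) ^ finrank ℝ E * unitBallVolume E)) ≤ volume S := by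
  have h := (ofReal_le_volume_closedBall_inter_ball hR hx₀ ht htR).trans hS
  rw [show (t / 2) ^ finrank ℝ E * unitBallVolume E =
      2 * (1 / 2 * ((t / 2) ^ finrank ℝ E * unitBallVolume E)) by ring,
    ENNReal.ofReal_mul zero_le_two, ENNReal.ofReal_ofNat] at h
  exact (ENNReal.mul_le_mul_iff_right (by norm_num) (by norm_num)).1 h

section OscillationDecay

variable {u : E → ℝ} {x₀ : E} {A J M T κ : ℝ}

lemma IsWeakSolution.eventually_le_sub_mul_of_forall (hs0 : 0 < s) (hs1 : s < 1) (hR : 0 < R)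
    (hκ : 0 < κ) (hκ2 : κ ≤ 1 / 2)
    (hκc : κ * (400000 * levyMass E s) ≤ interactionConst E s / 2)
    (hu : IsWeakSolution s R lam u) (hx₀ : ‖x₀‖ ≤ R) (hM : ∀ x, |u x| ≤ M)
    (hA : ∀ᶠ x in 𝓝 x₀, u x ≤ A) (hJ : 0 < J)
    (hfreq : ∃ᶠ t in 𝓝[>] (0 : ℝ), volume (closedBall (0 : E) R ∩ ball x₀ t) ≤
      2 * volume {y ∈ closedBall (0 : E) R ∩ ball x₀ t | u y ≤ A - J}) :
    ∀ᶠ x in 𝓝 x₀ ⊓ ae volume, u x ≤ A - κ / 2 * J := by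
  obtain ⟨q, t₀, h⟩ := exists_isQuasiDist hR hx₀
  obtain ⟨ρ, hρ, hAρ⟩ := eventually_nhds_iff_ball.1 hA
  set T := min t₀ (ρ / 2)
  have hT : 0 < T := lt_min h.pos (half_pos hρ)
  have hTρ : 2 * T ≤ ρ := by linarith [min_le_right t₀ (ρ / 2)]
  have hradius : ∀ᶠ t in 𝓝[>] (0 : ℝ), t ∈ Ioc 0 T ∩ Ioc 0 R :=
    inter_mem (Ioc_mem_nhdsGT hT) (Ioc_mem_nhdsGT hR)
  obtain ⟨t, hhalf, ⟨⟨ht, htT⟩, -, htR⟩, hsmall⟩ := (hfreq.and_eventually (hradius.and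
    (eventually_lt_interactionConst_mul_rpow (E := E) hs0 hJ (|lam| * M +
      (M + |A| + J) * (400000 * levyMass E s * T ^ (-(2 * s))))))).exists
  have hdip : κ * J * (400000 * levyMass E s * t ^ (-(2 * s))) ≤
      interactionConst E s * J / 2 * t ^ (-(2 * s)) := by
    have := mul_le_mul_of_nonneg_right hκc (by positivity : 0 ≤ J * t ^ (-(2 * s)))
    linarith
  have hbarrier := hu.ae_le_barrier (θ := κ * J) (D := M + |A| + J) h hs0 hs1 hM
    (fun x hx => hAρ x (ball_subset_ball hTρ hx)) (min_le_left _ _) ht htT (by positivity)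
    (by nlinarith) (by linarith)
    (mul_nonneg one_half_pos.le (mul_nonneg (by positivity) unitBallVolume_pos.le))
    (ofReal_le_volume_of_half_le hR hx₀ ht htR hhalf)
    (by rw [half_volume_mul_kernel_eq E s ht]; linarith)
  have hcenter : barrier q A (κ * J) (M + |A| + J) T t x₀ < A - κ / 2 * J := by
    rw [h.barrier_center]
    linarith [mul_pos hκ hJ]
  filter_upwards [hbarrier.filter_mono inf_le_right,
    (h.continuous_barrier.continuousAt.eventually_lt_const hcenter).filter_mono inf_le_left]
    with x hx hlt
  exact hx.trans hlt.le

variable (E s) in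
lemma exists_pos_le_half_mul_levyMass_le :
    ∃ κ : ℝ, 0 < κ ∧ κ ≤ 1 / 2 ∧ κ * (400000 * levyMass E s) ≤ interactionConst E s / 2 := by
  have hC : 0 ≤ 400000 * levyMass E s := mul_nonneg (by norm_num) levyMass_nonneg
  have hc := interactionConst_pos (E := E) (s := s)
  set C := 400000 * levyMass E s
  refine ⟨min (1 / 2) (interactionConst E s / (2 * (C + 1))), by positivity, min_le_left _ _, ?_⟩
  calc _ ≤ interactionConst E s / (2 * (C + 1)) * (C + 1) := by
        gcongr
        · exact min_le_right _ _
        · linarith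
    _ = interactionConst E s / 2 := by field_simp

variable (E lam) in
lemma exists_eventually_le_sub_mul (hs0 : 0 < s) (hs1 : s < 1) (hR : 0 < R) :
    ∃ κ : ℝ, 0 < κ ∧ ∀ (u : E → ℝ) (x₀ : E) (A J : ℝ), IsWeakSolution s R lam u → ‖x₀‖ ≤ R →
      (∀ᶠ x in 𝓝 x₀ ⊓ ae volume, u x ≤ A) → 0 < J →
      (∃ᶠ t in 𝓝[>] (0 : ℝ), volume (closedBall (0 : E) R ∩ ball x₀ t) ≤
        2 * volume {y ∈ closedBall (0 : E) R ∩ ball x₀ t | u y ≤ A - J}) →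
      ∀ᶠ x in 𝓝 x₀ ⊓ ae volume, u x ≤ A - κ * J := by
  obtain ⟨κ, hκ, hκ2, hκc⟩ := exists_pos_le_half_mul_levyMass_le E s
  refine ⟨κ / 2, half_pos hκ, fun u x₀ A J hu hx₀ hA hJ hfreq => ?_⟩
  obtain ⟨M, -, hM⟩ := hu.exists_ae_abs_le_univ hs0 hR
  obtain ⟨U, hU, hUA⟩ := eventually_nhds_inf_ae_iff.1 hA
  obtain ⟨v, hv, huv, hP⟩ := hu.exists_ae_eq_forall
    (P := fun x r => |r| ≤ max M |A| ∧ (x ∈ U → r ≤ A)) (c := -|A|)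
    (by filter_upwards [hM, hUA] with x hx hxA using ⟨hx.trans (le_max_left _ _), hxA⟩)
    (fun x => ⟨by simp, fun _ => neg_abs_le A⟩)
  have hvol : ∀ t, volume {y ∈ closedBall (0 : E) R ∩ ball x₀ t | u y ≤ A - J} =
      volume {y ∈ closedBall (0 : E) R ∩ ball x₀ t | v y ≤ A - J} := fun t => by
    refine measure_congr (eventuallyEq_set.2 ?_)
    filter_upwards [huv] with y hy
    rw [hy]
  simp only [hvol] at hfreq
  filter_upwards [hv.eventually_le_sub_mul_of_forall hs0 hs1 hR hκ hκ2 hκc hx₀ (fun x => (hP x).1)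
    (mem_of_superset hU fun x hx => (hP x).2 hx) hJ hfreq, huv.filter_mono inf_le_right]
    with x hx hxuv
  rwa [hxuv]

end OscillationDecay

section EssentialLimsup

variable {u : E → ℝ} {x₀ : E}

lemma IsWeakSolution.isBoundedUnder_le (hs0 : 0 < s) (hR : 0 < R) (hu : IsWeakSolution s R lam u) :
    IsBoundedUnder (· ≤ ·) (𝓝 x₀ ⊓ ae volume) u := by
  obtain ⟨M, -, hM⟩ := hu.exists_ae_abs_le_univ hs0 hR
  exact isBoundedUnder_of_eventually_le
    (hM.filter_mono inf_le_right |>.mono fun x hx => (abs_le.1 hx).2)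

lemma IsWeakSolution.isCoboundedUnder_le (hs0 : 0 < s) (hR : 0 < R)
    (hu : IsWeakSolution s R lam u) : IsCoboundedUnder (· ≤ ·) (𝓝 x₀ ⊓ ae volume) u := by
  have := neBot_nhds_inf_ae (μ := (volume : Measure E)) x₀
  obtain ⟨M, -, hM⟩ := hu.exists_ae_abs_le_univ hs0 hR
  exact IsBoundedUnder.isCoboundedUnder_le (isBoundedUnder_of_eventually_ge
    (hM.filter_mono inf_le_right |>.mono fun x hx => (abs_le.1 hx).1))

lemma IsWeakSolution.eventually_two_mul_volume_sublevel_lt (hs0 : 0 < s) (hs1 : s < 1)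
    (hR : 0 < R) (hu : IsWeakSolution s R lam u) (hx₀ : ‖x₀‖ ≤ R) {a : ℝ}
    (ha : a < limsup u (𝓝 x₀ ⊓ ae volume)) :
    ∀ᶠ t in 𝓝[>] (0 : ℝ), 2 * volume {y ∈ closedBall (0 : E) R ∩ ball x₀ t | u y ≤ a} <
      volume (closedBall (0 : E) R ∩ ball x₀ t) := by
  obtain ⟨κ, hκ, hdecay⟩ := exists_eventually_le_sub_mul E lam hs0 hs1 hR
  set L := limsup u (𝓝 x₀ ⊓ ae volume)
  have : 0 < L - a := sub_pos.2 ha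
  set ε := κ * (L - a) / 2
  have hε : 0 < ε := by positivity
  have hle : ∀ᶠ x in 𝓝 x₀ ⊓ ae volume, u x ≤ L + ε :=
    (eventually_lt_of_limsup_lt (by linarith : L < L + ε) (hu.isBoundedUnder_le hs0 hR)).mono
      fun _ => le_of_lt
  by_contra hfreq
  have himproved := hdecay u x₀ (L + ε) (L - a + ε) hu hx₀ hle (by linarith) (by
    rw [show L + ε - (L - a + ε) = a by ring]
    simpa only [not_eventually, not_lt] using hfreq)
  have : L ≤ L + ε - κ * (L - a + ε) :=
    limsup_le_of_le (hu.isCoboundedUnder_le hs0 hR) himproved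
  linarith [mul_pos hκ hε, show κ * (L - a) = 2 * ε by ring]

lemma IsWeakSolution.limsup_add_limsup_neg_nonpos (hs0 : 0 < s) (hs1 : s < 1) (hR : 0 < R)
    (hu : IsWeakSolution s R lam u) (hx₀ : ‖x₀‖ ≤ R) :
    limsup u (𝓝 x₀ ⊓ ae volume) + limsup (-u) (𝓝 x₀ ⊓ ae volume) ≤ 0 := by
  by_contra! hpos
  set L := limsup u (𝓝 x₀ ⊓ ae volume)
  set L' := limsup (-u) (𝓝 x₀ ⊓ ae volume)
  obtain ⟨t, hlow, hhigh⟩ :=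
    ((hu.eventually_two_mul_volume_sublevel_lt hs0 hs1 hR hx₀
      (a := (L - L') / 2) (by linarith : (L - L') / 2 < L)).and
    (hu.neg.eventually_two_mul_volume_sublevel_lt hs0 hs1 hR hx₀
      (a := (L' - L) / 2) (by linarith : (L' - L) / 2 < L'))).exists
  set B := closedBall (0 : E) R ∩ ball x₀ t
  have hcover : B ⊆ {y ∈ B | u y ≤ (L - L') / 2} ∪ {y ∈ B | (-u) y ≤ (L' - L) / 2} :=
    fun y hy => (le_total (u y) ((L - L') / 2)).imp (⟨hy, ·⟩) fun h =>
      ⟨hy, by rw [Pi.neg_apply]; linarith⟩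
  have hsum := (measure_mono hcover).trans (measure_union_le (μ := volume) _ _)
  refine absurd (mul_le_mul_right hsum 2) (not_le.2 ?_)
  rw [mul_add, two_mul (volume B)]
  exact ENNReal.add_lt_add hlow hhigh

lemma IsWeakSolution.exists_tendsto_of_norm_le (hs0 : 0 < s) (hs1 : s < 1) (hR : 0 < R)
    (hu : IsWeakSolution s R lam u) (hx₀ : ‖x₀‖ ≤ R) :
    ∃ c, Tendsto u (𝓝 x₀ ⊓ ae volume) (𝓝 c) := by
  have hsum := hu.limsup_add_limsup_neg_nonpos hs0 hs1 hR hx₀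
  refine ⟨limsup u (𝓝 x₀ ⊓ ae volume), tendsto_order.2 ⟨fun a ha => ?_, fun a ha =>
    eventually_lt_of_limsup_lt ha (hu.isBoundedUnder_le hs0 hR)⟩⟩
  have := eventually_lt_of_limsup_lt (by linarith : limsup (-u) (𝓝 x₀ ⊓ ae volume) < -a)
    (hu.neg.isBoundedUnder_le hs0 hR)
  filter_upwards [this] with x hx
  exact neg_lt_neg_iff.1 hx

lemma IsWeakSolution.tendsto_kernelAverage (hs0 : 0 < s) (hR : 0 < R)
    (hu : IsWeakSolution s R lam u) (hx₀ : R < ‖x₀‖) :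
    Tendsto u (𝓝 x₀ ⊓ ae volume) (𝓝 (kernelAverage s R u x₀)) := by
  refine ((hu.finiteEnergy.continuousAt_kernelAverage hs0 hR hx₀).tendsto.mono_left
    inf_le_left).congr' ?_
  filter_upwards [(hu.ae_eq_kernelAverage hs0 hR).filter_mono inf_le_right,
    (continuous_norm.continuousAt.eventually_const_lt hx₀).filter_mono inf_le_left] with x hx hRx
  exact (hx hRx).symm

lemma IsWeakSolution.exists_continuous (hs0 : 0 < s) (hs1 : s < 1) (hR : 0 < R)
    (hu : IsWeakSolution s R lam u) : ∃ v : E → ℝ, Continuous v ∧ u =ᵐ[volume] v := by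
  have hlim : ∀ x, ∃ c, Tendsto u (𝓝 x ⊓ ae volume) (𝓝 c) := fun x => by
    rcases le_or_gt ‖x‖ R with hx | hx
    · exact hu.exists_tendsto_of_norm_le hs0 hs1 hR hx
    · exact ⟨_, hu.tendsto_kernelAverage hs0 hR hx⟩
  choose v hv using hlim
  exact ⟨v, continuous_of_tendsto_nhds_inf_ae hv, ae_eq_of_tendsto_nhds_inf_ae hv⟩

end EssentialLimsup

/-! ### Odd functions on the half space -/

section Reflection

variable {F : Type*} [NormedAddCommGroup F] [InnerProductSpace ℝ F] {e : F}

/-- The reflection across the hyperplane through `0` orthogonal to `e`. -/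
def hyperplaneReflection (e : F) : F ≃ₗᵢ[ℝ] F := (Submodule.span ℝ {e})ᗮ.reflection

lemma hyperplaneReflection_apply (he : ‖e‖ = 1) (x : F) :
    hyperplaneReflection e x = x - (2 * inner ℝ x e) • e := by
  rw [hyperplaneReflection, Submodule.reflection_orthogonal_apply,
    Submodule.reflection_singleton_apply, he, real_inner_comm, neg_sub]
  simp [two_smul, two_mul, add_smul]

lemma hyperplaneReflection_hyperplaneReflection (e x : F) :
    hyperplaneReflection e (hyperplaneReflection e x) = x :=
  Submodule.reflection_reflection _ _

lemma inner_hyperplaneReflection (he : ‖e‖ = 1) (x : F) :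
    inner ℝ (hyperplaneReflection e x) e = -inner ℝ x e := by
  rw [hyperplaneReflection_apply he, inner_sub_left, real_inner_smul_left,
    real_inner_self_eq_norm_sq, he]
  ring

lemma norm_sub_hyperplaneReflection_sq (he : ‖e‖ = 1) (x y : F) :
    ‖x - hyperplaneReflection e y‖ ^ 2 = ‖x - y‖ ^ 2 + 4 * (inner ℝ x e * inner ℝ y e) := by
  rw [hyperplaneReflection_apply he, ← sub_add, norm_add_sq_real, norm_smul, he, inner_smul_right,
    inner_sub_left, Real.norm_eq_abs, mul_one, sq_abs]
  ring

lemma hyperplaneReflection_of_inner_eq_zero (he : ‖e‖ = 1) {x : F} (h : inner ℝ x e = 0) :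
    hyperplaneReflection e x = x := by
  rw [hyperplaneReflection_apply he, h, mul_zero, zero_smul, sub_zero]

lemma eq_zero_of_inner_eq_zero (he : ‖e‖ = 1) {v : F → ℝ}
    (hodd : ∀ x, v (hyperplaneReflection e x) = -v x) {x : F} (hx : inner ℝ x e = 0) : v x = 0 :=
  self_eq_neg.1 (by rw [← hodd, hyperplaneReflection_of_inner_eq_zero he hx])

lemma fracKernel_sub_hyperplaneReflection_le (hs : 0 < s) (he : ‖e‖ = 1) {x y : F} (hne : x ≠ y)
    (h : 0 ≤ inner ℝ x e * inner ℝ y e) :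
    fracKernel s (x - hyperplaneReflection e y) ≤ fracKernel s (x - y) := by
  refine fracKernel_le_of_norm_le hs (sub_ne_zero.2 hne) (le_of_sq_le_sq ?_ (norm_nonneg _))
  rw [norm_sub_hyperplaneReflection_sq he]
  linarith

lemma fracKernel_sub_hyperplaneReflection_lt (hs : 0 < s) (he : ‖e‖ = 1) {x y : F} (hne : x ≠ y)
    (h : 0 < inner ℝ x e * inner ℝ y e) :
    fracKernel s (x - hyperplaneReflection e y) < fracKernel s (x - y) := by
  refine fracKernel_lt_of_norm_lt hs (sub_ne_zero.2 hne)
    (lt_of_pow_lt_pow_left₀ 2 (norm_nonneg _) ?_)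
  rw [norm_sub_hyperplaneReflection_sq he]
  linarith

lemma le_fracKernel_sub_hyperplaneReflection (hs : 0 < s) (he : ‖e‖ = 1) {x y : F}
    (hne : x ≠ hyperplaneReflection e y) (h : inner ℝ x e * inner ℝ y e ≤ 0) :
    fracKernel s (x - y) ≤ fracKernel s (x - hyperplaneReflection e y) := by
  refine fracKernel_le_of_norm_le hs (sub_ne_zero.2 hne) (le_of_sq_le_sq ?_ (norm_nonneg _))
  rw [norm_sub_hyperplaneReflection_sq he]
  linarith

/-- The integrand of the energy form plus its image under the map `(x, y) ↦ (x, g y)`, for functions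
which are odd with respect to the isometry `g`. -/
def symmEnergyDensity (s : ℝ) (g : F ≃ₗᵢ[ℝ] F) (u v : F → ℝ) (q : F × F) : ℝ :=
  (u q.1 - u q.2) * (v q.1 - v q.2) * fracKernel s (q.1 - q.2) +
    (u q.1 + u q.2) * (v q.1 + v q.2) * fracKernel s (q.1 - g q.2)

lemma symmEnergyDensity_of_mul_eq_zero (g : F ≃ₗᵢ[ℝ] F) {u v : F → ℝ} (huv : ∀ x, u x * v x = 0)
    (x y : F) : symmEnergyDensity s g u v (x, y) =
      (u x * v y + u y * v x) * (fracKernel s (x - g y) - fracKernel s (x - y)) := by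
  unfold symmEnergyDensity
  linear_combination (fracKernel s (x - g y) + fracKernel s (x - y)) * (huv x + huv y)

lemma symmEnergyDensity_nonpos (hs : 0 < s) (he : ‖e‖ = 1) {u v : F → ℝ}
    (hu : ∀ x, u (hyperplaneReflection e x) = -u x)
    (hv : ∀ x, v (hyperplaneReflection e x) = -v x) (huv : ∀ x, u x * v x = 0)
    (hu_sign : ∀ x, 0 ≤ inner ℝ x e * u x) (hv_sign : ∀ x, 0 ≤ inner ℝ x e * v x) (q : F × F) :
    symmEnergyDensity s (hyperplaneReflection e) u v q ≤ 0 := by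
  obtain ⟨x, y⟩ := q
  rw [symmEnergyDensity_of_mul_eq_zero _ huv]
  have hprod : 0 ≤ (inner ℝ x e * inner ℝ y e) * (u x * v y + u y * v x) := by
    linarith [mul_nonneg (hu_sign x) (hv_sign y), mul_nonneg (hu_sign y) (hv_sign x)]
  rcases lt_trichotomy (inner ℝ x e * inner ℝ y e) 0 with h | h | h
  · have hcross := nonpos_of_mul_nonneg_right hprod h
    by_cases hxy : x = hyperplaneReflection e y
    · rw [hxy, hu, hv, show -u y * v y + u y * -v y = -2 * (u y * v y) by ring, huv]
      simp
    · exact mul_nonpos_of_nonpos_of_nonneg hcross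
        (sub_nonneg.2 (le_fracKernel_sub_hyperplaneReflection hs he hxy h.le))
  · have hnorm : ‖x - hyperplaneReflection e y‖ = ‖x - y‖ := by
      rw [← sq_eq_sq₀ (norm_nonneg _) (norm_nonneg _), norm_sub_hyperplaneReflection_sq he, h]
      ring
    rw [fracKernel_congr_norm s hnorm, sub_self, mul_zero]
  · have hcross := nonneg_of_mul_nonneg_right hprod h
    by_cases hxy : x = y
    · rw [hxy, huv, add_zero, zero_mul]
    · exact mul_nonpos_of_nonneg_of_nonpos hcross
        (sub_nonpos.2 (fracKernel_sub_hyperplaneReflection_le hs he hxy h.le))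

/-- The positive part of `v` on the half space `0 < ⟪x, e⟫`, and its negative part (as a nonpositive
function) on the complement. For odd `v` this is again odd, and is the competitor showing that odd
first eigenfunctions do not change sign on the half space. -/
def halfPosPart (e : F) (v : F → ℝ) (x : F) : ℝ :=
  if 0 < inner ℝ x e then max (v x) 0 else min (v x) 0

lemma halfPosPart_of_pos {v : F → ℝ} {x : F} (hx : 0 < inner ℝ x e) :
    halfPosPart e v x = max (v x) 0 :=
  if_pos hx

lemma halfPosPart_of_nonpos {v : F → ℝ} {x : F} (hx : inner ℝ x e ≤ 0) :
    halfPosPart e v x = min (v x) 0 :=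
  if_neg hx.not_gt

lemma halfPosPart_odd (he : ‖e‖ = 1) {v : F → ℝ}
    (hodd : ∀ x, v (hyperplaneReflection e x) = -v x) (x : F) :
    halfPosPart e v (hyperplaneReflection e x) = -halfPosPart e v x := by
  have hinner := inner_hyperplaneReflection he x
  rcases lt_trichotomy (inner ℝ x e) 0 with h | h | h
  · rw [halfPosPart_of_pos (by linarith), halfPosPart_of_nonpos h.le, hodd, ← max_neg_neg, neg_zero]
  · rw [hyperplaneReflection_of_inner_eq_zero he h, halfPosPart_of_nonpos h.le,
      eq_zero_of_inner_eq_zero he hodd h, min_self, neg_zero]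
  · rw [halfPosPart_of_nonpos (by linarith), halfPosPart_of_pos h, hodd, ← min_neg_neg, neg_zero]

lemma mul_halfPosPart (e : F) (v : F → ℝ) (x : F) :
    v x * halfPosPart e v x = halfPosPart e v x ^ 2 := by
  unfold halfPosPart
  split_ifs
  · rcases max_choice (v x) 0 with h | h <;> rw [h] <;> ring
  · rcases min_choice (v x) 0 with h | h <;> rw [h] <;> ring

lemma halfPosPart_sub_mul_halfPosPart (e : F) (v : F → ℝ) (x : F) :
    (halfPosPart e v - v) x * halfPosPart e v x = 0 := by
  rw [Pi.sub_apply, sub_mul, mul_halfPosPart]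
  ring

lemma halfPosPart_sq_le (e : F) (v : F → ℝ) (x : F) : halfPosPart e v x ^ 2 ≤ v x ^ 2 := by
  nlinarith [mul_halfPosPart e v x, sq_nonneg (v x - halfPosPart e v x)]

lemma inner_mul_halfPosPart_nonneg (e : F) (v : F → ℝ) (x : F) :
    0 ≤ inner ℝ x e * halfPosPart e v x := by
  rcases lt_or_ge 0 (inner ℝ x e) with h | h
  · rw [halfPosPart_of_pos h]
    exact mul_nonneg h.le (le_max_right _ _)
  · rw [halfPosPart_of_nonpos h]
    exact mul_nonneg_of_nonpos_of_nonpos h (min_le_right _ _)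

lemma inner_mul_halfPosPart_sub_nonneg (e : F) (v : F → ℝ) (x : F) :
    0 ≤ inner ℝ x e * (halfPosPart e v - v) x := by
  rw [Pi.sub_apply]
  rcases lt_or_ge 0 (inner ℝ x e) with h | h
  · rw [halfPosPart_of_pos h]
    exact mul_nonneg h.le (sub_nonneg.2 (le_max_left _ _))
  · rw [halfPosPart_of_nonpos h]
    exact mul_nonneg_of_nonpos_of_nonpos h (sub_nonpos.2 (min_le_left _ _))

lemma halfPosPart_sub_odd (he : ‖e‖ = 1) {v : F → ℝ}
    (hodd : ∀ x, v (hyperplaneReflection e x) = -v x) (x : F) :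
    (halfPosPart e v - v) (hyperplaneReflection e x) = -(halfPosPart e v - v) x := by
  rw [Pi.sub_apply, Pi.sub_apply, halfPosPart_odd he hodd, hodd]
  ring

lemma symmEnergyDensity_halfPosPart_sub_nonpos (hs : 0 < s) (he : ‖e‖ = 1) {v : F → ℝ}
    (hodd : ∀ x, v (hyperplaneReflection e x) = -v x) (q : F × F) :
    symmEnergyDensity s (hyperplaneReflection e) (halfPosPart e v - v) (halfPosPart e v) q ≤ 0 :=
  symmEnergyDensity_nonpos hs he (halfPosPart_sub_odd he hodd) (halfPosPart_odd he hodd)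
    (halfPosPart_sub_mul_halfPosPart e v) (inner_mul_halfPosPart_sub_nonneg e v)
    (inner_mul_halfPosPart_nonneg e v) q

lemma sq_sub_halfPosPart_mul_fracKernel_le (hs : 0 < s) (he : ‖e‖ = 1) {v : F → ℝ}
    (hodd : ∀ x, v (hyperplaneReflection e x) = -v x) (x y : F) :
    (halfPosPart e v x - halfPosPart e v y) ^ 2 * fracKernel s (x - y) ≤
      symmEnergyDensity s (hyperplaneReflection e) v v (x, y) := by
  set φ := halfPosPart e v
  -- Writing `v = φ - (φ - v)`, the cross term of the density is nonnegative.
  have hcross := symmEnergyDensity_halfPosPart_sub_nonpos hs he hodd (x, y)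
  have hK := fracKernel_nonneg s (x - y)
  have hK' := fracKernel_nonneg s (x - hyperplaneReflection e y)
  simp only [symmEnergyDensity, Pi.sub_apply] at hcross ⊢
  linarith [mul_nonneg (sq_nonneg ((φ x - v x) - (φ y - v y))) hK,
    mul_nonneg (sq_nonneg ((φ x - v x) + (φ y - v y))) hK',
    mul_nonneg (sq_nonneg (φ x + φ y)) hK']

end Reflection

section EnergyReflection

variable (g : E ≃ₗᵢ[ℝ] E)

lemma measurePreserving_prod_snd : MeasurePreserving (fun q : E × E => (q.1, g q.2)) :=
  (MeasurePreserving.id volume).prod g.measurePreserving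

lemma measurableEmbedding_prod_snd {X : Type*} [TopologicalSpace X] [MeasurableSpace X]
    [BorelSpace X] (g : X ≃ₜ X) : MeasurableEmbedding (fun q : X × X => (q.1, g q.2)) :=
  (MeasurableEquiv.prodCongr (.refl _) g.toMeasurableEquiv).measurableEmbedding

lemma preimage_pairRegion_snd {F : Type*} [NormedAddCommGroup F] [NormedSpace ℝ F]
    (g : F ≃ₗᵢ[ℝ] F) : (fun q : F × F => (q.1, g q.2)) ⁻¹' pairRegion F R = pairRegion F R := by
  ext q; simp [pairRegion]

variable {g} {u v : E → ℝ}

lemma FiniteEnergy.integrableOn_energy_snd (hu : FiniteEnergy s R u) (hv : FiniteEnergy s R v)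
    (hgu : ∀ x, u (g x) = -u x) (hgv : ∀ x, v (g x) = -v x) :
    IntegrableOn (fun q : E × E =>
      (u q.1 + u q.2) * (v q.1 + v q.2) * fracKernel s (q.1 - g q.2)) (pairRegion E R) := by
  have h := ((measurePreserving_prod_snd g).integrableOn_comp_preimage
    (measurableEmbedding_prod_snd g.toHomeomorph)).2 (hu.integrableOn_energy hv)
  simpa only [preimage_pairRegion_snd, Function.comp_def, hgu, hgv, sub_neg_eq_add] using h

lemma setIntegral_energy_snd (hgu : ∀ x, u (g x) = -u x) (hgv : ∀ x, v (g x) = -v x) :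
    ∫ q in pairRegion E R, (u q.1 + u q.2) * (v q.1 + v q.2) * fracKernel s (q.1 - g q.2) =
      energyForm s R u v := by
  have h := (measurePreserving_prod_snd g).setIntegral_preimage_emb
    (measurableEmbedding_prod_snd g.toHomeomorph)
    (fun q => (u q.1 - u q.2) * (v q.1 - v q.2) * fracKernel s (q.1 - q.2)) (pairRegion E R)
  simp only [hgu, hgv, sub_neg_eq_add] at h
  rwa [preimage_pairRegion_snd] at h

lemma FiniteEnergy.integrableOn_symmEnergyDensity (hu : FiniteEnergy s R u)
    (hv : FiniteEnergy s R v) (hgu : ∀ x, u (g x) = -u x) (hgv : ∀ x, v (g x) = -v x) :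
    IntegrableOn (symmEnergyDensity s g u v) (pairRegion E R) :=
  (hu.integrableOn_energy hv).add (hu.integrableOn_energy_snd hv hgu hgv)

lemma setIntegral_symmEnergyDensity (hu : FiniteEnergy s R u) (hv : FiniteEnergy s R v)
    (hgu : ∀ x, u (g x) = -u x) (hgv : ∀ x, v (g x) = -v x) :
    ∫ q in pairRegion E R, symmEnergyDensity s g u v q = 2 * energyForm s R u v := by
  unfold symmEnergyDensity
  rw [integral_add (hu.integrableOn_energy hv) (hu.integrableOn_energy_snd hv hgu hgv),
    setIntegral_energy_snd hgu hgv, two_mul, energyForm]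

lemma setIntegral_eq_zero_of_odd (hgu : ∀ x, u (g x) = -u x) :
    ∫ x in closedBall (0 : E) R, u x = 0 := by
  have h := setIntegral_closedBall_comp (R := R) g u
  simp only [hgu, integral_neg] at h
  linarith

end EnergyReflection

section SignOnHalfSpace

variable {e : E} {v : E → ℝ}

lemma FiniteEnergy.halfPosPart (hs : 0 < s) (he : ‖e‖ = 1) (hv : FiniteEnergy s R v)
    (hodd : ∀ x, v (hyperplaneReflection e x) = -v x) : FiniteEnergy s R (halfPosPart e v) := by
  have hm : Measurable (FracNeumann.halfPosPart e v) :=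
    .ite (measurableSet_lt measurable_const (by fun_prop)) (hv.measurable.max measurable_const)
      (hv.measurable.min measurable_const)
  refine ⟨hm, ?_, ?_⟩
  · refine hv.integrableOn_sq.mono' (hm.pow_const 2).aestronglyMeasurable
      (.of_forall fun x => ?_)
    rw [Real.norm_of_nonneg (sq_nonneg _)]
    exact halfPosPart_sq_le e v x
  · refine (hv.integrableOn_symmEnergyDensity hv hodd hodd).mono'
      (((measurable_sub_pair hm).pow_const 2).mul
        (measurable_fracKernel_sub s)).aestronglyMeasurable
      (.of_forall fun q => ?_)
    rw [Real.norm_of_nonneg (mul_nonneg (sq_nonneg _) (fracKernel_nonneg _ _))]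
    exact sq_sub_halfPosPart_mul_fracKernel_le hs he hodd q.1 q.2

lemma IsWeakSolution.energyForm_halfPosPart_sub_nonneg (hs : 0 < s) (he : ‖e‖ = 1)
    (hv : IsWeakSolution s R lam v) (hodd : ∀ x, v (hyperplaneReflection e x) = -v x)
    (hP : PoincareIneq E s R lam) :
    0 ≤ energyForm s R (halfPosPart e v - v) (halfPosPart e v) := by
  have hφ := hv.finiteEnergy.halfPosPart hs he hodd
  rw [energyForm_sub_left hφ hv.finiteEnergy hφ, hv.energyForm_eq _ hφ, sub_nonneg]
  simp only [mul_halfPosPart]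
  exact hP _ hφ (setIntegral_eq_zero_of_odd (halfPosPart_odd he hodd))

lemma IsWeakSolution.ae_symmEnergyDensity_halfPosPart_eq_zero (hs : 0 < s) (he : ‖e‖ = 1)
    (hv : IsWeakSolution s R lam v) (hodd : ∀ x, v (hyperplaneReflection e x) = -v x)
    (hP : PoincareIneq E s R lam) :
    ∀ᵐ q ∂volume.restrict (pairRegion E R), symmEnergyDensity s (hyperplaneReflection e)
      (halfPosPart e v - v) (halfPosPart e v) q = 0 := by
  have hφ := hv.finiteEnergy.halfPosPart hs he hodd
  have hψ := hφ.sub hv.finiteEnergy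
  have hnonneg : ∀ q, 0 ≤ -symmEnergyDensity s (hyperplaneReflection e)
      (halfPosPart e v - v) (halfPosPart e v) q := fun q =>
    neg_nonneg.2 (symmEnergyDensity_halfPosPart_sub_nonpos hs he hodd q)
  have hinteg := hψ.integrableOn_symmEnergyDensity hφ (halfPosPart_sub_odd he hodd)
    (halfPosPart_odd he hodd)
  have hzero : ∫ q in pairRegion E R, -symmEnergyDensity s (hyperplaneReflection e)
      (halfPosPart e v - v) (halfPosPart e v) q = 0 := by
    refine le_antisymm ?_ (integral_nonneg hnonneg)
    rw [integral_neg, setIntegral_symmEnergyDensity hψ hφ (halfPosPart_sub_odd he hodd)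
      (halfPosPart_odd he hodd)]
    linarith [hv.energyForm_halfPosPart_sub_nonneg hs he hodd hP]
  filter_upwards [(integral_eq_zero_iff_of_nonneg hnonneg hinteg.neg).1 hzero] with q hq
  exact neg_eq_zero.1 hq

lemma symmEnergyDensity_halfPosPart_ne_zero {F : Type*} [NormedAddCommGroup F]
    [InnerProductSpace ℝ F] {e : F} {v : F → ℝ} (hs : 0 < s) (he : ‖e‖ = 1) {x y : F}
    (hx : 0 < inner ℝ x e) (hy : 0 < inner ℝ y e) (hvx : v x < 0) (hvy : 0 < v y) :
    symmEnergyDensity s (hyperplaneReflection e) (halfPosPart e v - v) (halfPosPart e v) (x, y) ≠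
      0 := by
  have hne : x ≠ y := fun h => (hvx.trans hvy).ne (congrArg v h)
  rw [symmEnergyDensity_of_mul_eq_zero _ (halfPosPart_sub_mul_halfPosPart e v), Pi.sub_apply,
    Pi.sub_apply, halfPosPart_of_pos hx, halfPosPart_of_pos hy, max_eq_right hvx.le,
    max_eq_left hvy.le]
  refine (mul_neg_of_pos_of_neg ?_ (sub_neg.2
    (fracKernel_sub_hyperplaneReflection_lt hs he hne (mul_pos hx hy)))).ne
  linarith [mul_pos (neg_pos.2 hvx) hvy]

lemma IsWeakSolution.nonneg_of_exists_pos (hs : 0 < s) (he : ‖e‖ = 1)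
    (hv : IsWeakSolution s R lam v) (hc : Continuous v)
    (hodd : ∀ x, v (hyperplaneReflection e x) = -v x) (hP : PoincareIneq E s R lam) {a b : E}
    (ha : 0 < inner ℝ a e) (hb : 0 < inner ℝ b e) (hvb : 0 < v b) (hbR : ‖b‖ < R) :
    0 ≤ v a := by
  by_contra! hva
  have hzero := hv.ae_symmEnergyDensity_halfPosPart_eq_zero hs he hodd hP
  rw [ae_restrict_iff' (measurableSet_pairRegion R)] at hzero
  have hinner : Continuous fun x : E => (inner ℝ x e : ℝ) := by fun_prop
  have hnear_a : ∀ᶠ x in 𝓝 a, v x < 0 ∧ 0 < inner ℝ x e :=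
    (hc.continuousAt.eventually_lt_const hva).and (hinner.continuousAt.eventually_const_lt ha)
  have hnear_b : ∀ᶠ y in 𝓝 b, 0 < v y ∧ 0 < inner ℝ y e ∧ ‖y‖ < R :=
    (hc.continuousAt.eventually_const_lt hvb).and ((hinner.continuousAt.eventually_const_lt hb).and
      (continuous_norm.continuousAt.eventually_lt_const hbR))
  have := neBot_nhds_inf_ae (μ := (volume : Measure (E × E))) (a, b)
  obtain ⟨q, ⟨⟨hv1, hinner1⟩, hv2, hinner2, hR2⟩, hq⟩ :=
    (((hnear_a.prodMk_nhds hnear_b).filter_mono inf_le_left).and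
      (hzero.filter_mono inf_le_right)).exists
  exact symmEnergyDensity_halfPosPart_ne_zero hs he hinner1 hinner2 hv1 hv2 (hq (.inr hR2.le))

lemma IsWeakSolution.eq_zero_of_forall_ball (hs : 0 < s) (hR : 0 < R)
    (hv : IsWeakSolution s R lam v) (hc : Continuous v) (h : ∀ x, ‖x‖ < R → v x = 0) : v = 0 := by
  have hball : EqOn v 0 (closedBall 0 R) := by
    rw [← closure_ball (0 : E) hR.ne']
    exact EqOn.closure (fun x hx => h x (mem_ball_zero_iff.1 hx)) hc continuous_zero
  exact (hc.ae_eq_iff_eq volume continuous_zero).1 (hv.ae_eq_zero hs hR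
    ((ae_restrict_iff' measurableSet_closedBall).2 (.of_forall hball)))

lemma IsWeakSolution.eq_zero_of_forall_half_ball (hs : 0 < s) (hR : 0 < R) (he : ‖e‖ = 1)
    (hv : IsWeakSolution s R lam v) (hc : Continuous v)
    (hodd : ∀ x, v (hyperplaneReflection e x) = -v x)
    (h : ∀ x, ‖x‖ < R → 0 < inner ℝ x e → v x = 0) : v = 0 := by
  refine hv.eq_zero_of_forall_ball hs hR hc fun x hx => ?_
  rcases lt_trichotomy (inner ℝ x e) 0 with hneg | hzero | hpos
  · rw [← neg_eq_zero, ← hodd]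
    exact h _ (by rwa [LinearIsometryEquiv.norm_map])
      (by rw [inner_hyperplaneReflection he]; linarith)
  · exact eq_zero_of_inner_eq_zero he hodd hzero
  · exact h x hx hpos

lemma IsWeakSolution.nonneg_or_nonpos_of_odd (hs : 0 < s) (hR : 0 < R) (he : ‖e‖ = 1)
    (hv : IsWeakSolution s R lam v) (hc : Continuous v)
    (hodd : ∀ x, v (hyperplaneReflection e x) = -v x) (hP : PoincareIneq E s R lam) :
    (∀ x, 0 < inner ℝ x e → 0 ≤ v x) ∨ ∀ x, 0 < inner ℝ x e → v x ≤ 0 := by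
  by_cases hz : ∀ x, ‖x‖ < R → 0 < inner ℝ x e → v x = 0
  · simp [hv.eq_zero_of_forall_half_ball hs hR he hc hodd hz]
  push Not at hz
  obtain ⟨b, hbR, hb, hvb⟩ := hz
  rcases hvb.lt_or_gt with hneg | hpos
  · right
    intro x hx
    have := hv.neg.nonneg_of_exists_pos hs he hc.neg (fun x => congrArg Neg.neg (hodd x)) hP hx hb
      (neg_pos.2 hneg) hbR
    exact neg_nonneg.1 this
  · exact .inl fun x hx => hv.nonneg_of_exists_pos hs he hc hodd hP hx hb hpos hbR

end SignOnHalfSpace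

/-! ### The strong maximum principle -/

section Comparison

lemma sub_norm_sub_le_inner {F : Type*} [NormedAddCommGroup F] [InnerProductSpace ℝ F] {e : F}
    (he : ‖e‖ = 1) (x y : F) : inner ℝ y e - ‖x - y‖ ≤ inner ℝ x e := by
  have h := neg_le_of_abs_le (abs_real_inner_le_norm (x - y) e)
  rw [he, mul_one, inner_sub_left] at h
  linarith

lemma continuousAt_fracKernel {F : Type*} [NormedAddCommGroup F] [InnerProductSpace ℝ F] {z : F}
    (hz : z ≠ 0) : ContinuousAt (fracKernel s) z :=
  (continuous_norm.continuousAt.rpow_const (.inl (norm_ne_zero_iff.2 hz))).inv₀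
    (Real.rpow_pos_of_pos (norm_pos_iff.2 hz) _).ne'

lemma exists_le_fracKernel_sub_hyperplaneReflection {F : Type*} [NormedAddCommGroup F]
    [InnerProductSpace ℝ F] {e x₀ y₀ : F} (hs : 0 < s) (he : ‖e‖ = 1) (hne : x₀ ≠ y₀)
    (hx₀ : 0 < inner ℝ x₀ e) (hy₀ : 0 < inner ℝ y₀ e) :
    ∃ κ > 0, ∀ᶠ p : F × F in 𝓝 (x₀, y₀),
      κ ≤ fracKernel s (p.1 - p.2) - fracKernel s (p.1 - hyperplaneReflection e p.2) := by
  have hne' : x₀ ≠ hyperplaneReflection e y₀ := by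
    rintro rfl
    linarith [inner_hyperplaneReflection he y₀]
  have hlt := sub_pos.2 (fracKernel_sub_hyperplaneReflection_lt hs he hne (mul_pos hx₀ hy₀))
  have hcont : ContinuousAt (fun p : F × F => fracKernel s (p.1 - p.2) -
      fracKernel s (p.1 - hyperplaneReflection e p.2)) (x₀, y₀) := by
    refine .sub
      (.comp (g := fracKernel s) (continuousAt_fracKernel (sub_ne_zero.2 hne)) (by fun_prop))
      (.comp (g := fracKernel s) (continuousAt_fracKernel (sub_ne_zero.2 hne')) ?_)
    exact (continuous_fst.sub
      ((hyperplaneReflection e).continuous.comp continuous_snd)).continuousAt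
  exact ⟨_, half_pos hlt, (hcont.eventually_const_lt (half_lt_self hlt)).mono fun _ => le_of_lt⟩

lemma inner_mul_nonneg_of_odd {F : Type*} [NormedAddCommGroup F] [InnerProductSpace ℝ F] {e : F}
    (he : ‖e‖ = 1) {v : F → ℝ} (hodd : ∀ x, v (hyperplaneReflection e x) = -v x)
    (hpos : ∀ x, 0 < inner ℝ x e → 0 ≤ v x) (x : F) : 0 ≤ inner ℝ x e * v x := by
  rcases lt_trichotomy (inner ℝ x e) 0 with h | h | h
  · have := hpos (hyperplaneReflection e x) (by rw [inner_hyperplaneReflection he]; linarith)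
    rw [hodd] at this
    exact mul_nonneg_of_nonpos_of_nonpos h.le (by linarith)
  · rw [h, zero_mul]
  · exact mul_nonneg h.le (hpos x h)

lemma symmEnergyDensity_halfPosPart_nonneg {F : Type*} [NormedAddCommGroup F]
    [InnerProductSpace ℝ F] {e : F} (hs : 0 < s) (he : ‖e‖ = 1) {v : F → ℝ}
    (hodd : ∀ x, v (hyperplaneReflection e x) = -v x) (q : F × F) :
    0 ≤ symmEnergyDensity s (hyperplaneReflection e) v (halfPosPart e v) q := by
  have hcross := symmEnergyDensity_halfPosPart_sub_nonpos hs he hodd q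
  set φ := halfPosPart e v
  have hφ := mul_nonneg (mul_self_nonneg (φ q.1 - φ q.2)) (fracKernel_nonneg s (q.1 - q.2))
  have hφ' := mul_nonneg (mul_self_nonneg (φ q.1 + φ q.2))
    (fracKernel_nonneg s (q.1 - hyperplaneReflection e q.2))
  simp only [symmEnergyDensity, Pi.sub_apply] at hcross ⊢
  linarith

lemma pos_of_max_halfPosPart_ne_zero {F : Type*} [NormedAddCommGroup F] [InnerProductSpace ℝ F]
    {e : F} {v : F → ℝ} {x : F} (h : max (halfPosPart e v x) 0 ≠ 0) :
    0 < inner ℝ x e ∧ 0 < v x := by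
  unfold halfPosPart at h
  split_ifs at h with hx
  · exact ⟨hx, by_contra fun hv => h (by simp [not_lt.1 hv])⟩
  · exact absurd (max_eq_right (min_le_right _ _)) h

lemma max_halfPosPart_of_pos {F : Type*} [NormedAddCommGroup F] [InnerProductSpace ℝ F] {e : F}
    {v : F → ℝ} {x : F} (hx : 0 < inner ℝ x e) : max (halfPosPart e v x) 0 = max (v x) 0 := by
  rw [halfPosPart_of_pos hx, max_eq_left (le_max_right _ _)]

lemma mul_sub_mul_le_symmEnergyDensity_halfPosPart {F : Type*} [NormedAddCommGroup F]
    [InnerProductSpace ℝ F] {e : F} {v : F → ℝ} {η κ : ℝ} {x y : F} (hx : 0 < inner ℝ x e)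
    (hvx : 0 < v x) (hy : 0 < inner ℝ y e) (hη : 0 ≤ η) (hvy : v y ≤ -η) (hκ : 0 ≤ κ)
    (hK : κ ≤ fracKernel s (x - y) - fracKernel s (x - hyperplaneReflection e y)) :
    η * κ * v x ≤ symmEnergyDensity s (hyperplaneReflection e) v (halfPosPart e v) (x, y) := by
  have hprod : η * κ ≤ -v y *
      (fracKernel s (x - y) - fracKernel s (x - hyperplaneReflection e y)) :=
    mul_le_mul (le_neg_of_le_neg hvy) hK hκ (by linarith)
  have hself : 0 ≤ v x * v x *
      (fracKernel s (x - y) + fracKernel s (x - hyperplaneReflection e y)) :=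
    mul_nonneg (mul_self_nonneg _) (add_nonneg (fracKernel_nonneg _ _) (fracKernel_nonneg _ _))
  simp only [symmEnergyDensity, halfPosPart_of_pos hx, halfPosPart_of_pos hy, max_eq_left hvx.le,
    max_eq_right (hvy.trans (neg_nonpos.2 hη))]
  linarith [mul_le_mul_of_nonneg_right hprod hvx.le]

lemma energyForm_eq_two_mul_max_zero (g : E ≃ₗᵢ[ℝ] E) {u φ : E → ℝ} (hu : FiniteEnergy s R u)
    (hφ : FiniteEnergy s R φ) (hgu : ∀ x, u (g x) = -u x) (hgφ : ∀ x, φ (g x) = -φ x) :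
    energyForm s R u φ = 2 * energyForm s R u (fun x => max (φ x) 0) := by
  have hsplit : φ = (fun x => max (φ x) 0) - fun x => max (φ (g x)) 0 := by
    ext x
    simp only [Pi.sub_apply, hgφ]
    rcases le_total 0 (φ x) with h | h <;> simp [h]
  have hrefl := energyForm_comp (s := s) (R := R) g u (fun x => max (φ x) 0)
  rw [show (fun x => u (g x)) = -u from funext hgu, energyForm_neg_left] at hrefl
  conv_lhs => rw [hsplit]
  rw [energyForm_comm, energyForm_sub_left hφ.max_zero (hφ.max_zero.comp g) hu, energyForm_comm _ u,
    energyForm_comm _ u]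
  linarith

variable {e : E} {b v : E → ℝ} {G : Set E} {η κ C : ℝ}

lemma mul_integral_le_energyForm_halfPosPart (hs : 0 < s) (he : ‖e‖ = 1)
    (hv : FiniteEnergy s R v) (hodd : ∀ x, v (hyperplaneReflection e x) = -v x)
    (hvi : Integrable fun x => max (halfPosPart e v x) 0)
    (hsupp : ∀ x, 0 < inner ℝ x e → 0 < v x → ‖x‖ ≤ R) (hG : MeasurableSet G)
    (hGfin : volume G ≠ ∞) (hη : 0 ≤ η) (hκ : 0 ≤ κ)
    (hvG : ∀ y ∈ G, 0 < inner ℝ y e ∧ v y ≤ -η)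
    (hK : ∀ x, 0 < inner ℝ x e → 0 < v x → ∀ y ∈ G,
      κ ≤ fracKernel s (x - y) - fracKernel s (x - hyperplaneReflection e y)) :
    volume.real G * (η * κ * ∫ x, max (halfPosPart e v x) 0) ≤
      2 * energyForm s R v (halfPosPart e v) := by
  have hφ := hv.halfPosPart hs he hodd
  have hφodd := halfPosPart_odd he hodd
  rw [← setIntegral_symmEnergyDensity hv hφ hodd hφodd, ← integral_const_mul]
  refine mul_integral_fst_le_setIntegral_prod (measurableSet_pairRegion R)
    (S := {q | max (halfPosPart e v q.1) 0 ≠ 0 ∧ q.2 ∈ G}) ?_ ?_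
    (hv.integrableOn_symmEnergyDensity hφ hodd hφodd)
    (fun q _ => symmEnergyDensity_halfPosPart_nonneg hs he hodd q) (hvi.const_mul _)
    (fun x => mul_nonneg (mul_nonneg hη hκ) (le_max_right _ _)) ?_ measureReal_nonneg ?_
  · exact (hφ.max_zero.measurable.comp measurable_fst (measurableSet_singleton 0).compl).inter
      (measurable_snd hG)
  · rintro q ⟨hq, -⟩
    obtain ⟨hx, hvx⟩ := pos_of_max_halfPosPart_ne_zero hq
    exact .inl (hsupp _ hx hvx)
  · rintro ⟨x, y⟩ ⟨hq, hy⟩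
    obtain ⟨hx, hvx⟩ := pos_of_max_halfPosPart_ne_zero hq
    rw [max_halfPosPart_of_pos hx, max_eq_left hvx.le]
    exact mul_sub_mul_le_symmEnergyDensity_halfPosPart hx hvx (hvG y hy).1 hη (hvG y hy).2 hκ
      (hK x hx hvx y hy)
  · intro x hx
    rw [measureReal_def, ENNReal.ofReal_toReal hGfin]
    exact measure_mono fun y hy => ⟨right_ne_zero_of_mul hx, hy⟩

lemma IsWeakSolution.energyForm_sub_halfPosPart_le (hs : 0 < s) (hlam : 0 ≤ lam) (he : ‖e‖ = 1)
    (hv : IsWeakSolution s R lam v) (hodd : ∀ x, v (hyperplaneReflection e x) = -v x)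
    (hpos : ∀ x, 0 < inner ℝ x e → 0 ≤ v x) (hb : FiniteEnergy s R b)
    (hbodd : ∀ x, b (hyperplaneReflection e x) = -b x) :
    energyForm s R (b - v) (halfPosPart e (b - v)) ≤
      2 * energyForm s R b (fun x => max (halfPosPart e (b - v) x) 0) := by
  have hsub_odd : ∀ x, (b - v) (hyperplaneReflection e x) = -(b - v) x := fun x => by
    simp only [Pi.sub_apply, hbodd, hodd]
    ring
  have hφ := (hb.sub hv.finiteEnergy).halfPosPart hs he hsub_odd
  have hφodd := halfPosPart_odd he hsub_odd
  have hsign : 0 ≤ ∫ x in closedBall (0 : E) R, v x * halfPosPart e (b - v) x := by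
    refine integral_nonneg fun x => ?_
    rcases eq_or_ne (inner ℝ x e) 0 with h | h
    · simp [eq_zero_of_inner_eq_zero he hodd h]
    · refine (mul_nonneg_iff_of_pos_left (pow_two_pos_of_ne_zero h)).1 ?_
      linarith [mul_nonneg (inner_mul_nonneg_of_odd he hodd hpos x)
        (inner_mul_halfPosPart_nonneg e (b - v) x)]
  rw [energyForm_sub_left hb hv.finiteEnergy hφ, hv.energyForm_eq _ hφ,
    energyForm_eq_two_mul_max_zero _ hb hφ hbodd hφodd]
  linarith [mul_nonneg hlam hsign]

/- Testing the equation with the positive part of `b - v`, the interaction of its support with `G`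
is of order `volume G * η * κ` and beats the energy of `b`. -/
lemma IsWeakSolution.le_of_odd_subsolution (hs : 0 < s) (hlam : 0 ≤ lam) (he : ‖e‖ = 1)
    (hv : IsWeakSolution s R lam v) (hc : Continuous v)
    (hodd : ∀ x, v (hyperplaneReflection e x) = -v x) (hpos : ∀ x, 0 < inner ℝ x e → 0 ≤ v x)
    (hb : FiniteEnergy s R b) (hbc : Continuous b)
    (hbodd : ∀ x, b (hyperplaneReflection e x) = -b x)
    (hsupp : ∀ x, 0 < inner ℝ x e → 0 < b x → ‖x‖ ≤ R)
    (hC : ∀ φ : E → ℝ, FiniteEnergy s R φ → Integrable φ → (∀ x, 0 ≤ φ x) →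
      (∀ x, φ x ≠ 0 → 0 < inner ℝ x e ∧ 0 < b x) → energyForm s R b φ ≤ C * ∫ x, φ x)
    (hG : MeasurableSet G) (hGfin : volume G ≠ ∞) (hη : 0 ≤ η) (hκ : 0 ≤ κ)
    (hbG : ∀ y ∈ G, 0 < inner ℝ y e ∧ b y + η ≤ v y)
    (hK : ∀ x, 0 < inner ℝ x e → 0 < b x → ∀ y ∈ G,
      κ ≤ fracKernel s (x - y) - fracKernel s (x - hyperplaneReflection e y))
    (hCG : 4 * C < volume.real G * (η * κ)) {x : E} (hx : 0 < inner ℝ x e) : b x ≤ v x := by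
  have hsub_odd : ∀ x, (b - v) (hyperplaneReflection e x) = -(b - v) x := fun x => by
    simp only [Pi.sub_apply, hbodd, hodd]
    ring
  have hbpos : ∀ x, 0 < inner ℝ x e → 0 < (b - v) x → 0 < b x := fun x hx hlt =>
    (hpos x hx).trans_lt (sub_pos.1 hlt)
  have hsubR : ∀ x, 0 < inner ℝ x e → 0 < (b - v) x → ‖x‖ ≤ R := fun x hx hlt =>
    hsupp x hx (hbpos x hx hlt)
  have hsub := hb.sub hv.finiteEnergy
  set φ : E → ℝ := fun x => max (halfPosPart e (b - v) x) 0
  have hφ : FiniteEnergy s R φ := (hsub.halfPosPart hs he hsub_odd).max_zero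
  have hφi : Integrable φ := by
    rw [← integrableOn_univ]
    refine hφ.integrableOn.of_forall_sdiff_eq_zero .univ fun x hx => by_contra fun hne => hx.2 ?_
    obtain ⟨hxe, hlt⟩ := pos_of_max_halfPosPart_ne_zero hne
    exact mem_closedBall_zero_iff.2 (hsubR x hxe hlt)
  have hφ0 : ∀ x, 0 ≤ φ x := fun x => le_max_right _ _
  have hlower := mul_integral_le_energyForm_halfPosPart hs he hsub hsub_odd hφi hsubR hG hGfin hη hκ
    (fun y hy => ⟨(hbG y hy).1, by rw [Pi.sub_apply]; linarith [(hbG y hy).2]⟩)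
    (fun x hx hlt => hK x hx (hbpos x hx hlt))
  have hupper := hv.energyForm_sub_halfPosPart_le hs hlam he hodd hpos hb hbodd
  have henergy : energyForm s R b φ ≤ C * ∫ x, φ x := hC φ hφ hφi hφ0 fun x hx =>
    have h := pos_of_max_halfPosPart_ne_zero hx
    ⟨h.1, hbpos x h.1 h.2⟩
  have hzero : ∫ x, φ x = 0 := by
    refine le_antisymm (not_lt.1 fun hlt => ?_) (integral_nonneg hφ0)
    linarith [mul_lt_mul_of_pos_right hCG hlt]
  have hae := (integral_eq_zero_iff_of_nonneg hφ0 hφi).1 hzero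
  by_contra! hlt
  have hinner : Continuous fun x : E => (inner ℝ x e : ℝ) := by fun_prop
  have hopen : IsOpen {x : E | 0 < inner ℝ x e ∧ v x < b x} :=
    (isOpen_lt continuous_const hinner).inter (isOpen_lt hc hbc)
  refine (hopen.measure_pos volume ⟨x, hx, hlt⟩).ne' (measure_mono_null ?_ hae)
  rintro y ⟨hy, hlty⟩ (hφy : max (halfPosPart e (b - v) y) 0 = 0)
  rw [max_halfPosPart_of_pos hy, max_eq_right_iff, Pi.sub_apply] at hφy
  linarith

end Comparison

section OddBump

/-- The antisymmetrization, with respect to the hyperplane orthogonal to `e`, of a bump of width `t`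
around `x₀`. -/
def oddBump {F : Type*} [NormedAddCommGroup F] [InnerProductSpace ℝ F] (e x₀ : F) (t : ℝ) (x : F) :
    ℝ :=
  quasiBump (fun y => ‖y - x₀‖ ^ 2) t x -
    quasiBump (fun y => ‖y - x₀‖ ^ 2) t (hyperplaneReflection e x)

variable {F : Type*} [NormedAddCommGroup F] [InnerProductSpace ℝ F] {e x₀ : F} {t : ℝ}

lemma oddBump_odd (e x₀ : F) (t : ℝ) (x : F) :
    oddBump e x₀ t (hyperplaneReflection e x) = -oddBump e x₀ t x := by
  rw [oddBump, oddBump, hyperplaneReflection_hyperplaneReflection]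
  ring

lemma oddBump_of_pos (he : ‖e‖ = 1) (ht : 0 < t) (hte : t ≤ inner ℝ x₀ e) {x : F}
    (hx : 0 < inner ℝ x e) : oddBump e x₀ t x = quasiBump (fun y => ‖y - x₀‖ ^ 2) t x := by
  have hfar : t ≤ ‖hyperplaneReflection e x - x₀‖ := by
    have := sub_norm_sub_le_inner he (hyperplaneReflection e x) x₀
    rw [inner_hyperplaneReflection he] at this
    linarith
  rw [oddBump, quasiBump_eq_zero ht (x := hyperplaneReflection e x) (by gcongr), sub_zero]

lemma norm_sub_lt_of_oddBump_pos (he : ‖e‖ = 1) (ht : 0 < t) (hte : t ≤ inner ℝ x₀ e) {x : F}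
    (hx : 0 < inner ℝ x e) (hb : 0 < oddBump e x₀ t x) : ‖x - x₀‖ < t := by
  by_contra! h
  rw [oddBump_of_pos he ht hte hx, quasiBump_eq_zero ht (by gcongr)] at hb
  exact hb.false

lemma oddBump_eq_zero (he : ‖e‖ = 1) (ht : 0 < t) (hte : t ≤ inner ℝ x₀ e) {x : F}
    (hx : 0 < inner ℝ x e) (hfar : t ≤ ‖x - x₀‖) : oddBump e x₀ t x = 0 := by
  rw [oddBump_of_pos he ht hte hx, quasiBump_eq_zero ht (by gcongr)]

lemma oddBump_center (he : ‖e‖ = 1) (ht : 0 < t) (hte : t ≤ inner ℝ x₀ e) :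
    oddBump e x₀ t x₀ = 1 := by
  rw [oddBump_of_pos he ht hte (ht.trans_le hte)]
  simp [quasiBump, bumpProfile]

lemma abs_oddBump_le_one (hx₀ : ‖x₀‖ < R) (x : F) : |oddBump e x₀ t x| ≤ 1 := by
  have h := isQuasiDist_norm_sub_sq hx₀
  rw [oddBump, abs_le]
  constructor <;> linarith [h.quasiBump_le_one t x, quasiBump_nonneg (fun y => ‖y - x₀‖ ^ 2) t x,
    h.quasiBump_le_one t (hyperplaneReflection e x),
    quasiBump_nonneg (fun y => ‖y - x₀‖ ^ 2) t (hyperplaneReflection e x)]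

lemma continuous_oddBump (hx₀ : ‖x₀‖ < R) : Continuous (oddBump e x₀ t) :=
  have h := (isQuasiDist_norm_sub_sq hx₀).continuous_quasiBump t
  h.sub (h.comp (hyperplaneReflection e).continuous)

lemma abs_oddBump_second_difference_le (he : ‖e‖ = 1) (hx₀ : ‖x₀‖ < R) (ht : 0 < t)
    (htR : t ≤ R - ‖x₀‖) (hte : 2 * t ≤ inner ℝ x₀ e) {x : F} (hx : ‖x - x₀‖ < t) (y : F) :
    |2 * oddBump e x₀ t x - oddBump e x₀ t y - oddBump e x₀ t ((2 : ℝ) • x - y)| ≤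
      400000 * min 1 (‖x - y‖ ^ 2 / t ^ 2) := by
  have h := isQuasiDist_norm_sub_sq hx₀
  have hxe : t < inner ℝ x e := by linarith [sub_norm_sub_le_inner he x x₀]
  rcases lt_or_ge ‖x - y‖ t with hxy | hxy
  · -- At this scale `y` and its reflection at `x` stay in the half space.
    have hye : 0 < inner ℝ y e := by
      have := sub_norm_sub_le_inner he y x
      rw [norm_sub_rev] at this
      linarith
    have hye' : 0 < inner ℝ ((2 : ℝ) • x - y) e := by
      have := sub_norm_sub_le_inner he ((2 : ℝ) • x - y) x
      rw [show (2 : ℝ) • x - y - x = x - y by rw [two_smul]; abel] at this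
      linarith
    have hte' : t ≤ inner ℝ x₀ e := by linarith
    rw [oddBump_of_pos he ht hte' (ht.trans hxe), oddBump_of_pos he ht hte' hye,
      oddBump_of_pos he ht hte' hye']
    refine h.abs_quasiBump_second_difference_le ht htR (by gcongr) ?_ fun hle => ?_
    · rw [two_smul, show x - (x + x - y) = -(x - y) by abel, norm_neg]
    · have hq := h.abs_second_difference_le x (x - y) (by gcongr; linarith) hle
      rwa [show x + (x - y) = (2 : ℝ) • x - y by rw [two_smul]; abel, sub_sub_cancel,
        sub_right_comm] at hq
  · have hb := fun z => abs_le.1 (abs_oddBump_le_one (e := e) (t := t) hx₀ z)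
    rw [min_one_sq_div_of_ge ht hxy, abs_le]
    constructor <;> linarith [(hb x).1, (hb x).2, (hb y).1, (hb y).2, (hb ((2 : ℝ) • x - y)).1,
      (hb ((2 : ℝ) • x - y)).2]

variable {e x₀ : E}

lemma finiteEnergy_oddBump (hs0 : 0 < s) (hs1 : s < 1) (hx₀ : ‖x₀‖ < R) (ht : 0 < t)
    (htR : t ≤ R - ‖x₀‖) : FiniteEnergy s R (oddBump e x₀ t) :=
  have h := (isQuasiDist_norm_sub_sq hx₀).finiteEnergy_quasiBump hs0 hs1 ht htR
  h.sub (h.comp (hyperplaneReflection e))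

lemma energyForm_oddBump_le (hs0 : 0 < s) (hs1 : s < 1) (he : ‖e‖ = 1) (hx₀ : ‖x₀‖ < R)
    (ht : 0 < t) (htR : t ≤ R - ‖x₀‖) (hte : 2 * t ≤ inner ℝ x₀ e) {φ : E → ℝ}
    (hφ : FiniteEnergy s R φ) (hφi : Integrable φ) (hφ0 : ∀ x, 0 ≤ φ x)
    (hsupp : ∀ x, φ x ≠ 0 → ‖x - x₀‖ < t) :
    energyForm s R (oddBump e x₀ t) φ ≤
      400000 * t ^ (-(2 * s)) * levyMass E s * ∫ x, φ x := by
  refine (le_abs_self _).trans (abs_energyForm_le_of_second_difference hs0 hs1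
    (finiteEnergy_oddBump hs0 hs1 hx₀ ht htR) (abs_oddBump_le_one hx₀) hφ hφi hφ0 (by norm_num) ht
    (fun x hx _ => abs_oddBump_second_difference_le he hx₀ ht htR hte (hsupp x hx))
    fun x hx hxR => ?_)
  linarith [hsupp x hx, norm_sub_norm_le x x₀]

end OddBump

section StrongMaximumPrinciple

variable {e x₀ y₀ : E} {v : E → ℝ} {t r η κ : ℝ}

lemma IsWeakSolution.pos_of_ball (hs0 : 0 < s) (hs1 : s < 1) (hlam : 0 ≤ lam) (he : ‖e‖ = 1)
    (hv : IsWeakSolution s R lam v) (hc : Continuous v)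
    (hodd : ∀ x, v (hyperplaneReflection e x) = -v x) (hpos : ∀ x, 0 < inner ℝ x e → 0 ≤ v x)
    (hx₀ : ‖x₀‖ < R) (ht : 0 < t) (htR : t ≤ R - ‖x₀‖) (hte : 2 * t ≤ inner ℝ x₀ e) (hr : 0 < r)
    (hη : 0 < η) (hκ : 0 < κ)
    (hball : ∀ y ∈ ball y₀ r, 0 < inner ℝ y e ∧ t ≤ ‖y - x₀‖ ∧ η ≤ v y)
    (hK : ∀ x, ‖x - x₀‖ < t → ∀ y ∈ ball y₀ r,
      κ ≤ fracKernel s (x - y) - fracKernel s (x - hyperplaneReflection e y)) :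
    0 < v x₀ := by
  have hte' : t ≤ inner ℝ x₀ e := by linarith
  have hgap : 0 < volume.real (ball y₀ r) * (η * κ) :=
    mul_pos (ENNReal.toReal_pos (measure_ball_pos volume y₀ hr).ne' measure_ball_lt_top.ne)
      (mul_pos hη hκ)
  obtain ⟨θ, hθ, hθ_lt⟩ := exists_pos_mul_lt hgap (4 * (400000 * t ^ (-(2 * s)) * levyMass E s))
  have hnear : ∀ x, 0 < inner ℝ x e → 0 < (θ • oddBump e x₀ t) x → ‖x - x₀‖ < t := fun x hx hb =>
    norm_sub_lt_of_oddBump_pos he ht hte' hx (pos_of_mul_pos_right hb hθ.le)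
  have hle : (θ • oddBump e x₀ t) x₀ ≤ v x₀ := by
    refine hv.le_of_odd_subsolution hs0 hlam he hc hodd hpos
      ((finiteEnergy_oddBump hs0 hs1 hx₀ ht htR).smul θ)
      ((continuous_oddBump hx₀).const_smul θ) (fun x => ?_) (fun x hx hb => ?_)
      (C := θ * (400000 * t ^ (-(2 * s)) * levyMass E s)) (fun φ hφ hφi hφ0 hsupp => ?_)
      measurableSet_ball measure_ball_lt_top.ne hη.le hκ.le (fun y hy => ?_)
      (fun x hx hb => hK x (hnear x hx hb)) (by linarith) (ht.trans_le hte')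
    · simp only [Pi.smul_apply, oddBump_odd, smul_neg]
    · linarith [hnear x hx hb, norm_sub_norm_le x x₀]
    · rw [energyForm_smul_left, mul_assoc]
      exact mul_le_mul_of_nonneg_left (energyForm_oddBump_le hs0 hs1 he hx₀ ht htR hte hφ hφi hφ0
        fun x hx => hnear x (hsupp x hx).1 (hsupp x hx).2) hθ.le
    · obtain ⟨hye, hyt, hyv⟩ := hball y hy
      exact ⟨hye, by simpa [oddBump_eq_zero he ht hte' hye hyt] using hyv⟩
  rw [Pi.smul_apply, oddBump_center he ht hte', smul_eq_mul, mul_one] at hle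
  exact hθ.trans_le hle

/- Nonlocality: positivity of `v` at a single point of the half space forces positivity on the whole
half ball. -/
lemma IsWeakSolution.pos_of_nonneg_of_exists_pos (hs0 : 0 < s) (hs1 : s < 1) (hlam : 0 ≤ lam)
    (he : ‖e‖ = 1) (hv : IsWeakSolution s R lam v) (hc : Continuous v)
    (hodd : ∀ x, v (hyperplaneReflection e x) = -v x) (hpos : ∀ x, 0 < inner ℝ x e → 0 ≤ v x)
    (hx₀ : ‖x₀‖ < R) (hxe : 0 < inner ℝ x₀ e) (hye : 0 < inner ℝ y₀ e) (hvy : 0 < v y₀) :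
    0 < v x₀ := by
  rcases eq_or_ne x₀ y₀ with rfl | hne
  · exact hvy
  have hd : 0 < ‖y₀ - x₀‖ := norm_pos_iff.2 (sub_ne_zero.2 hne.symm)
  obtain ⟨κ, hκ, hK⟩ := exists_le_fracKernel_sub_hyperplaneReflection hs0 he hne hxe hye
  obtain ⟨ρ₁, hρ₁, hK⟩ := eventually_nhds_iff_ball.1 hK
  have hnear : ∀ᶠ y in 𝓝 y₀, 0 < inner ℝ y e ∧ ‖y₀ - x₀‖ / 2 < ‖y - x₀‖ ∧ v y₀ / 2 < v y :=
    ((show Continuous fun y : E => (inner ℝ y e : ℝ) by fun_prop).continuousAt.eventually_const_lt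
      hye).and (((show Continuous fun y : E => ‖y - x₀‖ by
        fun_prop).continuousAt.eventually_const_lt (half_lt_self hd)).and
      (hc.continuousAt.eventually_const_lt (half_lt_self hvy)))
  obtain ⟨ρ₂, hρ₂, hnear⟩ := eventually_nhds_iff_ball.1 hnear
  obtain ⟨t, ht, ht_lt⟩ := exists_between (lt_min (lt_min hρ₁ (half_pos hd))
    (lt_min (sub_pos.2 hx₀) (half_pos hxe)))
  simp only [lt_min_iff] at ht_lt
  obtain ⟨⟨htρ, htd⟩, htR, hte⟩ := ht_lt
  refine hv.pos_of_ball hs0 hs1 hlam he hc hodd hpos hx₀ ht htR.le (by linarith) (y₀ := y₀)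
    (r := min ρ₁ ρ₂) (lt_min hρ₁ hρ₂) (half_pos hvy) hκ (fun y hy => ?_) fun x hx y hy => ?_
  · obtain ⟨hy₁, hy₂, hy₃⟩ := hnear y (ball_subset_ball (min_le_right _ _) hy)
    exact ⟨hy₁, by linarith, hy₃.le⟩
  · refine hK (x, y) ?_
    rw [← ball_prod_same]
    exact ⟨mem_ball_iff_norm.2 (hx.trans htρ), ball_subset_ball (min_le_left _ _) hy⟩

lemma IsWeakSolution.pos_of_nonneg_of_ne_zero (hs0 : 0 < s) (hs1 : s < 1) (hR : 0 < R)
    (hlam : 0 ≤ lam) (he : ‖e‖ = 1) (hv : IsWeakSolution s R lam v) (hc : Continuous v)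
    (hodd : ∀ x, v (hyperplaneReflection e x) = -v x) (hpos : ∀ x, 0 < inner ℝ x e → 0 ≤ v x)
    (hne : v ≠ 0) (hx₀ : ‖x₀‖ < R) (hxe : 0 < inner ℝ x₀ e) : 0 < v x₀ := by
  obtain ⟨y₀, hye, hvy⟩ : ∃ y₀, 0 < inner ℝ y₀ e ∧ 0 < v y₀ := by
    by_contra! h
    exact hne (hv.eq_zero_of_forall_half_ball hs0 hR he hc hodd fun x _ hx =>
      le_antisymm (h x hx) (hpos x hx))
  exact hv.pos_of_nonneg_of_exists_pos hs0 hs1 hlam he hc hodd hpos hx₀ hxe hye hvy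

end StrongMaximumPrinciple

/-! ### Odd eigenfunctions and radial symmetry -/

section Radial

variable (F : Type*) [SeminormedAddCommGroup F]

/-- The radially symmetric functions. -/
def radialFunctions : Submodule ℝ (F → ℝ) where
  carrier := {u | u.FactorsThrough norm}
  add_mem' hu hv _ _ h := congrArg₂ (· + ·) (hu h) (hv h)
  zero_mem' _ _ _ := rfl
  smul_mem' c _ hu _ _ h := congrArg (c * ·) (hu h)

end Radial

section OddRigidity

variable {F : Type*} [NormedAddCommGroup F] [InnerProductSpace ℝ F] {e f : F} {u v w : F → ℝ}

lemma exists_hyperplaneReflection_eq {x y : F} (h : ‖x‖ = ‖y‖) (hne : x ≠ y) :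
    ∃ e : F, ‖e‖ = 1 ∧ hyperplaneReflection e x = y := by
  have hd : ‖x - y‖ ≠ 0 := norm_ne_zero_iff.2 (sub_ne_zero.2 hne)
  refine ⟨‖x - y‖⁻¹ • (x - y), by rw [norm_smul, norm_inv, norm_norm, inv_mul_cancel₀ hd], ?_⟩
  simp only [hyperplaneReflection,
    Submodule.span_singleton_smul_eq (IsUnit.mk0 _ (inv_ne_zero hd)), Submodule.reflection_sub h]

lemma map_hyperplaneReflection (he : ‖e‖ = 1) (g : F ≃ₗᵢ[ℝ] F) (x : F) :
    g (hyperplaneReflection e x) = hyperplaneReflection (g e) (g x) := by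
  rw [hyperplaneReflection_apply he, hyperplaneReflection_apply ((g.norm_map e).trans he), map_sub,
    map_smul, g.inner_map_map]

lemma hyperplaneReflection_self (he : ‖e‖ = 1) : hyperplaneReflection e e = -e := by
  rw [hyperplaneReflection_apply he, real_inner_self_eq_norm_sq, he]
  module

lemma norm_half_smul_lt (hR : 0 < R) (he : ‖e‖ = 1) : ‖(R / 2) • e‖ < R := by
  rw [norm_smul, he, mul_one, Real.norm_of_nonneg (half_pos hR).le]
  exact half_lt_self hR

lemma inner_half_smul_pos (hR : 0 < R) (he : ‖e‖ = 1) : 0 < (inner ℝ ((R / 2) • e) e : ℝ) := by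
  rw [real_inner_smul_left, real_inner_self_eq_norm_sq, he]
  linarith

/-- The two properties of the first eigenspace on the ball of radius `R` which force the structure
of the eigenfunctions: invariance under linear isometries, and the strong maximum principle for
functions which are odd with respect to a hyperplane. -/
structure IsOddRigid (R : ℝ) (V : Submodule ℝ (F → ℝ)) : Prop where
  comp_mem : ∀ {u : F → ℝ}, u ∈ V → ∀ g : F ≃ₗᵢ[ℝ] F, (fun x => u (g x)) ∈ V
  eq_zero_of_odd : ∀ {e : F}, ‖e‖ = 1 → ∀ {v : F → ℝ}, v ∈ V →
    (∀ x, v (hyperplaneReflection e x) = -v x) →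
      ∀ {x : F}, ‖x‖ < R → 0 < inner ℝ x e → v x = 0 → v = 0

namespace IsOddRigid

variable {V : Submodule ℝ (F → ℝ)}

lemma eq_smul_of_odd (hV : IsOddRigid R V) (hR : 0 < R) (he : ‖e‖ = 1) (hv : v ∈ V) (hw : w ∈ V)
    (hv0 : v ≠ 0) (hv_odd : ∀ x, v (hyperplaneReflection e x) = -v x)
    (hw_odd : ∀ x, w (hyperplaneReflection e x) = -w x) : ∃ c : ℝ, w = c • v := by
  have hp := norm_half_smul_lt hR he
  have hpe := inner_half_smul_pos hR he
  set p := (R / 2) • e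
  have hvp : v p ≠ 0 := fun h => hv0 (hV.eq_zero_of_odd he hv hv_odd hp hpe h)
  refine ⟨w p / v p, sub_eq_zero.1 (hV.eq_zero_of_odd he (V.sub_mem hw (V.smul_mem _ hv))
    (fun x => ?_) hp hpe ?_)⟩
  · simp only [Pi.sub_apply, Pi.smul_apply, hv_odd, hw_odd, smul_eq_mul]
    ring
  · simp only [Pi.sub_apply, Pi.smul_apply, smul_eq_mul, div_mul_cancel₀ _ hvp, sub_self]

lemma neg_of_odd (hV : IsOddRigid R V) (hR : 0 < R) (he : ‖e‖ = 1) (hv : v ∈ V)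
    (hv_odd : ∀ x, v (hyperplaneReflection e x) = -v x) (x : F) : v (-x) = -v x := by
  have hsum : (fun x => v (-x)) + v = 0 := by
    refine hV.eq_zero_of_odd he (V.add_mem (hV.comp_mem hv (LinearIsometryEquiv.neg ℝ)) hv)
      (fun x => ?_) (norm_half_smul_lt hR he) (inner_half_smul_pos hR he) ?_
    · simp only [Pi.add_apply, ← map_neg, hv_odd]
      ring
    · rw [Pi.add_apply, ← smul_neg, ← hyperplaneReflection_self he, ← map_smul, hv_odd,
        neg_add_cancel]
  exact eq_neg_of_add_eq_zero_left (congrFun hsum x)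

lemma even_of_odd_of_inner_eq_zero (hV : IsOddRigid R V) (hR : 0 < R) (he : ‖e‖ = 1)
    (hf : ‖f‖ = 1) (hef : inner ℝ e f = 0) (hv : v ∈ V)
    (hv_odd : ∀ x, v (hyperplaneReflection e x) = -v x) (x : F) :
    v (hyperplaneReflection f x) = v x := by
  have hfix : hyperplaneReflection f e = e := hyperplaneReflection_of_inner_eq_zero hf hef
  have hsub : (fun x => v (hyperplaneReflection f x)) - v = 0 := by
    refine hV.eq_zero_of_odd he (V.sub_mem (hV.comp_mem hv _) hv) (fun x => ?_)
      (norm_half_smul_lt hR he) (inner_half_smul_pos hR he) ?_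
    · rw [Pi.sub_apply, Pi.sub_apply, map_hyperplaneReflection he, hfix, hv_odd, hv_odd]
      ring
    · rw [Pi.sub_apply, map_smul, hfix, sub_self]
  exact sub_eq_zero.1 (congrFun hsub x)

lemma mem_radialFunctions_of_even (hV : IsOddRigid R V) (hR : 0 < R) (hu : u ∈ V)
    (heven : ∀ x, u (-x) = u x) : u ∈ radialFunctions F := by
  intro x y hxy
  rcases eq_or_ne x y with rfl | hne
  · rfl
  obtain ⟨e, he, rfl⟩ := exists_hyperplaneReflection_eq hxy hne
  have h := hV.neg_of_odd hR he (V.sub_mem hu (hV.comp_mem hu (hyperplaneReflection e)))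
    (fun z => by simp only [Pi.sub_apply, hyperplaneReflection_hyperplaneReflection, neg_sub]) x
  simp only [Pi.sub_apply, map_neg, heven] at h
  linarith

lemma exists_odd (hV : IsOddRigid R V) (hu : u ∈ V) (hrad : u ∉ radialFunctions F)
    (he : ‖e‖ = 1) : ∃ v ∈ V, v ≠ 0 ∧ ∀ x, v (hyperplaneReflection e x) = -v x := by
  obtain ⟨x, y, hxy, hne⟩ : ∃ x y : F, ‖x‖ = ‖y‖ ∧ u x ≠ u y := by
    by_contra! h
    exact hrad h
  obtain ⟨f, hf, rfl⟩ := exists_hyperplaneReflection_eq hxy fun h => hne (congrArg u h)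
  set g := hyperplaneReflection (e - f)
  have hgf : g e = f := Submodule.reflection_sub (he.trans hf.symm)
  refine ⟨_, hV.comp_mem (V.sub_mem hu (hV.comp_mem hu (hyperplaneReflection f))) g, fun h => ?_,
    fun z => ?_⟩
  · have := congrFun h (g.symm x)
    simp only [Pi.sub_apply, LinearIsometryEquiv.apply_symm_apply, Pi.zero_apply] at this
    exact hne (sub_eq_zero.1 this)
  · simp only [Pi.sub_apply, map_hyperplaneReflection he, hgf,
      hyperplaneReflection_hyperplaneReflection, neg_sub]

end IsOddRigid

lemma apply_neg_of_forall_hyperplaneReflection {ι : Type*} [Fintype ι] (b : OrthonormalBasis ι ℝ F)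
    (h : ∀ i x, u (hyperplaneReflection (b i) x) = u x) (x : F) : u (-x) = u x := by
  classical
  have hflip : ∀ S : Finset ι, u (x - ∑ i ∈ S, (2 * inner ℝ x (b i)) • b i) = u x := by
    intro S
    induction S using Finset.induction_on with
    | empty => simp
    | insert a S ha ih =>
      have hinner : inner ℝ (∑ i ∈ S, (2 * inner ℝ x (b i)) • b i) (b a) = (0 : ℝ) := by
        rw [sum_inner]
        refine Finset.sum_eq_zero fun i hi => ?_
        rw [real_inner_smul_left, b.inner_eq_zero (ne_of_mem_of_not_mem hi ha), mul_zero]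
      rw [← ih, ← h a (x - ∑ i ∈ S, _), hyperplaneReflection_apply (b.norm_eq_one a),
        inner_sub_left, hinner, sub_zero, sub_sub, Finset.sum_insert ha, add_comm]
  have hsum : ∑ i, (2 * inner ℝ x (b i)) • b i = (2 : ℝ) • x := by
    simp only [mul_smul, ← Finset.smul_sum, ← real_inner_comm x, b.sum_repr']
  have h := hflip Finset.univ
  rwa [hsum, two_smul, sub_add_cancel_left] at h

lemma IsOddRigid.exists_sub_sum_mem_radialFunctions {V : Submodule ℝ (F → ℝ)} (hV : IsOddRigid R V)
    (hR : 0 < R) {ι : Type*} [Fintype ι] (b : OrthonormalBasis ι ℝ F) {v : ι → F → ℝ}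
    (hv : ∀ i, v i ∈ V) (hv0 : ∀ i, v i ≠ 0)
    (hv_odd : ∀ i x, v i (hyperplaneReflection (b i) x) = -v i x) (hu : u ∈ V) :
    ∃ c : ι → ℝ, u - ∑ i, c i • v i ∈ V ⊓ radialFunctions F := by
  classical
  have hc : ∀ i, ∃ c : ℝ, u - (fun x => u (hyperplaneReflection (b i) x)) = c • v i := fun i =>
    hV.eq_smul_of_odd hR (b.norm_eq_one i) (hv i) (V.sub_mem hu (hV.comp_mem hu _)) (hv0 i)
      (hv_odd i) fun x => by
        simp only [Pi.sub_apply, hyperplaneReflection_hyperplaneReflection, neg_sub]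
  choose c hc using hc
  have hmem : u - ∑ i, (c i / 2) • v i ∈ V :=
    V.sub_mem hu (V.sum_mem fun i _ => V.smul_mem _ (hv i))
  refine ⟨fun i => c i / 2, hmem, hV.mem_radialFunctions_of_even hR hmem
    (apply_neg_of_forall_hyperplaneReflection b fun j x => ?_)⟩
  have hflip : u (hyperplaneReflection (b j) x) = u x - c j * v j x := by
    linarith [show u x - u (hyperplaneReflection (b j) x) = c j * v j x from congrFun (hc j) x]
  have hterm : ∀ i, c i / 2 * v i (hyperplaneReflection (b j) x) =
      c i / 2 * v i x - if i = j then c j * v j x else 0 := by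
    intro i
    split_ifs with h
    · rw [h, hv_odd]
      ring
    · rw [hV.even_of_odd_of_inner_eq_zero hR (b.norm_eq_one i) (b.norm_eq_one j)
        (b.inner_eq_zero h) (hv i) (hv_odd i), sub_zero]
  simp only [Pi.sub_apply, Finset.sum_apply, Pi.smul_apply, smul_eq_mul, hflip, hterm,
    Finset.sum_sub_distrib, Finset.sum_ite_eq', Finset.mem_univ, if_true]
  ring

end OddRigidity

section Eigenspace

variable (E) in
/-- The continuous weak solutions; by the regularity theorem each weak solution agrees almost
everywhere with one of them. -/
def eigenspace (s R lam : ℝ) : Submodule ℝ (E → ℝ) where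
  carrier := {u | Continuous u ∧ IsWeakSolution s R lam u}
  add_mem' hu hv := ⟨hu.1.add hv.1, hu.2.add hv.2⟩
  zero_mem' := ⟨continuous_zero, IsWeakSolution.zero⟩
  smul_mem' c _ hu := ⟨hu.1.const_smul c, hu.2.smul c⟩

lemma isOddRigid_eigenspace (hs0 : 0 < s) (hs1 : s < 1) (hR : 0 < R) (hlam : 0 ≤ lam)
    (hP : PoincareIneq E s R lam) : IsOddRigid R (eigenspace E s R lam) where
  comp_mem hu g := ⟨hu.1.comp g.continuous, hu.2.comp g⟩
  eq_zero_of_odd he v hv hodd x hx hxe hvx := by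
    by_contra hne
    rcases hv.2.nonneg_or_nonpos_of_odd hs0 hR he hv.1 hodd hP with hpos | hneg
    · exact (hv.2.pos_of_nonneg_of_ne_zero hs0 hs1 hR hlam he hv.1 hodd hpos hne hx hxe).ne' hvx
    · exact (hv.2.neg.pos_of_nonneg_of_ne_zero hs0 hs1 hR hlam he hv.1.neg
        (fun y => congrArg Neg.neg (hodd y)) (fun y hy => neg_nonneg.2 (hneg y hy))
        (neg_ne_zero.2 hne) hx hxe).ne' (neg_eq_zero.2 hvx)

lemma IsWeakSolution.exists_mem_eigenspace (hs0 : 0 < s) (hs1 : s < 1) (hR : 0 < R) {u : E → ℝ}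
    (hu : IsWeakSolution s R lam u) : ∃ v ∈ eigenspace E s R lam, u =ᵐ[volume] v := by
  obtain ⟨v, hv, huv⟩ := hu.exists_continuous hs0 hs1 hR
  exact ⟨v, ⟨hv, hu.congr hv.measurable huv⟩, huv⟩

lemma eq_zero_of_mem_eigenspace (hs : 0 < s) (hR : 0 < R) {u : E → ℝ}
    (hu : u ∈ eigenspace E s R lam) (h : u =ᵐ[volume.restrict (closedBall 0 R)] 0) : u = 0 :=
  (hu.1.ae_eq_iff_eq volume continuous_zero).1 (hu.2.ae_eq_zero hs hR h)

end Eigenspace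

/-! ### Finite dimension and nodal domains -/

section FiniteDimensional

lemma finite_of_forall_orthonormal_card_le {H : Type*} [NormedAddCommGroup H]
    [InnerProductSpace ℝ H] (n : ℕ)
    (h : ∀ (k : ℕ) (b : Fin k → H), Orthonormal ℝ b → k ≤ n) : Module.Finite ℝ H := by
  rw [← rank_lt_aleph0_iff]
  refine (rank_le fun S hS => ?_).trans_lt (Cardinal.natCast_lt_aleph0 (n := n))
  rw [← finrank_span_finset_eq_card hS]
  exact h _ _ ((stdOrthonormalBasis ℝ _).orthonormal.comp_linearIsometry (Submodule.subtypeₗᵢ _))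

lemma sum_sq_le_of_orthonormal {H V ι : Type*} [NormedAddCommGroup H] [InnerProductSpace ℝ H]
    [AddCommGroup V] [Module ℝ V] [Fintype ι] (T : V →ₗ[ℝ] H) (f : V →ₗ[ℝ] ℝ) {C : ℝ}
    (hf : ∀ u, f u ≤ C * ‖T u‖) {u : ι → V} (hu : Orthonormal ℝ fun i => T (u i)) :
    ∑ i, f (u i) ^ 2 ≤ C ^ 2 := by
  set S := ∑ i, f (u i) ^ 2 with hS
  have : 0 ≤ S := Finset.sum_nonneg fun i _ => sq_nonneg _
  have hnorm : ‖T (∑ i, f (u i) • u i)‖ ^ 2 = S := by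
    rw [← real_inner_self_eq_norm_sq, map_sum]
    simp only [map_smul, hu.inner_sum, conj_trivial, ← pow_two, hS]
  have hle : S ≤ C * ‖T (∑ i, f (u i) • u i)‖ := by
    simpa [hS, pow_two] using hf (∑ i, f (u i) • u i)
  nlinarith [sq_nonneg (C - ‖T (∑ i, f (u i) • u i)‖)]

variable {X : Type*} [MeasurableSpace X] {μ : Measure X} {V : Submodule ℝ (X → ℝ)}

/-- The map to `L²(μ)` of a space of square integrable functions. -/
def toL2 (hV : ∀ u ∈ V, MemLp u 2 μ) : V →ₗ[ℝ] Lp ℝ 2 μ where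
  toFun u := (hV u u.2).toLp
  map_add' u v := MemLp.toLp_add (hV u u.2) (hV v v.2)
  map_smul' c u := MemLp.toLp_const_smul c (hV u u.2)

lemma integral_sq_eq_one_of_norm_toL2 (hV : ∀ u ∈ V, MemLp u 2 μ) {u : V} (hu : ‖toL2 hV u‖ = 1) :
    ∫ x, u.1 x ^ 2 ∂μ = 1 := by
  have h : inner ℝ (toL2 hV u) (toL2 hV u) = (1 : ℝ) := by
    rw [real_inner_self_eq_norm_sq, hu, one_pow]
  rw [← h, L2.inner_def]
  refine integral_congr_ae ?_
  filter_upwards [(hV u u.2).coeFn_toLp] with x hx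
  rw [toL2, LinearMap.coe_mk, AddHom.coe_mk, hx, real_inner_self_eq_norm_sq, Real.norm_eq_abs,
    sq_abs]

/-
An orthonormal family of `k` functions satisfies `∑ uᵢ(x)² ≤ C²` at almost every `x`; integrating
bounds `k`.
-/
lemma finite_of_ae_le_mul_eLpNorm [IsFiniteMeasure μ] (hV : ∀ u ∈ V, MemLp u 2 μ)
    (hV0 : ∀ u ∈ V, u =ᵐ[μ] 0 → u = 0) {C : ℝ}
    (hC : ∀ᵐ x ∂μ, ∀ u ∈ V, u x ≤ C * (eLpNorm u 2 μ).toReal) : Module.Finite ℝ V := by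
  have hinj : Function.Injective (toL2 hV) := by
    refine (injective_iff_map_eq_zero _).2 fun u hu => Subtype.ext (hV0 u u.2 ?_)
    have h : (hV u u.2).toLp = 0 := hu
    exact (MemLp.toLp_eq_toLp_iff (hV u u.2) MemLp.zero).1 (h.trans (MemLp.toLp_zero _).symm)
  suffices Module.Finite ℝ (LinearMap.range (toL2 hV)) from
    Module.Finite.equiv (LinearEquiv.ofInjective _ hinj).symm
  refine finite_of_forall_orthonormal_card_le ⌈C ^ 2 * μ.real univ⌉₊ fun k b hb => ?_
  choose u hu using fun i => (b i).2
  have hb' : Orthonormal ℝ fun i => toL2 hV (u i) := by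
    simp only [hu]
    exact hb.comp_linearIsometry (Submodule.subtypeₗᵢ _)
  have hinteg : ∀ i, Integrable (fun x => (u i).1 x ^ 2) μ := fun i => (hV _ (u i).2).integrable_sq
  have hk : (k : ℝ) = ∫ x, ∑ i, (u i).1 x ^ 2 ∂μ := by
    rw [integral_finsetSum _ fun i _ => hinteg i]
    simp only [integral_sq_eq_one_of_norm_toL2 hV (hb'.norm_eq_one _), Finset.sum_const,
      Finset.card_univ, Fintype.card_fin, nsmul_eq_mul, mul_one]
  have hle : ∀ᵐ x ∂μ, ∑ i, (u i).1 x ^ 2 ≤ C ^ 2 := by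
    filter_upwards [hC] with x hx
    refine sum_sq_le_of_orthonormal (toL2 hV) (LinearMap.proj x ∘ₗ V.subtype) (fun u => ?_) hb'
    exact (hx u u.2).trans_eq (by rw [toL2, LinearMap.coe_mk, AddHom.coe_mk, Lp.norm_toLp])
  have hmono := integral_mono_ae (integrable_finsetSum _ fun i _ => hinteg i)
    (integrable_const _) hle
  rw [← hk, integral_const, smul_eq_mul, mul_comm] at hmono
  exact_mod_cast hmono.trans (Nat.le_ceil _)

end FiniteDimensional

section EigenspaceFinite

lemma restrict_ball_eq_restrict_closedBall (hR : 0 < R) :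
    (volume : Measure E).restrict (ball 0 R) = volume.restrict (closedBall 0 R) := by
  refine Measure.restrict_congr_set (ball_subset_closedBall.eventuallyLE.antisymm ?_)
  rw [ae_le_set, closedBall_sdiff_ball]
  exact Measure.addHaar_sphere_of_ne_zero _ _ hR.ne'

lemma FiniteEnergy.memLp {u : E → ℝ} (hu : FiniteEnergy s R u) :
    MemLp u 2 (volume.restrict (closedBall 0 R)) :=
  (memLp_two_iff_integrable_sq hu.measurable.aestronglyMeasurable).2 hu.integrableOn_sq

lemma exists_le_mul_integral_abs_of_mem_eigenspace (hs : 0 < s) (hR : 0 < R) (lam : ℝ) :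
    ∃ m : ℝ, 0 < m ∧ ∀ u ∈ eigenspace E s R lam, ∀ x, ‖x‖ < R →
      u x ≤ m * ∫ x in closedBall (0 : E) R, |u x| := by
  obtain ⟨m, hm, hbound⟩ := exists_ae_le_integral_abs_of_isWeakSolution (E := E) hs hR lam
  have hcont : ∀ u ∈ eigenspace E s R lam, ∀ x, ‖x‖ < R →
      u x ≤ 2 * ((∫ x in closedBall (0 : E) R, |u x|) / m + 1) := by
    intro u hu x hx
    set M := 2 * ((∫ x in closedBall (0 : E) R, |u x|) / m + 1)
    have hae : (fun x => max (u x) M) =ᵐ[volume.restrict (ball (0 : E) R)] fun _ => M := by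
      rw [restrict_ball_eq_restrict_closedBall hR]
      filter_upwards [hbound u hu.2] with y hy using max_eq_right hy
    exact max_eq_right_iff.1 (Measure.eqOn_open_of_ae_eq hae isOpen_ball
      (hu.1.max continuous_const).continuousOn continuousOn_const (mem_ball_zero_iff.2 hx))
  refine ⟨2 / m, by positivity, fun u hu x hx => le_of_forall_pos_le_add fun ε hε => ?_⟩
  -- The bound for `(2 / ε) • u`, divided by `2 / ε`.
  have h := hcont _ ((eigenspace E s R lam).smul_mem (2 / ε) hu) x hx
  simp only [Pi.smul_apply, smul_eq_mul, abs_mul, abs_of_pos (div_pos two_pos hε),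
    integral_const_mul] at h
  have := mul_le_mul_of_nonneg_left h (half_pos hε).le
  field_simp at this ⊢
  linarith

lemma integral_abs_le_mul_eLpNorm_two {X : Type*} [MeasurableSpace X] {μ : Measure X}
    [IsFiniteMeasure μ] {u : X → ℝ} (hu : MemLp u 2 μ) :
    ∫ x, |u x| ∂μ ≤ (μ univ ^ (1 / 2 : ℝ)).toReal * (eLpNorm u 2 μ).toReal := by
  have hle := eLpNorm_le_eLpNorm_mul_rpow_measure_univ one_le_two hu.aestronglyMeasurable
  have hinteg : ∫ x, |u x| ∂μ = (eLpNorm u 1 μ).toReal := by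
    rw [eLpNorm_one_eq_lintegral_enorm, ← integral_norm_eq_lintegral_enorm hu.aestronglyMeasurable]
    rfl
  have hexp : (1 : ℝ≥0∞).toReal⁻¹ - (2 : ℝ≥0∞).toReal⁻¹ = (1 / 2 : ℝ) := by norm_num
  simp only [one_div, hexp] at hle ⊢
  rw [hinteg, ← ENNReal.toReal_mul, mul_comm]
  exact ENNReal.toReal_mono (ENNReal.mul_ne_top hu.eLpNorm_ne_top
    (ENNReal.rpow_ne_top_of_nonneg (by norm_num) (measure_ne_top _ _))) hle

lemma finite_eigenspace (hs : 0 < s) (hR : 0 < R) (lam : ℝ) :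
    Module.Finite ℝ (eigenspace E s R lam) := by
  set μ := (volume : Measure E).restrict (closedBall 0 R)
  have : IsFiniteMeasure μ :=
    isFiniteMeasure_restrict.2 (isCompact_closedBall (0 : E) R).measure_lt_top.ne
  obtain ⟨m, hm, hbound⟩ := exists_le_mul_integral_abs_of_mem_eigenspace (E := E) hs hR lam
  refine finite_of_ae_le_mul_eLpNorm (μ := μ) (C := m * (μ univ ^ (1 / 2 : ℝ)).toReal)
    (fun u hu => hu.2.finiteEnergy.memLp) (fun u hu => eq_zero_of_mem_eigenspace hs hR hu) ?_
  have hball : ∀ᵐ x ∂μ, x ∈ ball (0 : E) R := by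
    simpa only [restrict_ball_eq_restrict_closedBall hR] using
      ae_restrict_mem (μ := volume) (measurableSet_ball (x := (0 : E)) (ε := R))
  filter_upwards [hball] with x hx u hu
  rw [mul_assoc]
  exact (hbound u hu x (mem_ball_zero_iff.1 hx)).trans
    (mul_le_mul_of_nonneg_left (integral_abs_le_mul_eLpNorm_two hu.2.finiteEnergy.memLp) hm.le)

end EigenspaceFinite

section NodalDomains

lemma card_connectedComponents_union {X : Type*} [TopologicalSpace X] {A B : Set X} (hA : IsOpen A)
    (hB : IsOpen B) (hAB : Disjoint A B) (hAc : IsConnected A) (hBc : IsConnected B) :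
    Nat.card (ConnectedComponents ↥(A ∪ B)) = 2 := by
  have hpre : ∀ {S : Set X}, S ⊆ A ∪ B → IsConnected S →
      IsConnected ((↑) ⁻¹' S : Set ↥(A ∪ B)) := by
    intro S hS hSc
    refine ⟨?_, Topology.IsInducing.subtypeVal.isPreconnected_image.1 ?_⟩
    · obtain ⟨x, hx⟩ := hSc.nonempty
      exact ⟨⟨x, hS hx⟩, hx⟩
    · rw [Subtype.image_preimage_coe, inter_eq_right.2 hS]
      exact hSc.isPreconnected
  have hA' := hpre subset_union_left hAc
  have hB' := hpre subset_union_right hBc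
  have hcompl : ((↑) ⁻¹' A : Set ↥(A ∪ B))ᶜ = (↑) ⁻¹' B :=
    Set.ext fun x => ⟨fun hx => x.2.resolve_left hx, fun hx => hAB.notMem_of_mem_right hx⟩
  have hclopen : IsClopen ((↑) ⁻¹' A : Set ↥(A ∪ B)) :=
    ⟨⟨hcompl ▸ hB.preimage continuous_subtype_val⟩, hA.preimage continuous_subtype_val⟩
  obtain ⟨a, ha⟩ := hA'.nonempty
  obtain ⟨b, hb⟩ := hB'.nonempty
  refine Nat.card_eq_two_iff.2 ⟨a, b, fun hab => ?_, eq_univ_of_forall fun q => ?_⟩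
  · have hmem : b ∈ connectedComponent a :=
      ConnectedComponents.coe_eq_coe.1 hab ▸ mem_connectedComponent
    exact hAB.notMem_of_mem_right hb (hclopen.connectedComponent_subset ha hmem)
  · obtain ⟨x, rfl⟩ := ConnectedComponents.surjective_coe q
    simp only [ConnectedComponents.coe_eq_coe', mem_insert_iff, mem_singleton_iff]
    exact x.2.imp (fun hx => hA'.isPreconnected.subset_connectedComponent ha hx)
      fun hx => hB'.isPreconnected.subset_connectedComponent hb hx

lemma IsOddRigid.card_nodalDomains {F : Type*} [NormedAddCommGroup F] [InnerProductSpace ℝ F]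
    {V : Submodule ℝ (F → ℝ)} (hV : IsOddRigid R V) (hR : 0 < R) {e : F} (he : ‖e‖ = 1)
    {v : F → ℝ} (hv : v ∈ V) (hv0 : v ≠ 0) (hodd : ∀ x, v (hyperplaneReflection e x) = -v x) :
    Nat.card (ConnectedComponents {x : F // x ∈ ball (0 : F) R ∧ v x ≠ 0}) = 2 := by
  have hpos : ∀ {x}, x ∈ ball (0 : F) R → 0 < (inner ℝ x e : ℝ) → v x ≠ 0 := fun hx hxe h =>
    hv0 (hV.eq_zero_of_odd he hv hodd (mem_ball_zero_iff.1 hx) hxe h)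
  have hneg : ∀ {x}, x ∈ ball (0 : F) R → (inner ℝ x e : ℝ) < 0 → v x ≠ 0 := fun {x} hx hxe h =>
    hpos (x := hyperplaneReflection e x) (by simpa using hx)
      (by rw [inner_hyperplaneReflection he]; linarith) (by rw [hodd, h, neg_zero])
  have hset : {x | x ∈ ball (0 : F) R ∧ v x ≠ 0} =
      ball 0 R ∩ {x | 0 < (inner ℝ x e : ℝ)} ∪ ball 0 R ∩ {x | (inner ℝ x e : ℝ) < 0} := by
    ext x
    refine ⟨fun ⟨hx, hvx⟩ => ?_, ?_⟩
    · rcases lt_trichotomy (inner ℝ x e : ℝ) 0 with h | h | h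
      exacts [.inr ⟨hx, h⟩, absurd (eq_zero_of_inner_eq_zero he hodd h) hvx, .inl ⟨hx, h⟩]
    · rintro (⟨hx, h⟩ | ⟨hx, h⟩)
      exacts [⟨hx, hpos hx h⟩, ⟨hx, hneg hx h⟩]
  have hlin : IsLinearMap ℝ fun x : F => (inner ℝ x e : ℝ) :=
    ⟨fun x y => inner_add_left x y e, fun c x => real_inner_smul_left x e c⟩
  have hcont : Continuous fun x : F => (inner ℝ x e : ℝ) := by fun_prop
  have hp := norm_half_smul_lt hR he
  have hpe := inner_half_smul_pos hR he
  change Nat.card (ConnectedComponents ↥{x | x ∈ ball (0 : F) R ∧ v x ≠ 0}) = 2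
  rw [hset]
  refine card_connectedComponents_union (isOpen_ball.inter (isOpen_lt continuous_const hcont))
    (isOpen_ball.inter (isOpen_lt hcont continuous_const)) ?_
    (((convex_ball _ _).inter (convex_halfSpace_gt hlin 0)).isConnected ⟨(R / 2) • e, ?_⟩)
    (((convex_ball _ _).inter (convex_halfSpace_lt hlin 0)).isConnected ⟨-((R / 2) • e), ?_⟩)
  · exact disjoint_left.2 fun x hx hx' => lt_asymm (show 0 < inner ℝ x e from hx.2) hx'.2
  · exact ⟨mem_ball_zero_iff.2 hp, hpe⟩
  · exact ⟨mem_ball_zero_iff.2 (by rwa [norm_neg]), by simpa using hpe⟩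

end NodalDomains

/-! ### First eigenfunctions of the ball -/

lemma IsOddRigid.exists_radial_odd_spanning {F : Type*} [NormedAddCommGroup F]
    [InnerProductSpace ℝ F] {V : Submodule ℝ (F → ℝ)} (hV : IsOddRigid R V) (hR : 0 < R)
    [Module.Finite ℝ V] {ι : Type*} [Fintype ι] (b : OrthonormalBasis ι ℝ F)
    (hrad : ¬V ≤ radialFunctions F) :
    ∃ (k : ℕ) (w : Fin k → F → ℝ) (v : ι → F → ℝ),
      (∀ j, w j ∈ V ∧ w j ≠ 0 ∧ w j ∈ radialFunctions F) ∧
      (∀ i, v i ∈ V ∧ v i ≠ 0 ∧ ∀ x, v i (hyperplaneReflection (b i) x) = -v i x) ∧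
      ∀ u ∈ V, ∃ (a : Fin k → ℝ) (c : ι → ℝ), u = ∑ j, a j • w j + ∑ i, c i • v i := by
  obtain ⟨u₀, hu₀, hrad₀⟩ := SetLike.not_le_iff_exists.1 hrad
  choose v hv hv0 hv_odd using fun i => hV.exists_odd hu₀ hrad₀ (b.norm_eq_one i)
  have : Module.Finite ℝ ↥(V ⊓ radialFunctions F) :=
    Submodule.finiteDimensional_of_le (inf_le_left : V ⊓ radialFunctions F ≤ V)
  let w := Module.finBasis ℝ ↥(V ⊓ radialFunctions F)
  refine ⟨_, fun j => w j, v, fun j => ⟨(w j).2.1, fun h => w.ne_zero j (Subtype.ext h), (w j).2.2⟩,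
    fun i => ⟨hv i, hv0 i, hv_odd i⟩, fun u hu => ?_⟩
  obtain ⟨c, hc⟩ := hV.exists_sub_sum_mem_radialFunctions hR b hv hv0 hv_odd hu
  refine ⟨w.repr ⟨_, hc⟩, c, sub_eq_iff_eq_add.1 ?_⟩
  simpa only [Submodule.coe_sum, Submodule.coe_smul] using
    (congrArg Subtype.val (w.sum_repr ⟨_, hc⟩)).symm

section Euclidean

variable {N : ℕ} {u : Euc N → ℝ}

lemma reg_ball (hR : 0 < R) : reg N (ball 0 R) = pairRegion (Euc N) R := by
  ext q
  simp only [reg, pairRegion, closure_ball (0 : Euc N) hR.ne', mem_closedBall_zero_iff]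

lemma div_kern (a : ℝ) (x y : Euc N) : a / kern N s x y = a * fracKernel s (x - y) := by
  rw [kern, fracKernel, finrank_euclideanSpace_fin, div_eq_mul_inv]

lemma memHs_ball_iff (hR : 0 < R) : memHs N s (ball 0 R) u ↔ FiniteEnergy s R u := by
  have hsq : l2sq N (ball 0 R) u < ⊤ ↔
      HasFiniteIntegral (fun x => u x ^ 2) (volume.restrict (closedBall 0 R)) := by
    rw [hasFiniteIntegral_iff_ofReal (.of_forall fun x => sq_nonneg _), l2sq,
      restrict_ball_eq_restrict_closedBall hR]
  have henergy : semiSq N s (ball 0 R) u < ⊤ ↔ HasFiniteIntegral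
      (fun q : Euc N × Euc N => (u q.1 - u q.2) ^ 2 * fracKernel s (q.1 - q.2))
      (volume.restrict (pairRegion (Euc N) R)) := by
    rw [hasFiniteIntegral_iff_ofReal (.of_forall fun q =>
      mul_nonneg (sq_nonneg _) (fracKernel_nonneg _ _)), semiSq, reg_ball hR]
    simp only [div_kern]
  rw [memHs, hsq, henergy]
  exact ⟨fun ⟨hu, hu2, hue⟩ => ⟨hu, ⟨(hu.pow_const 2).aestronglyMeasurable, hu2⟩,
      (((measurable_sub_pair hu).pow_const 2).mul
        (measurable_fracKernel_sub s)).aestronglyMeasurable, hue⟩,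
    fun hu => ⟨hu.measurable, hu.integrableOn_sq.2, hu.integrableOn_energy_self.2⟩⟩

lemma bform_ball (hR : 0 < R) (u v : Euc N → ℝ) :
    bform N s (ball 0 R) u v = energyForm s R u v := by
  simp only [bform, energyForm, reg_ball hR, div_kern]

lemma toReal_semiSq_ball (hR : 0 < R) (hu : FiniteEnergy s R u) :
    (semiSq N s (ball 0 R) u).toReal = energyForm s R u u := by
  simp only [semiSq, energyForm, reg_ball hR, div_kern, ← pow_two]
  rw [integral_eq_lintegral_of_nonneg_ae (.of_forall fun q =>
    mul_nonneg (sq_nonneg _) (fracKernel_nonneg _ _)) hu.integrableOn_energy_self.1]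

lemma cNs_pos (N : ℕ) (hs : s ∈ Ioo (0 : ℝ) 1) : 0 < cNs N s := by
  have := hs.1
  have := Real.Gamma_pos_of_pos (show 0 < (N : ℝ) / 2 + s by positivity)
  have := Real.Gamma_pos_of_pos (sub_pos.2 hs.2)
  unfold cNs
  positivity

lemma bddBelow_rayleigh (N : ℕ) (hs : s ∈ Ioo (0 : ℝ) 1) (Ω : Set (Euc N)) :
    0 ∈ lowerBounds {t : ℝ | ∃ u : Euc N → ℝ, memHs N s Ω u ∧ (∫ x in Ω, (u x) ^ 2) = 1 ∧
      (∫ x in Ω, u x) = 0 ∧ t = cNs N s / 2 * (semiSq N s Ω u).toReal} := by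
  have := cNs_pos N hs
  rintro t ⟨u, -, -, -, rfl⟩
  positivity

/-- The eigenvalue `μ₁^{(s)}` of the ball of radius `R`, divided by the factor `c_{N,s} / 2` which
`energyForm` omits. -/
def scaledMu1 (N : ℕ) (s R : ℝ) : ℝ := mu1 N s (ball 0 R) / (cNs N s / 2)

lemma scaledMu1_nonneg (N : ℕ) (hs : s ∈ Ioo (0 : ℝ) 1) : 0 ≤ scaledMu1 N s R :=
  div_nonneg (Real.sInf_nonneg (bddBelow_rayleigh N hs _)) (half_pos (cNs_pos N hs)).le

lemma scaledMu1_le_energyForm (hs : s ∈ Ioo (0 : ℝ) 1) (hR : 0 < R) (hu : FiniteEnergy s R u)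
    (hsq : ∫ x in closedBall (0 : Euc N) R, u x ^ 2 = 1)
    (hmean : ∫ x in closedBall (0 : Euc N) R, u x = 0) : scaledMu1 N s R ≤ energyForm s R u u := by
  rw [scaledMu1, div_le_iff₀' (half_pos (cNs_pos N hs))]
  refine csInf_le ⟨0, bddBelow_rayleigh N hs _⟩ ⟨u, (memHs_ball_iff hR).2 hu, ?_⟩
  rw [restrict_ball_eq_restrict_closedBall hR, toReal_semiSq_ball hR hu]
  exact ⟨hsq, hmean, rfl⟩

lemma poincareIneq_scaledMu1 (N : ℕ) (hs : s ∈ Ioo (0 : ℝ) 1) (hR : 0 < R) :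
    PoincareIneq (Euc N) s R (scaledMu1 N s R) := by
  intro φ hφ hmean
  set I := ∫ x in closedBall (0 : Euc N) R, φ x ^ 2 with hI
  have hI0 : 0 ≤ I := integral_nonneg fun x => sq_nonneg _
  rcases hI0.eq_or_lt with h | h
  · rw [← h, mul_zero]
    exact energyForm_self_nonneg φ
  have hc : ((√I)⁻¹) ^ 2 = I⁻¹ := by rw [inv_pow, Real.sq_sqrt hI0]
  have hle := scaledMu1_le_energyForm hs hR (hφ.smul (√I)⁻¹)
    (by simp only [Pi.smul_apply, smul_eq_mul, mul_pow, integral_const_mul, hc, ← hI,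
      inv_mul_cancel₀ h.ne'])
    (by simp only [Pi.smul_apply, smul_eq_mul, integral_const_mul, hmean, mul_zero])
  rwa [energyForm_smul_left, energyForm_comm, energyForm_smul_left, ← mul_assoc, ← pow_two, hc,
    inv_mul_eq_div, le_div_iff₀ h] at hle

lemma isFirstEigen_ball_iff (hs : s ∈ Ioo (0 : ℝ) 1) (hR : 0 < R) :
    IsFirstEigen N s (ball 0 R) u ↔
      IsWeakSolution s R (scaledMu1 N s R) u ∧ ¬u =ᵐ[volume.restrict (closedBall 0 R)] 0 := by
  have hc := half_pos (cNs_pos N hs)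
  have hscale : ∀ a b : ℝ, cNs N s / 2 * a = mu1 N s (ball 0 R) * b ↔ a = scaledMu1 N s R * b :=
    fun a b => by rw [scaledMu1, div_mul_eq_mul_div (mu1 _ _ _), eq_div_iff hc.ne', mul_comm a]
  simp only [IsFirstEigen, memHs_ball_iff hR, bform_ball hR,
    restrict_ball_eq_restrict_closedBall hR, hscale]
  exact ⟨fun ⟨hu, hne, hmean, h⟩ => ⟨⟨hu, hmean, h⟩, hne⟩, fun ⟨⟨hu, hmean, h⟩, hne⟩ =>
    ⟨hu, hne, hmean, h⟩⟩

lemma isFirstEigen_of_mem_eigenspace (hs : s ∈ Ioo (0 : ℝ) 1) (hR : 0 < R)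
    (hu : u ∈ eigenspace (Euc N) s R (scaledMu1 N s R)) (hu0 : u ≠ 0) :
    IsFirstEigen N s (ball 0 R) u :=
  (isFirstEigen_ball_iff hs hR).2
    ⟨hu.2, fun h => hu0 (eq_zero_of_mem_eigenspace hs.1 hR hu h)⟩

lemma IsFirstEigen.exists_mem_eigenspace (hs : s ∈ Ioo (0 : ℝ) 1) (hR : 0 < R)
    (hu : IsFirstEigen N s (ball 0 R) u) :
    ∃ v ∈ eigenspace (Euc N) s R (scaledMu1 N s R), u =ᵐ[volume] v :=
  ((isFirstEigen_ball_iff hs hR).1 hu).1.exists_mem_eigenspace hs.1 hs.2 hR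

lemma radialAE_of_ae_eq_radial {v : Euc N → ℝ} (h : u =ᵐ[volume] v)
    (hv : v ∈ radialFunctions (Euc N)) : RadialAE N u := by
  obtain ⟨f, rfl⟩ := (Function.factorsThrough_iff v).1 hv
  exact ⟨f, h⟩

lemma reflect_single (i : Fin N) (x : Euc N) : reflect N (EuclideanSpace.single i 1) x =
    hyperplaneReflection (EuclideanSpace.basisFun (Fin N) ℝ i) x := by
  rw [hyperplaneReflection_apply (OrthonormalBasis.norm_eq_one _ i), EuclideanSpace.basisFun_apply,
    reflect]

theorem statement0_general (N : ℕ) (s : ℝ) (hs : s ∈ Set.Ioo (0 : ℝ) 1)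
    (R : ℝ) (hR : 0 < R) (B : Set (Euc N)) (hB : B = Metric.ball (0 : Euc N) R) :
    (∀ u : Euc N → ℝ, IsFirstEigen N s B u → RadialAE N u) ∨
    (∃ (k : ℕ) (w : Fin k → Euc N → ℝ) (v : Fin N → Euc N → ℝ),
      (∀ j : Fin k, IsFirstEigen N s B (w j) ∧ RadialAE N (w j)) ∧
      (∀ i : Fin N, IsFirstEigen N s B (v i) ∧ Continuous (v i) ∧
        (∀ x : Euc N, v i (reflect N (EuclideanSpace.single i 1) x) = - v i x) ∧
        TwoNodal N B (v i)) ∧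
      (∀ u : Euc N → ℝ, IsFirstEigen N s B u →
        ∃ (a : Fin k → ℝ) (b : Fin N → ℝ),
          ∀ᵐ x : Euc N ∂volume, u x = (∑ j, a j * w j x) + ∑ i, b i * v i x)) := by
  subst hB
  have hV := isOddRigid_eigenspace hs.1 hs.2 hR (scaledMu1_nonneg N hs)
    (poincareIneq_scaledMu1 N hs hR)
  have := finite_eigenspace (E := Euc N) hs.1 hR (scaledMu1 N s R)
  by_cases hrad : eigenspace (Euc N) s R (scaledMu1 N s R) ≤ radialFunctions (Euc N)
  · refine .inl fun u hu => ?_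
    obtain ⟨v, hv, huv⟩ := hu.exists_mem_eigenspace hs hR
    exact radialAE_of_ae_eq_radial huv (hrad hv)
  obtain ⟨k, w, v, hw, hv, hspan⟩ :=
    hV.exists_radial_odd_spanning hR (EuclideanSpace.basisFun (Fin N) ℝ) hrad
  refine .inr ⟨k, w, v, fun j => ?_, fun i => ?_, fun u hu => ?_⟩
  · obtain ⟨hwV, hw0, hwrad⟩ := hw j
    exact ⟨isFirstEigen_of_mem_eigenspace hs hR hwV hw0, radialAE_of_ae_eq_radial .rfl hwrad⟩
  · obtain ⟨hvV, hv0, hodd⟩ := hv i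
    exact ⟨isFirstEigen_of_mem_eigenspace hs hR hvV hv0, hvV.1,
      fun x => reflect_single i x ▸ hodd x,
      hV.card_nodalDomains hR (OrthonormalBasis.norm_eq_one _ i) hvV hv0 hodd⟩
  · obtain ⟨u', hu', huu'⟩ := hu.exists_mem_eigenspace hs hR
    obtain ⟨a, b, rfl⟩ := hspan u' hu'
    refine ⟨a, b, huu'.mono fun x hx => hx.trans ?_⟩
    simp only [Pi.add_apply, Finset.sum_apply, Pi.smul_apply, smul_eq_mul]

end Euclidean

/-- Theorem 1.1: structure of the first nontrivial eigenspace in a ball: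
either all first nontrivial eigenfunctions are radially symmetric, or the eigenspace is spanned
by `k` radial eigenfunctions and `N` antisymmetric eigenfunctions with two nodal domains. -/
theorem statement0 (N : ℕ) (hN : 2 ≤ N) (s : ℝ) (hs : s ∈ Set.Ioo (0 : ℝ) 1)
    (R : ℝ) (hR : 0 < R) (B : Set (Euc N)) (hB : B = Metric.ball (0 : Euc N) R) :
    (∀ u : Euc N → ℝ, IsFirstEigen N s B u → RadialAE N u) ∨
    (∃ (k : ℕ) (w : Fin k → Euc N → ℝ) (v : Fin N → Euc N → ℝ),
      (∀ j : Fin k, IsFirstEigen N s B (w j) ∧ RadialAE N (w j)) ∧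
      (∀ i : Fin N, IsFirstEigen N s B (v i) ∧ Continuous (v i) ∧
        (∀ x : Euc N, v i (reflect N (EuclideanSpace.single i 1) x) = - v i x) ∧
        TwoNodal N B (v i)) ∧
      (∀ u : Euc N → ℝ, IsFirstEigen N s B u →
        ∃ (a : Fin k → ℝ) (b : Fin N → ℝ),
          ∀ᵐ x : Euc N ∂volume, u x = (∑ j, a j * w j x) + ∑ i, b i * v i x)) :=
  statement0_general N s hs R hR B hB

end FracNeumann
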